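/- arXiv:math-ph/0606058 — 2 statements merged into one kernel-verified Lean document; each statement's English description precedes it below -/
import Mathlib

section
/- Let ε > 0, let n ≥ 2 be an integer, and let Ω = Ω(ε) satisfy 0 ≤ Ω(ε) ≤ 1/(√π ε). Suppose Ψ_n(r,θ) = ξ_n(r)e^{inθ} minimizes the GP functional E^GP_{ε,Ω} among all L²(B₁)-normalized functions Ψ ∈ H¹(B₁;ℂ) satisfying LΨ = nΨ. Then Ψ_n is not a local minimizer of E^GP_{ε,Ω}: for every δ > 0 there exists Φ ∈ H¹(B₁;ℂ) with ‖Φ‖_{L²(B₁)} = 1, ‖Φ − Ψ_n‖_{H¹(B₁)} < δ, and E^GP_{ε,Ω}[Φ] < E^GP_{ε,Ω}[Ψ_n]. -/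
open MeasureTheory Real Filter

noncomputable section

/-- Points of the plane. -/
abbrev Pt : Type := EuclideanSpace ℝ (Fin 2)

/-- The open unit disc. -/
def B1 : Set Pt := Metric.ball 0 1

/-- First partial derivative of a complex-valued function. -/
def pd1 (Ψ : Pt → ℂ) (x : Pt) : ℂ := fderiv ℝ Ψ x (EuclideanSpace.single 0 1)

/-- Second partial derivative of a complex-valued function. -/
def pd2 (Ψ : Pt → ℂ) (x : Pt) : ℂ := fderiv ℝ Ψ x (EuclideanSpace.single 1 1)

/-- Angular momentum operator `L = -i (x₁ ∂₂ - x₂ ∂₁)`. -/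
def angMom (Ψ : Pt → ℂ) (x : Pt) : ℂ :=
  -Complex.I * ((x 0 : ℂ) * pd2 Ψ x - (x 1 : ℂ) * pd1 Ψ x)

/-- The Gross-Pitaevskii energy density `|∇Ψ|² - Ω conj(Ψ) LΨ + |Ψ|⁴/ε²`. -/
def gpDensity (ε Ω : ℝ) (Ψ : Pt → ℂ) (x : Pt) : ℝ :=
  ‖pd1 Ψ x‖ ^ 2 + ‖pd2 Ψ x‖ ^ 2
    - Ω * (starRingEnd ℂ (Ψ x) * angMom Ψ x).re
    + ‖Ψ x‖ ^ 4 / ε ^ 2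

/-- The Gross-Pitaevskii functional on the unit disc. -/
def gpEnergy (ε Ω : ℝ) (Ψ : Pt → ℂ) : ℝ := ∫ x in B1, gpDensity ε Ω Ψ x

/-- Admissible (H¹, normalized) wave functions. -/
def gpAdm (Ψ : Pt → ℂ) : Prop :=
  DifferentiableOn ℝ Ψ B1 ∧
  IntegrableOn (fun x => ‖Ψ x‖ ^ 2) B1 ∧
  IntegrableOn (fun x => ‖pd1 Ψ x‖ ^ 2 + ‖pd2 Ψ x‖ ^ 2) B1 ∧
  IntegrableOn (fun x => ‖Ψ x‖ ^ 4) B1 ∧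
  IntegrableOn (fun x => (starRingEnd ℂ (Ψ x) * angMom Ψ x).re) B1 ∧
  (∫ x in B1, ‖Ψ x‖ ^ 2) = 1

/-- The GP ground-state energy: infimum of the functional over normalized functions. -/
def gpGround (ε Ω : ℝ) : ℝ := sInf {E | ∃ Ψ : Pt → ℂ, gpAdm Ψ ∧ E = gpEnergy ε Ω Ψ}

/-- A GP minimizer: a normalized admissible function attaining the infimum. -/
def IsGPMinimizer (ε Ω : ℝ) (Ψ : Pt → ℂ) : Prop :=
  gpAdm Ψ ∧ gpEnergy ε Ω Ψ = gpGround ε Ω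

/-- The Thomas-Fermi functional. -/
def tfEnergy (Ω₀ : ℝ) (ρ : Pt → ℝ) : ℝ :=
  ∫ x in B1, ((ρ x) ^ 2 - Ω₀ ^ 2 * ‖x‖ ^ 2 * ρ x / 4)

/-- Admissible TF densities: nonnegative, in L²(B₁), of total mass one. -/
def tfAdm (ρ : Pt → ℝ) : Prop :=
  IntegrableOn ρ B1 ∧ IntegrableOn (fun x => (ρ x) ^ 2) B1 ∧
  (∀ᵐ x ∂(volume.restrict B1), 0 ≤ ρ x) ∧ (∫ x in B1, ρ x) = 1

/-- The TF ground-state energy. -/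
def tfGround (Ω₀ : ℝ) : ℝ := sInf {E | ∃ ρ : Pt → ℝ, tfAdm ρ ∧ E = tfEnergy Ω₀ ρ}

/-- Radius of the TF "hole". -/
def R0 (Ω₀ : ℝ) : ℝ := Real.sqrt (1 - 4 / (Real.sqrt π * Ω₀))

/-- The TF minimizer. -/
def rhoTF (Ω₀ : ℝ) (x : Pt) : ℝ :=
  if Ω₀ ≤ 4 / Real.sqrt π then 1 / π - Ω₀ ^ 2 / 16 * (1 - 2 * ‖x‖ ^ 2)
  else max 0 (Ω₀ ^ 2 / 8 * (‖x‖ ^ 2 - 1) + Ω₀ / (2 * Real.sqrt π))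

/-!
Write `Ψ = f(r) e^{inθ}` and let `M = μ + nΩ`, with `μ` the Lagrange multiplier of the mass
constraint, so that `(r f')' = (n² / r + r V) f` with `V = 2 |f|² / ε² - M`. The energy is lowered
by moving along `w = 2 (∂_zΨ / z + ∂_z̄Ψ / z̄)`, the infinitesimal deformation of `Ψ` along the
vector field `2 / z`. It consists of the modes `n ± 2`, so by symmetry it is `L²`-orthogonal to `Ψ`,
and the sign of the second variation decides. The Dirichlet energy is conformally invariant, hence
the angular mean of the second variation reduces to a total derivative plus terms whose sign is
governed by the maximum principle `V ≤ -n²`. Integrated against the mass normalization, the same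
principle gives `2 / (π ε²) < M - n²`, whence `4nΩ < M + n²`, which controls the rotation term.
-/

open Set (Ioo Icc Ioc Ioi)
open scoped Asymptotics Topology RealInnerProductSpace

section Coordinates

/-- The complex coordinate `z = x₁ + i x₂`, as a linear isometry. -/
def zcoord : Pt ≃ₗᵢ[ℝ] ℂ := Complex.orthonormalBasisOneI.repr.symm

lemma zcoord_apply (x : Pt) : zcoord x = x 0 + x 1 * Complex.I :=
  Complex.orthonormalBasisOneI_repr_symm_apply x

lemma zcoord_symm_apply_zero (z : ℂ) : zcoord.symm z 0 = z.re := by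
  simp [zcoord, Complex.orthonormalBasisOneI_repr_apply]

lemma zcoord_symm_apply_one (z : ℂ) : zcoord.symm z 1 = z.im := by
  simp [zcoord, Complex.orthonormalBasisOneI_repr_apply]

/-- The unimodular factor `e^{iθ}` of a point of the plane (`0` at the origin). -/
def phase (x : Pt) : ℂ := zcoord x / ‖x‖

lemma norm_phase {x : Pt} (hx : x ≠ 0) : ‖phase x‖ = 1 := by
  simp [phase, hx]

lemma norm_mul_phase (x : Pt) : ‖x‖ * phase x = zcoord x := by
  rcases eq_or_ne x 0 with rfl | hx
  · simp [phase]
  · have : (‖x‖ : ℂ) ≠ 0 := by simpa using hx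
    rw [phase]; field_simp

/-- The rotation of the plane by the angle of `c`. -/
def rotate (c : Circle) : Pt ≃ₗᵢ[ℝ] Pt := zcoord.trans ((rotation c).trans zcoord.symm)

lemma zcoord_rotate (c : Circle) (x : Pt) : zcoord (rotate c x) = c * zcoord x := by
  simp [rotate, rotation_apply]

lemma phase_rotate (c : Circle) (x : Pt) : phase (rotate c x) = c * phase x := by
  simp only [phase, zcoord_rotate, LinearIsometryEquiv.norm_map, mul_div_assoc]

lemma isOpen_B1 : IsOpen B1 := Metric.isOpen_ball

lemma mem_B1_iff {x : Pt} : x ∈ B1 ↔ ‖x‖ < 1 := by simp [B1]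

lemma norm_mem_Ioo {x : Pt} (hx : x ∈ B1) (hx0 : x ≠ 0) : ‖x‖ ∈ Ioo (0 : ℝ) 1 :=
  ⟨norm_pos_iff.2 hx0, mem_B1_iff.1 hx⟩

lemma ae_restrict_B1_of_ne_zero {p : Pt → Prop} (h : ∀ x ∈ B1, x ≠ 0 → p x) :
    ∀ᵐ x ∂volume.restrict B1, p x := by
  have h0 : ∀ᵐ x : Pt ∂volume, x ≠ 0 := Measure.ae_ne volume 0
  filter_upwards [ae_restrict_of_ae h0, ae_restrict_mem isOpen_B1.measurableSet] with x hx0 hx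
  exact h x hx hx0

lemma setIntegral_B1_comp_isometry (R : Pt ≃ₗᵢ[ℝ] Pt) (F : Pt → ℝ) :
    ∫ x in B1, F (R x) = ∫ x in B1, F x := by
  have h := R.measurePreserving.setIntegral_preimage_emb
    R.toHomeomorph.measurableEmbedding F B1
  rwa [show R ⁻¹' B1 = B1 by ext x; simp [mem_B1_iff]] at h

lemma setIntegral_B1_radial (φ : ℝ → ℝ) :
    ∫ x in B1, φ ‖x‖ = 2 * π * ∫ r in (0 : ℝ)..1, r * φ r := by
  have hind : B1.indicator (fun x : Pt => φ ‖x‖) =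
      fun x : Pt => (Set.Iio (1 : ℝ)).indicator φ ‖x‖ := by
    ext x; simp [Set.indicator, mem_B1_iff]
  have hvol : (volume : Measure Pt).real (Metric.ball 0 1) = π := by
    simp [Measure.real, EuclideanSpace.volume_ball_fin_two, Real.pi_pos.le]
  have hweight : ∀ r : ℝ, r ^ (Module.finrank ℝ Pt - 1) • (Set.Iio (1 : ℝ)).indicator φ r
      = (Set.Iio (1 : ℝ)).indicator (fun r => r * φ r) r := by
    intro r; simp [Set.indicator]
  rw [← integral_indicator isOpen_B1.measurableSet, hind, integral_fun_norm_addHaar, hvol]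
  simp only [hweight]
  rw [setIntegral_indicator measurableSet_Iio, Set.Ioi_inter_Iio,
    intervalIntegral.integral_of_le zero_le_one, integral_Ioc_eq_integral_Ioo,
    finrank_euclideanSpace_fin, nsmul_eq_mul, smul_eq_mul]
  push_cast
  ring

lemma integrableOn_B1_radial {φ : ℝ → ℝ} :
    IntegrableOn (fun x : Pt => φ ‖x‖) B1 ↔ IntegrableOn (fun r => r * φ r) (Ioo 0 1) := by
  rw [B1, integrableOn_fun_norm_addHaar volume]
  simp

end Coordinates

section Derivatives

variable {Ψ w : Pt → ℂ} {x : Pt}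

/-- The Euler operator `r ∂_r`. -/
def euler (Ψ : Pt → ℂ) (x : Pt) : ℂ := fderiv ℝ Ψ x x

lemma fderiv_eq_pd (Ψ : Pt → ℂ) (x v : Pt) :
    fderiv ℝ Ψ x v = v 0 * pd1 Ψ x + v 1 * pd2 Ψ x := by
  have hv : v = v 0 • EuclideanSpace.single 0 (1 : ℝ) + v 1 • EuclideanSpace.single 1 (1 : ℝ) := by
    ext i; fin_cases i <;> simp
  conv_lhs => rw [hv]
  simp [pd1, pd2]

lemma angMom_eq_fderiv (Ψ : Pt → ℂ) (x : Pt) :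
    angMom Ψ x = -Complex.I * fderiv ℝ Ψ x (zcoord.symm (Complex.I * zcoord x)) := by
  simp only [angMom, fderiv_eq_pd, zcoord_symm_apply_zero, zcoord_symm_apply_one, zcoord_apply,
    Complex.mul_re, Complex.mul_im, Complex.add_re, Complex.add_im, Complex.I_re, Complex.I_im,
    Complex.ofReal_re, Complex.ofReal_im]
  push_cast
  ring

/-- The real inner product `∇Ψ · ∇w` of two complex gradients. -/
def gradInner (Ψ w : Pt → ℂ) (x : Pt) : ℝ := ⟪pd1 Ψ x, pd1 w x⟫ + ⟪pd2 Ψ x, pd2 w x⟫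

lemma norm_sq_mul_gradInner (Ψ w : Pt → ℂ) (x : Pt) :
    ‖x‖ ^ 2 * gradInner Ψ w x = ⟪euler Ψ x, euler w x⟫ + ⟪angMom Ψ x, angMom w x⟫ := by
  rw [EuclideanSpace.norm_sq_eq]
  simp only [gradInner, euler, fderiv_eq_pd, angMom, Complex.inner, Fin.sum_univ_two,
    Real.norm_eq_abs, sq_abs, Complex.mul_re, Complex.mul_im, Complex.add_re, Complex.add_im,
    Complex.sub_re, Complex.sub_im, Complex.neg_re, Complex.neg_im, Complex.I_re, Complex.I_im,
    Complex.conj_re, Complex.conj_im, Complex.ofReal_re, Complex.ofReal_im]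
  ring

lemma hasDerivAt_comp_ray {t : ℝ} (h : DifferentiableAt ℝ Ψ (t • x)) (ht : t ≠ 0) :
    HasDerivAt (fun s : ℝ => Ψ (s • x)) (t⁻¹ • euler Ψ (t • x)) t := by
  have hray : HasDerivAt (fun s : ℝ => s • x) x t := by
    simpa using (hasDerivAt_id t).smul_const x
  exact (h.hasFDerivAt.comp_hasDerivAt t hray).congr_deriv (by simp [euler, ht])

lemma hasDerivAt_comp_circle {z : ℂ} {θ : ℝ}
    (h : DifferentiableAt ℝ Ψ (zcoord.symm (Complex.exp (θ * Complex.I) * z))) :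
    HasDerivAt (fun s : ℝ => Ψ (zcoord.symm (Complex.exp (s * Complex.I) * z)))
      (Complex.I * angMom Ψ (zcoord.symm (Complex.exp (θ * Complex.I) * z))) θ := by
  have hexp : HasDerivAt (fun s : ℝ => Complex.exp (s * Complex.I) * z)
      (Complex.I * (Complex.exp (θ * Complex.I) * z)) θ := by
    have := ((Complex.ofRealCLM.hasDerivAt (x := θ)).mul_const Complex.I).cexp.mul_const z
    exact this.congr_deriv (by simp; ring)
  have hcircle := (zcoord.symm.toContinuousLinearEquiv : ℂ →L[ℝ] Pt).hasFDerivAt.comp_hasDerivAt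
    θ hexp
  refine (h.hasFDerivAt.comp_hasDerivAt θ hcircle).congr_deriv ?_
  rw [angMom_eq_fderiv, zcoord.apply_symm_apply, ← mul_assoc Complex.I (-Complex.I), mul_neg,
    Complex.I_mul_I, neg_neg, one_mul]
  rfl

end Derivatives

section Modes

variable {F G : ℝ → ℂ} {F' G' : ℂ} {m : ℕ} {x : Pt}

/-- The function `F(r) e^{imθ}` (`0` at the origin if `m ≠ 0`). -/
def mode (F : ℝ → ℂ) (m : ℕ) (x : Pt) : ℂ := F ‖x‖ * phase x ^ m

lemma norm_mode (hx : x ≠ 0) : ‖mode F m x‖ = ‖F ‖x‖‖ := by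
  simp [mode, norm_phase hx]

lemma mode_rotate (c : Circle) : mode F m (rotate c x) = (c : ℂ) ^ m * mode F m x := by
  simp only [mode, phase_rotate, LinearIsometryEquiv.norm_map, mul_pow]
  ring

lemma inner_mode_mode (hx : x ≠ 0) : ⟪mode F m x, mode G m x⟫ = ⟪F ‖x‖, G ‖x‖⟫ := by
  have hp : ‖phase x ^ m‖ ^ 2 = 1 := by simp [norm_phase hx]
  rw [← Complex.normSq_eq_norm_sq, Complex.normSq_apply] at hp
  simp only [mode, Complex.inner, map_mul, Complex.mul_re, Complex.mul_im, Complex.conj_re,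
    Complex.conj_im]
  linear_combination ((F ‖x‖).re * (G ‖x‖).re + (F ‖x‖).im * (G ‖x‖).im) * hp

lemma differentiableAt_mode (hx : x ≠ 0) (hF : HasDerivAt F F' ‖x‖) :
    DifferentiableAt ℝ (mode F m) x := by
  have hnorm : DifferentiableAt ℝ (fun y : Pt => ‖y‖) x := differentiableAt_id.norm ℝ hx
  have hz : DifferentiableAt ℝ (fun y : Pt => zcoord y) x :=
    (zcoord.toContinuousLinearEquiv : Pt →L[ℝ] ℂ).differentiableAt
  have hr : DifferentiableAt ℝ (fun y : Pt => (‖y‖ : ℂ)) x :=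
    Complex.ofRealCLM.differentiableAt.comp x hnorm
  have hr0 : (‖x‖ : ℂ) ≠ 0 := by simpa using hx
  exact (hF.differentiableAt.comp x hnorm).mul ((hz.mul (hr.inv hr0)).pow m)

lemma euler_mode (hx : x ≠ 0) (hF : HasDerivAt F F' ‖x‖) :
    euler (mode F m) x = ‖x‖ * F' * phase x ^ m := by
  have hphase : ∀ t : ℝ, 0 < t → phase (t • x) = phase x := fun t ht => by
    have ht' : (t : ℂ) ≠ 0 := by exact_mod_cast ht.ne'
    simp only [phase, map_smul, norm_smul, Real.norm_of_nonneg ht.le, Complex.real_smul,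
      Complex.ofReal_mul]
    exact mul_div_mul_left _ _ ht'
  have hcurve : HasDerivAt (fun t : ℝ => F (t * ‖x‖) * phase x ^ m)
      (‖x‖ * F' * phase x ^ m) 1 := by
    have hscale : HasDerivAt (fun t : ℝ => t * ‖x‖) ‖x‖ 1 := by
      simpa using (hasDerivAt_id (1 : ℝ)).mul_const ‖x‖
    rw [← one_mul ‖x‖] at hF
    simpa using (hF.scomp 1 hscale).mul_const (phase x ^ m)
  have hray := hasDerivAt_comp_ray (t := 1) (by simpa using differentiableAt_mode (m := m) hx hF)
    one_ne_zero
  simp only [inv_one, one_smul] at hray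
  refine hray.unique (hcurve.congr_of_eventuallyEq ?_)
  filter_upwards [lt_mem_nhds (zero_lt_one' ℝ)] with t ht
  rw [mode, hphase t ht, norm_smul, Real.norm_of_nonneg ht.le]

lemma angMom_mode (hx : x ≠ 0) (hF : HasDerivAt F F' ‖x‖) :
    angMom (mode F m) x = m * mode F m x := by
  have hdiff := differentiableAt_mode (m := m) hx hF
  have hcircle := hasDerivAt_comp_circle (Ψ := mode F m) (z := zcoord x) (θ := 0)
    (by simpa using hdiff)
  have hcurve : HasDerivAt (fun s : ℝ => Complex.exp (s * (m * Complex.I)) * mode F m x)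
      (Complex.I * (m * mode F m x)) 0 := by
    have := ((Complex.ofRealCLM.hasDerivAt (x := 0)).mul_const
      (m * Complex.I)).cexp.mul_const (mode F m x)
    exact this.congr_deriv (by simp; ring)
  have hmode : (fun s : ℝ => mode F m (zcoord.symm (Complex.exp (s * Complex.I) * zcoord x)))
      = fun s : ℝ => Complex.exp (s * (m * Complex.I)) * mode F m x := by
    ext s
    have hrot := mode_rotate (F := F) (m := m) (x := x) (Circle.exp s)
    rw [Circle.coe_exp, ← Complex.exp_nat_mul] at hrot
    rw [show (s : ℂ) * (m * Complex.I) = m * (s * Complex.I) by ring, ← hrot]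
    simp [rotate, rotation_apply]
  rw [hmode] at hcircle
  simpa using hcircle.unique hcurve

lemma gradInner_mode_mode (hx : x ≠ 0) (hF : HasDerivAt F F' ‖x‖) (hG : HasDerivAt G G' ‖x‖) :
    gradInner (mode F m) (mode G m) x =
      ⟪F', G'⟫ + (m : ℝ) ^ 2 / ‖x‖ ^ 2 * ⟪F ‖x‖, G ‖x‖⟫ := by
  have hr : ‖x‖ ≠ 0 := norm_ne_zero_iff.2 hx
  have heuler : ∀ F' : ℂ, ‖x‖ * F' * phase x ^ m = ‖x‖ • mode (fun _ => F') m x := fun F' => by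
    simp [mode, mul_assoc]
  have hang : ∀ F : ℝ → ℂ, (m : ℂ) * mode F m x = (m : ℝ) • mode F m x := fun F => by simp
  have h := norm_sq_mul_gradInner (mode F m) (mode G m) x
  rw [euler_mode hx hF, euler_mode hx hG, angMom_mode hx hF, angMom_mode hx hG, heuler, heuler,
    hang, hang] at h
  simp only [real_inner_smul_left, real_inner_smul_right, inner_mode_mode hx] at h
  field_simp
  linear_combination h

end Modes

section Integrability

lemma memLp_inner {α : Type*} [MeasurableSpace α] {μ : Measure α} {p q r : ENNReal}
    [ENNReal.HolderTriple p q r] {f g : α → ℂ} (hf : MemLp f p μ) (hg : MemLp g q μ) :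
    MemLp (fun x => ⟪f x, g x⟫) r μ :=
  hf.of_bilin (fun z w : ℂ => ⟪z, w⟫) 1 hg (hf.1.inner hg.1) <| .of_forall fun x => by
    rw [one_mul]
    exact nnnorm_inner_le_nnnorm (𝕜 := ℝ) (f x) (g x)

lemma integral_linear_combination₃ {α : Type*} [MeasurableSpace α] {μ : Measure α} {f g h : α → ℝ}
    (hf : Integrable f μ) (hg : Integrable g μ) (hh : Integrable h μ) (a b c : ℝ) :
    ∫ x, (a * f x + b * g x + c * h x) ∂μ =
      a * ∫ x, f x ∂μ + b * ∫ x, g x ∂μ + c * ∫ x, h x ∂μ := by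
  simp only [← integral_const_mul]
  rw [← integral_add (hf.const_mul a) (hg.const_mul b)]
  exact integral_add ((hf.const_mul a).add (hg.const_mul b)) (hh.const_mul c)

instance holderTriple_four_four_two : ENNReal.HolderTriple 4 4 2 where
  inv_add_inv_eq_inv := by
    rw [← two_mul, show (4 : ENNReal) = 2 * 2 by norm_num, ENNReal.mul_inv (by simp) (by simp),
      ← mul_assoc, ENNReal.mul_inv_cancel (by simp) (by simp), one_mul]

end Integrability

section FiniteEnergy

variable {Ψ w : Pt → ℂ} {x : Pt}

/-- Functions on the disc with finite Gross–Pitaevskii energy: the space `H¹ ∩ L⁴`, restricted as in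
`gpAdm` to differentiable functions. -/
structure FiniteEnergy (Ψ : Pt → ℂ) : Prop where
  differentiableOn : DifferentiableOn ℝ Ψ B1
  memLp_four : MemLp Ψ 4 (volume.restrict B1)
  memLp_pd1 : MemLp (pd1 Ψ) 2 (volume.restrict B1)
  memLp_pd2 : MemLp (pd2 Ψ) 2 (volume.restrict B1)

instance isFiniteMeasure_restrict_B1 : IsFiniteMeasure (volume.restrict B1) :=
  ⟨by rw [Measure.restrict_apply_univ]; exact measure_ball_lt_top⟩

lemma aestronglyMeasurable_of_differentiableOn (h : DifferentiableOn ℝ Ψ B1) :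
    AEStronglyMeasurable Ψ (volume.restrict B1) :=
  h.continuousOn.aestronglyMeasurable isOpen_B1.measurableSet

lemma aestronglyMeasurable_pd1 (Ψ : Pt → ℂ) (μ : Measure Pt) : AEStronglyMeasurable (pd1 Ψ) μ :=
  (measurable_fderiv_apply_const ℝ Ψ _).aestronglyMeasurable

lemma aestronglyMeasurable_pd2 (Ψ : Pt → ℂ) (μ : Measure Pt) : AEStronglyMeasurable (pd2 Ψ) μ :=
  (measurable_fderiv_apply_const ℝ Ψ _).aestronglyMeasurable

lemma aestronglyMeasurable_angMom (Ψ : Pt → ℂ) (μ : Measure Pt) :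
    AEStronglyMeasurable (angMom Ψ) μ := by
  have hcoord : ∀ i : Fin 2, AEStronglyMeasurable (fun x : Pt => ((x i : ℝ) : ℂ)) μ := fun i => by
    fun_prop
  exact (((hcoord 0).mul (aestronglyMeasurable_pd2 Ψ μ)).sub
    ((hcoord 1).mul (aestronglyMeasurable_pd1 Ψ μ))).const_mul _

lemma norm_angMom_le (hx : x ∈ B1) : ‖angMom Ψ x‖ ≤ ‖pd1 Ψ x‖ + ‖pd2 Ψ x‖ := by
  have hcoord : ∀ i : Fin 2, ‖((x i : ℝ) : ℂ)‖ ≤ 1 := fun i => by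
    rw [Complex.norm_real]
    exact (PiLp.norm_apply_le x i).trans (mem_B1_iff.1 hx).le
  rw [angMom, norm_mul, norm_neg, Complex.norm_I, one_mul, add_comm]
  refine (norm_sub_le _ _).trans (add_le_add ?_ ?_)
  all_goals
    rw [norm_mul]
    exact mul_le_of_le_one_left (norm_nonneg _) (hcoord _)

lemma gradInner_self (Ψ : Pt → ℂ) (x : Pt) : gradInner Ψ Ψ x = ‖pd1 Ψ x‖ ^ 2 + ‖pd2 Ψ x‖ ^ 2 := by
  simp only [gradInner, real_inner_self_eq_norm_sq]

namespace FiniteEnergy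

lemma of_gpAdm (h : gpAdm Ψ) : FiniteEnergy Ψ := by
  obtain ⟨hd, -, hgrad, hfour, -, -⟩ := h
  refine ⟨hd, ?_, ?_, ?_⟩
  · rw [← integrable_norm_rpow_iff (aestronglyMeasurable_of_differentiableOn hd) (by simp)
      (by simp)]
    simpa [IntegrableOn] using hfour
  · rw [memLp_two_iff_integrable_sq_norm (aestronglyMeasurable_pd1 _ _)]
    refine hgrad.mono' ((aestronglyMeasurable_pd1 _ _).norm.pow 2) (.of_forall fun x => ?_)
    rw [Real.norm_of_nonneg (by positivity)]
    exact le_add_of_nonneg_right (by positivity)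
  · rw [memLp_two_iff_integrable_sq_norm (aestronglyMeasurable_pd2 _ _)]
    refine hgrad.mono' ((aestronglyMeasurable_pd2 _ _).norm.pow 2) (.of_forall fun x => ?_)
    rw [Real.norm_of_nonneg (by positivity)]
    exact le_add_of_nonneg_left (by positivity)

lemma of_bounded {C : ℝ} (hd : DifferentiableOn ℝ Ψ B1) (hΨ : ∀ x ∈ B1, ‖Ψ x‖ ≤ C)
    (h1 : ∀ x ∈ B1, ‖pd1 Ψ x‖ ≤ C) (h2 : ∀ x ∈ B1, ‖pd2 Ψ x‖ ≤ C) : FiniteEnergy Ψ where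
  differentiableOn := hd
  memLp_four := .of_bound (aestronglyMeasurable_of_differentiableOn hd) C <|
    ae_restrict_of_forall_mem isOpen_B1.measurableSet hΨ
  memLp_pd1 := .of_bound (aestronglyMeasurable_pd1 _ _) C <|
    ae_restrict_of_forall_mem isOpen_B1.measurableSet h1
  memLp_pd2 := .of_bound (aestronglyMeasurable_pd2 _ _) C <|
    ae_restrict_of_forall_mem isOpen_B1.measurableSet h2

lemma differentiableAt (h : FiniteEnergy Ψ) (hx : x ∈ B1) : DifferentiableAt ℝ Ψ x :=
  h.differentiableOn.differentiableAt (isOpen_B1.mem_nhds hx)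

lemma fderiv_comb (hΨ : FiniteEnergy Ψ) (hw : FiniteEnergy w) (a b : ℝ) (hx : x ∈ B1) :
    fderiv ℝ (a • Ψ + b • w) x = a • fderiv ℝ Ψ x + b • fderiv ℝ w x := by
  have hΨx := hΨ.differentiableAt hx
  have hwx := hw.differentiableAt hx
  rw [fderiv_add (hΨx.const_smul a) (hwx.const_smul b), fderiv_const_smul hΨx,
    fderiv_const_smul hwx]

lemma pd1_comb (hΨ : FiniteEnergy Ψ) (hw : FiniteEnergy w) (a b : ℝ) (hx : x ∈ B1) :
    pd1 (a • Ψ + b • w) x = a • pd1 Ψ x + b • pd1 w x := by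
  simp [pd1, fderiv_comb hΨ hw a b hx]

lemma pd2_comb (hΨ : FiniteEnergy Ψ) (hw : FiniteEnergy w) (a b : ℝ) (hx : x ∈ B1) :
    pd2 (a • Ψ + b • w) x = a • pd2 Ψ x + b • pd2 w x := by
  simp [pd2, fderiv_comb hΨ hw a b hx]

lemma angMom_comb (hΨ : FiniteEnergy Ψ) (hw : FiniteEnergy w) (a b : ℝ) (hx : x ∈ B1) :
    angMom (a • Ψ + b • w) x = a • angMom Ψ x + b • angMom w x := by
  simp only [angMom_eq_fderiv, fderiv_comb hΨ hw a b hx, add_apply, smul_apply, Complex.real_smul]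
  ring

lemma comb (hΨ : FiniteEnergy Ψ) (hw : FiniteEnergy w) (a b : ℝ) :
    FiniteEnergy (a • Ψ + b • w) where
  differentiableOn := (hΨ.differentiableOn.const_smul a).add (hw.differentiableOn.const_smul b)
  memLp_four := (hΨ.memLp_four.const_smul a).add (hw.memLp_four.const_smul b)
  memLp_pd1 := ((hΨ.memLp_pd1.const_smul a).add (hw.memLp_pd1.const_smul b)).ae_eq <|
    ae_restrict_of_forall_mem isOpen_B1.measurableSet fun _ hx => (hΨ.pd1_comb hw a b hx).symm
  memLp_pd2 := ((hΨ.memLp_pd2.const_smul a).add (hw.memLp_pd2.const_smul b)).ae_eq <|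
    ae_restrict_of_forall_mem isOpen_B1.measurableSet fun _ hx => (hΨ.pd2_comb hw a b hx).symm

lemma memLp_two (h : FiniteEnergy Ψ) : MemLp Ψ 2 (volume.restrict B1) :=
  h.memLp_four.mono_exponent (by norm_num)

lemma memLp_angMom (h : FiniteEnergy Ψ) : MemLp (angMom Ψ) 2 (volume.restrict B1) :=
  (h.memLp_pd1.norm.add h.memLp_pd2.norm).mono' (aestronglyMeasurable_angMom _ _) <|
    ae_restrict_of_forall_mem isOpen_B1.measurableSet fun _ hx => norm_angMom_le hx

lemma integrableOn_inner (hΨ : FiniteEnergy Ψ) (hw : FiniteEnergy w) :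
    IntegrableOn (fun x => ⟪Ψ x, w x⟫) B1 :=
  memLp_one_iff_integrable.1 (memLp_inner hΨ.memLp_two hw.memLp_two)

lemma integrableOn_norm_sq (h : FiniteEnergy Ψ) : IntegrableOn (fun x => ‖Ψ x‖ ^ 2) B1 := by
  simpa only [real_inner_self_eq_norm_sq] using h.integrableOn_inner h

lemma integrableOn_gradInner (hΨ : FiniteEnergy Ψ) (hw : FiniteEnergy w) :
    IntegrableOn (gradInner Ψ w) B1 :=
  (memLp_one_iff_integrable.1 (memLp_inner hΨ.memLp_pd1 hw.memLp_pd1)).add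
    (memLp_one_iff_integrable.1 (memLp_inner hΨ.memLp_pd2 hw.memLp_pd2))

lemma integrableOn_inner_angMom (hΨ : FiniteEnergy Ψ) (hw : FiniteEnergy w) :
    IntegrableOn (fun x => ⟪Ψ x, angMom w x⟫) B1 :=
  memLp_one_iff_integrable.1 (memLp_inner hΨ.memLp_two hw.memLp_angMom)

lemma integrableOn_inner_mul_inner {Φ₁ Φ₂ Φ₃ Φ₄ : Pt → ℂ} (h₁ : FiniteEnergy Φ₁)
    (h₂ : FiniteEnergy Φ₂) (h₃ : FiniteEnergy Φ₃) (h₄ : FiniteEnergy Φ₄) :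
    IntegrableOn (fun x => ⟪Φ₁ x, Φ₂ x⟫ * ⟪Φ₃ x, Φ₄ x⟫) B1 :=
  MemLp.integrable_mul (p := 2) (q := 2) (memLp_inner h₁.memLp_four h₂.memLp_four)
    (memLp_inner h₃.memLp_four h₄.memLp_four)

lemma integrableOn_norm_pow_four (h : FiniteEnergy Ψ) : IntegrableOn (fun x => ‖Ψ x‖ ^ 4) B1 :=
  (h.integrableOn_inner_mul_inner h h h).congr <| .of_forall fun x => by
    simp only [real_inner_self_eq_norm_sq]; ring

lemma gpAdm (h : FiniteEnergy Ψ) (hmass : ∫ x in B1, ‖Ψ x‖ ^ 2 = 1) : gpAdm Ψ := by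
  refine ⟨h.differentiableOn, h.integrableOn_norm_sq, ?_, h.integrableOn_norm_pow_four, ?_, hmass⟩
  · exact (h.integrableOn_gradInner h).congr (.of_forall (gradInner_self Ψ))
  · simpa only [Complex.inner, mul_comm] using h.integrableOn_inner_angMom h

end FiniteEnergy

end FiniteEnergy

section Variations

variable {ε Ω : ℝ} {Ψ w : Pt → ℂ} {x : Pt}

/-- The squared `L²` norm on the disc. -/
def mass (Ψ : Pt → ℂ) : ℝ := ∫ x in B1, ‖Ψ x‖ ^ 2

/-- The density of the bilinear form whose diagonal is the quadratic part of the energy. -/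
def kineticForm (Ω : ℝ) (Ψ w : Pt → ℂ) (x : Pt) : ℝ :=
  gradInner Ψ w x - Ω * ⟪Ψ x, angMom w x⟫

/-- The quartic part `∫ |Ψ|⁴ / ε²` of the energy. -/
def interaction (ε : ℝ) (Ψ : Pt → ℂ) : ℝ := (∫ x in B1, ‖Ψ x‖ ^ 4) / ε ^ 2

/-- The chemical potential, i.e. the Lagrange multiplier of the mass constraint. -/
def chemicalPotential (ε Ω : ℝ) (Ψ : Pt → ℂ) : ℝ := gpEnergy ε Ω Ψ + interaction ε Ψ

/-- The density of the first variation at `Ψ`, in direction `w`, of energy minus `μ` times mass. -/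
def firstVariation (ε Ω μ : ℝ) (Ψ w : Pt → ℂ) (x : Pt) : ℝ :=
  kineticForm Ω Ψ w x + kineticForm Ω w Ψ x + 4 * ‖Ψ x‖ ^ 2 * ⟪Ψ x, w x⟫ / ε ^ 2
    - 2 * μ * ⟪Ψ x, w x⟫

/-- The density of (half) the second variation at `Ψ`, in direction `w`, of energy minus `μ` times
mass. -/
def secondVariation (ε Ω μ : ℝ) (Ψ w : Pt → ℂ) (x : Pt) : ℝ :=
  kineticForm Ω w w x + (4 * ⟪Ψ x, w x⟫ ^ 2 + 2 * ‖Ψ x‖ ^ 2 * ‖w x‖ ^ 2) / ε ^ 2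
    - μ * ‖w x‖ ^ 2

/-- The perturbation `Ψ + t w`, rescaled to mass one. -/
def perturb (Ψ w : Pt → ℂ) (t : ℝ) : Pt → ℂ := (√(mass (Ψ + t • w)))⁻¹ • (Ψ + t • w)

/-- The squared `H¹` norm on the disc. -/
def h1NormSq (Ψ : Pt → ℂ) : ℝ := ∫ x in B1, (‖Ψ x‖ ^ 2 + ‖pd1 Ψ x‖ ^ 2 + ‖pd2 Ψ x‖ ^ 2)

lemma norm_comb_sq (z v : ℂ) (a b : ℝ) :
    ‖a • z + b • v‖ ^ 2 = a ^ 2 * ‖z‖ ^ 2 + 2 * a * b * ⟪z, v⟫ + b ^ 2 * ‖v‖ ^ 2 := by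
  rw [norm_add_sq_real, norm_smul, norm_smul, mul_pow, mul_pow, Real.norm_eq_abs, Real.norm_eq_abs,
    sq_abs, sq_abs, real_inner_smul_left, real_inner_smul_right]
  ring

lemma perturb_eq (Ψ w : Pt → ℂ) (t : ℝ) :
    perturb Ψ w t = (√(mass (Ψ + t • w)))⁻¹ • Ψ + ((√(mass (Ψ + t • w)))⁻¹ * t) • w := by
  rw [perturb, smul_add, smul_smul]

namespace FiniteEnergy

lemma integrableOn_kineticForm (hΨ : FiniteEnergy Ψ) (hw : FiniteEnergy w) (Ω : ℝ) :
    IntegrableOn (kineticForm Ω Ψ w) B1 :=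
  (hΨ.integrableOn_gradInner hw).sub ((hΨ.integrableOn_inner_angMom hw).const_mul Ω)

lemma gpEnergy_eq (h : FiniteEnergy Ψ) (ε Ω : ℝ) :
    gpEnergy ε Ω Ψ = (∫ x in B1, kineticForm Ω Ψ Ψ x) + interaction ε Ψ := by
  rw [interaction, ← integral_div, ← integral_add (h.integrableOn_kineticForm h Ω)
    (h.integrableOn_norm_pow_four.div_const _)]
  simp only [gpEnergy, gpDensity, kineticForm, gradInner_self, Complex.inner,
    mul_comm (angMom Ψ _)]

lemma mass_comb (hΨ : FiniteEnergy Ψ) (hw : FiniteEnergy w) (a b : ℝ) :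
    mass (a • Ψ + b • w) =
      a ^ 2 * mass Ψ + 2 * a * b * (∫ x in B1, ⟪Ψ x, w x⟫) + b ^ 2 * mass w := by
  simp only [mass]
  rw [← integral_linear_combination₃ hΨ.integrableOn_norm_sq (hΨ.integrableOn_inner hw)
    hw.integrableOn_norm_sq]
  exact integral_congr_ae (.of_forall fun x => norm_comb_sq (Ψ x) (w x) a b)

lemma integral_kineticForm_comb (hΨ : FiniteEnergy Ψ) (hw : FiniteEnergy w) (Ω a b : ℝ) :
    ∫ x in B1, kineticForm Ω (a • Ψ + b • w) (a • Ψ + b • w) x =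
      a ^ 2 * (∫ x in B1, kineticForm Ω Ψ Ψ x)
        + a * b * (∫ x in B1, (kineticForm Ω Ψ w x + kineticForm Ω w Ψ x))
        + b ^ 2 * ∫ x in B1, kineticForm Ω w w x := by
  have hcross : IntegrableOn (fun x => kineticForm Ω Ψ w x + kineticForm Ω w Ψ x) B1 :=
    (hΨ.integrableOn_kineticForm hw Ω).add (hw.integrableOn_kineticForm hΨ Ω)
  rw [← integral_linear_combination₃ (hΨ.integrableOn_kineticForm hΨ Ω) hcross
    (hw.integrableOn_kineticForm hw Ω)]
  refine setIntegral_congr_fun isOpen_B1.measurableSet fun x hx => ?_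
  simp only [kineticForm, gradInner, hΨ.pd1_comb hw a b hx, hΨ.pd2_comb hw a b hx,
    hΨ.angMom_comb hw a b hx, Pi.add_apply, Pi.smul_apply, inner_add_left, inner_add_right,
    real_inner_smul_left, real_inner_smul_right]
  ring

lemma integrableOn_norm_sq_mul_inner (hΨ : FiniteEnergy Ψ) (hw : FiniteEnergy w) :
    IntegrableOn (fun x => ‖Ψ x‖ ^ 2 * ⟪Ψ x, w x⟫) B1 := by
  simpa only [real_inner_self_eq_norm_sq] using hΨ.integrableOn_inner_mul_inner hΨ hΨ hw

lemma integrableOn_quartic_cross (hΨ : FiniteEnergy Ψ) (hw : FiniteEnergy w) :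
    IntegrableOn (fun x => 4 * ⟪Ψ x, w x⟫ ^ 2 + 2 * ‖Ψ x‖ ^ 2 * ‖w x‖ ^ 2) B1 := by
  refine (((hΨ.integrableOn_inner_mul_inner hw hΨ hw).const_mul 4).add
    ((hΨ.integrableOn_inner_mul_inner hΨ hw hw).const_mul 2)).congr (.of_forall fun x => ?_)
  simp only [Pi.add_apply, real_inner_self_eq_norm_sq]
  ring

lemma integral_norm_pow_four_comb (hΨ : FiniteEnergy Ψ) (hw : FiniteEnergy w) (a b : ℝ) :
    ∫ x in B1, ‖(a • Ψ + b • w) x‖ ^ 4 =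
      a ^ 4 * (∫ x in B1, ‖Ψ x‖ ^ 4)
        + 4 * a ^ 3 * b * (∫ x in B1, ‖Ψ x‖ ^ 2 * ⟪Ψ x, w x⟫)
        + a ^ 2 * b ^ 2 * (∫ x in B1, (4 * ⟪Ψ x, w x⟫ ^ 2 + 2 * ‖Ψ x‖ ^ 2 * ‖w x‖ ^ 2))
        + 4 * a * b ^ 3 * (∫ x in B1, ‖w x‖ ^ 2 * ⟪w x, Ψ x⟫)
        + b ^ 4 * ∫ x in B1, ‖w x‖ ^ 4 := by
  have hcross : IntegrableOn (fun x => a ^ 4 * ‖Ψ x‖ ^ 4 + 4 * a ^ 3 * b * (‖Ψ x‖ ^ 2 * ⟪Ψ x, w x⟫)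
      + a ^ 2 * b ^ 2 * (4 * ⟪Ψ x, w x⟫ ^ 2 + 2 * ‖Ψ x‖ ^ 2 * ‖w x‖ ^ 2)) B1 :=
    ((hΨ.integrableOn_norm_pow_four.const_mul _).add
      ((hΨ.integrableOn_norm_sq_mul_inner hw).const_mul _)).add
      ((hΨ.integrableOn_quartic_cross hw).const_mul _)
  rw [← integral_linear_combination₃ hΨ.integrableOn_norm_pow_four
      (hΨ.integrableOn_norm_sq_mul_inner hw) (hΨ.integrableOn_quartic_cross hw),
    ← one_mul (∫ x in B1, (_ + _)), ← integral_linear_combination₃ hcross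
    (hw.integrableOn_norm_sq_mul_inner hΨ) hw.integrableOn_norm_pow_four]
  refine integral_congr_ae (.of_forall fun x => ?_)
  simp only [Pi.add_apply, Pi.smul_apply, real_inner_comm (Ψ x) (w x)]
  linear_combination (‖a • Ψ x + b • w x‖ ^ 2 + (a ^ 2 * ‖Ψ x‖ ^ 2 + 2 * a * b * ⟪Ψ x, w x⟫
    + b ^ 2 * ‖w x‖ ^ 2)) * norm_comb_sq (Ψ x) (w x) a b

lemma integral_firstVariation (hΨ : FiniteEnergy Ψ) (hw : FiniteEnergy w) (ε Ω μ : ℝ) :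
    ∫ x in B1, firstVariation ε Ω μ Ψ w x =
      (∫ x in B1, (kineticForm Ω Ψ w x + kineticForm Ω w Ψ x))
        + 4 / ε ^ 2 * (∫ x in B1, ‖Ψ x‖ ^ 2 * ⟪Ψ x, w x⟫) - 2 * μ * ∫ x in B1, ⟪Ψ x, w x⟫ := by
  have hcross : IntegrableOn (fun x => kineticForm Ω Ψ w x + kineticForm Ω w Ψ x) B1 :=
    (hΨ.integrableOn_kineticForm hw Ω).add (hw.integrableOn_kineticForm hΨ Ω)
  rw [← one_mul (∫ x in B1, (_ + _)), sub_eq_add_neg, ← neg_mul, ← integral_linear_combination₃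
    hcross (hΨ.integrableOn_norm_sq_mul_inner hw) (hΨ.integrableOn_inner hw)]
  refine integral_congr_ae (.of_forall fun x => ?_)
  simp only [firstVariation]
  ring

lemma integral_secondVariation (hΨ : FiniteEnergy Ψ) (hw : FiniteEnergy w) (ε Ω μ : ℝ) :
    ∫ x in B1, secondVariation ε Ω μ Ψ w x =
      (∫ x in B1, kineticForm Ω w w x)
        + 1 / ε ^ 2 * (∫ x in B1, (4 * ⟪Ψ x, w x⟫ ^ 2 + 2 * ‖Ψ x‖ ^ 2 * ‖w x‖ ^ 2))
        - μ * mass w := by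
  rw [← one_mul (∫ x in B1, kineticForm Ω w w x), sub_eq_add_neg, ← neg_mul, mass,
    ← integral_linear_combination₃ (hw.integrableOn_kineticForm hw Ω)
      (hΨ.integrableOn_quartic_cross hw) hw.integrableOn_norm_sq]
  refine integral_congr_ae (.of_forall fun x => ?_)
  simp only [secondVariation]
  ring

lemma mass_add_smul (hΨ : FiniteEnergy Ψ) (hw : FiniteEnergy w) (hmass : mass Ψ = 1) (t : ℝ) :
    mass (Ψ + t • w) = 1 + 2 * t * (∫ x in B1, ⟪Ψ x, w x⟫) + t ^ 2 * mass w := by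
  simpa [hmass] using hΨ.mass_comb hw 1 t

lemma exists_gpEnergy_perturb_expansion (hΨ : FiniteEnergy Ψ) (hw : FiniteEnergy w)
    (hmass : mass Ψ = 1) (ε Ω : ℝ) :
    ∃ B : ℝ → ℝ, Continuous B ∧
      (∫ x in B1, ⟪Ψ x, w x⟫ = 0 →
        B 0 = ∫ x in B1, secondVariation ε Ω (chemicalPotential ε Ω Ψ) Ψ w x) ∧
      ∀ t, 0 < mass (Ψ + t • w) →
        (gpEnergy ε Ω (perturb Ψ w t) - gpEnergy ε Ω Ψ) * mass (Ψ + t • w) ^ 2 =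
          t * (∫ x in B1, firstVariation ε Ω (chemicalPotential ε Ω Ψ) Ψ w x) + t ^ 2 * B t := by
  simp only [integral_firstVariation hΨ hw, integral_secondVariation hΨ hw, perturb_eq,
    (hΨ.comb hw _ _).gpEnergy_eq, hΨ.gpEnergy_eq, chemicalPotential, interaction,
    integral_kineticForm_comb hΨ hw, integral_norm_pow_four_comb hΨ hw]
  generalize hn : ∫ x in B1, ⟪Ψ x, w x⟫ = n₁
  generalize ∫ x in B1, kineticForm Ω Ψ Ψ x = q₀
  generalize ∫ x in B1, (kineticForm Ω Ψ w x + kineticForm Ω w Ψ x) = q₁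
  generalize ∫ x in B1, kineticForm Ω w w x = q₂
  generalize ∫ x in B1, ‖Ψ x‖ ^ 4 = f₀
  generalize ∫ x in B1, ‖Ψ x‖ ^ 2 * ⟪Ψ x, w x⟫ = f₁
  generalize ∫ x in B1, (4 * ⟪Ψ x, w x⟫ ^ 2 + 2 * ‖Ψ x‖ ^ 2 * ‖w x‖ ^ 2) = f₂
  generalize ∫ x in B1, ‖w x‖ ^ 2 * ⟪w x, Ψ x⟫ = f₃
  generalize ∫ x in B1, ‖w x‖ ^ 4 = f₄
  refine ⟨fun t => q₂ + 2 * q₁ * n₁ + q₀ * mass w + f₂ / ε ^ 2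
    - (q₀ + f₀ / ε ^ 2) * (4 * n₁ ^ 2 + 2 * mass w)
    + t * (q₁ * mass w + 2 * q₂ * n₁ + 4 * f₃ / ε ^ 2 - 4 * (q₀ + f₀ / ε ^ 2) * n₁ * mass w)
    + t ^ 2 * (q₂ * mass w + f₄ / ε ^ 2 - (q₀ + f₀ / ε ^ 2) * mass w ^ 2), by fun_prop,
    fun h => ?_, fun t ht => ?_⟩
  · rw [h]; ring
  · have hm := hΨ.mass_add_smul hw hmass t
    rw [hn] at hm
    set m := mass (Ψ + t • w)
    have hc : (√m)⁻¹ ^ 2 * m = 1 := by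
      rw [inv_pow, Real.sq_sqrt ht.le, inv_mul_cancel₀ ht.ne']
    generalize (√m)⁻¹ = c at hc
    linear_combination ((q₀ + t * q₁ + t ^ 2 * q₂) * m + (f₀ + 4 * t * f₁ + t ^ 2 * f₂
        + 4 * t ^ 3 * f₃ + t ^ 4 * f₄) / ε ^ 2 * (c ^ 2 * m + 1)) * hc
      + (q₀ + t * q₁ + t ^ 2 * q₂ - (q₀ + f₀ / ε ^ 2) *
        (m + (1 + 2 * t * n₁ + t ^ 2 * mass w))) * hm

lemma gpAdm_perturb (hΨ : FiniteEnergy Ψ) (hw : FiniteEnergy w) {t : ℝ}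
    (ht : 0 < mass (Ψ + t • w)) : _root_.gpAdm (perturb Ψ w t) := by
  refine FiniteEnergy.gpAdm (perturb_eq Ψ w t ▸ hΨ.comb hw _ _) ?_
  simp only [perturb, Pi.smul_apply, norm_smul, mul_pow, integral_const_mul, norm_inv, inv_pow,
    Real.norm_eq_abs, sq_abs, Real.sq_sqrt ht.le]
  exact inv_mul_cancel₀ ht.ne'

lemma continuous_mass_add_smul (hΨ : FiniteEnergy Ψ) (hw : FiniteEnergy w) (hmass : mass Ψ = 1) :
    Continuous fun t : ℝ => mass (Ψ + t • w) := by
  simp only [hΨ.mass_add_smul hw hmass]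
  fun_prop

lemma eventually_mass_pos (hΨ : FiniteEnergy Ψ) (hw : FiniteEnergy w) (hmass : mass Ψ = 1) :
    ∀ᶠ t : ℝ in 𝓝 0, 0 < mass (Ψ + t • w) :=
  (hΨ.continuous_mass_add_smul hw hmass).continuousAt.eventually (lt_mem_nhds (by simp [hmass]))

lemma h1NormSq_comb (hΨ : FiniteEnergy Ψ) (hw : FiniteEnergy w) (a b : ℝ) :
    h1NormSq (a • Ψ + b • w) = a ^ 2 * h1NormSq Ψ
      + 2 * a * b * (∫ x in B1, (⟪Ψ x, w x⟫ + gradInner Ψ w x)) + b ^ 2 * h1NormSq w := by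
  have hint : ∀ {Φ}, FiniteEnergy Φ →
      IntegrableOn (fun x => ‖Φ x‖ ^ 2 + ‖pd1 Φ x‖ ^ 2 + ‖pd2 Φ x‖ ^ 2) B1 := fun {Φ} h =>
    (h.integrableOn_norm_sq.add (h.integrableOn_gradInner h)).congr (.of_forall fun x => by
      simp only [Pi.add_apply, gradInner_self, add_assoc])
  have hcross : IntegrableOn (fun x => ⟪Ψ x, w x⟫ + gradInner Ψ w x) B1 :=
    (hΨ.integrableOn_inner hw).add (hΨ.integrableOn_gradInner hw)
  simp only [h1NormSq]
  rw [← integral_linear_combination₃ (hint hΨ) hcross (hint hw)]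
  refine setIntegral_congr_fun isOpen_B1.measurableSet fun x hx => ?_
  simp only [hΨ.pd1_comb hw a b hx, hΨ.pd2_comb hw a b hx, Pi.add_apply, Pi.smul_apply,
    norm_comb_sq, gradInner]
  ring

lemma tendsto_h1NormSq_sub_perturb (hΨ : FiniteEnergy Ψ) (hw : FiniteEnergy w)
    (hmass : mass Ψ = 1) : Tendsto (fun t => h1NormSq (Ψ - perturb Ψ w t)) (𝓝 0) (𝓝 0) := by
  have hcomb : ∀ t, Ψ - perturb Ψ w t = (1 - (√(mass (Ψ + t • w)))⁻¹) • Ψ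
      + (-((√(mass (Ψ + t • w)))⁻¹ * t)) • w := fun t => by
    rw [perturb_eq, sub_smul, one_smul, neg_smul]
    abel
  simp only [hcomb, h1NormSq_comb hΨ hw]
  have hscale : ContinuousAt (fun t : ℝ => (√(mass (Ψ + t • w)))⁻¹) 0 :=
    (hΨ.continuous_mass_add_smul hw hmass).sqrt.continuousAt.inv₀ (by simp [hmass])
  have hcont : ContinuousAt (fun t => (1 - (√(mass (Ψ + t • w)))⁻¹) ^ 2 * h1NormSq Ψ
      + 2 * (1 - (√(mass (Ψ + t • w)))⁻¹) * -((√(mass (Ψ + t • w)))⁻¹ * t)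
        * (∫ x in B1, (⟪Ψ x, w x⟫ + gradInner Ψ w x))
      + (-((√(mass (Ψ + t • w)))⁻¹ * t)) ^ 2 * h1NormSq w) 0 := by
    fun_prop
  simpa [ContinuousAt, hmass] using hcont

end FiniteEnergy

lemma eq_zero_of_eventually_nonneg {A : ℝ} {B : ℝ → ℝ} (hB : ContinuousAt B 0)
    (h : ∀ᶠ t in 𝓝 0, 0 ≤ t * A + t ^ 2 * B t) : A = 0 := by
  have hderiv : HasDerivAt (fun t => t * A + t ^ 2 * B t) A 0 := by
    rw [hasDerivAt_iff_tendsto_slope]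
    have hlim : Tendsto (fun t => A + t * B t) (𝓝[≠] 0) (𝓝 A) := by
      have hcont : ContinuousAt (fun t => A + t * B t) 0 := by fun_prop
      simpa using hcont.tendsto.mono_left nhdsWithin_le_nhds
    refine hlim.congr' (eventually_mem_nhdsWithin.mono fun t (ht : t ≠ 0) => ?_)
    simp only [slope_def_field]
    field_simp
    ring
  exact IsLocalMin.hasDerivAt_eq_zero (h.mono fun t ht => by simpa using ht) hderiv

lemma integral_firstVariation_eq_zero (hΨ : FiniteEnergy Ψ) (hw : FiniteEnergy w)
    (hmass : mass Ψ = 1)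
    (hmin : ∀ t : ℝ, 0 < mass (Ψ + t • w) → gpEnergy ε Ω Ψ ≤ gpEnergy ε Ω (perturb Ψ w t)) :
    ∫ x in B1, firstVariation ε Ω (chemicalPotential ε Ω Ψ) Ψ w x = 0 := by
  obtain ⟨B, hB, -, hexpand⟩ := hΨ.exists_gpEnergy_perturb_expansion hw hmass ε Ω
  refine eq_zero_of_eventually_nonneg hB.continuousAt ?_
  filter_upwards [hΨ.eventually_mass_pos hw hmass] with t ht
  rw [← hexpand t ht]
  exact mul_nonneg (sub_nonneg.2 (hmin t ht)) (sq_nonneg _)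

lemma exists_near_gpEnergy_lt (hΨ : FiniteEnergy Ψ) (hw : FiniteEnergy w) (hmass : mass Ψ = 1)
    (horth : ∫ x in B1, ⟪Ψ x, w x⟫ = 0)
    (hfirst : ∫ x in B1, firstVariation ε Ω (chemicalPotential ε Ω Ψ) Ψ w x = 0)
    (hsecond : ∫ x in B1, secondVariation ε Ω (chemicalPotential ε Ω Ψ) Ψ w x < 0)
    {δ : ℝ} (hδ : 0 < δ) :
    ∃ Φ, gpAdm Φ ∧ √(h1NormSq (Ψ - Φ)) < δ ∧ gpEnergy ε Ω Φ < gpEnergy ε Ω Ψ := by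
  obtain ⟨B, hB, hB0, hexpand⟩ := hΨ.exists_gpEnergy_perturb_expansion hw hmass ε Ω
  have hclose : ∀ᶠ t in 𝓝 0, √(h1NormSq (Ψ - perturb Ψ w t)) < δ := by
    have := (hΨ.tendsto_h1NormSq_sub_perturb hw hmass).sqrt
    rw [Real.sqrt_zero] at this
    exact this.eventually_lt_const hδ
  have hneg : ∀ᶠ t in 𝓝 0, B t < 0 :=
    hB.continuousAt.eventually (gt_mem_nhds (by rwa [hB0 horth]))
  obtain ⟨t, ⟨ht, hmt, hBt⟩, ht0⟩ := ((hclose.and ((hΨ.eventually_mass_pos hw hmass).and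
    hneg)).filter_mono nhdsWithin_le_nhds |>.and (self_mem_nhdsWithin (s := {0}ᶜ))).exists
  refine ⟨perturb Ψ w t, hΨ.gpAdm_perturb hw hmt, ht, ?_⟩
  have hexcess : (gpEnergy ε Ω (perturb Ψ w t) - gpEnergy ε Ω Ψ) * mass (Ψ + t • w) ^ 2 < 0 := by
    rw [hexpand t hmt, hfirst, mul_zero, zero_add]
    exact mul_neg_of_pos_of_neg (sq_pos_of_ne_zero ht0) hBt
  nlinarith [pow_pos hmt 2]

end Variations

section FundamentalLemma

variable {f K P κ : ℝ → ℂ}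

lemma exists_primitive_of_integrableOn (hκ : IntegrableOn κ (Ioo 0 1))
    (hcont : ContinuousOn κ (Ioo 0 1)) :
    ∃ K : ℝ → ℂ, Continuous K ∧ K 1 = 0 ∧ ∀ r ∈ Ioo (0 : ℝ) 1, HasDerivAt K (κ r) r := by
  have hind : Integrable ((Ioo (0 : ℝ) 1).indicator κ) :=
    (integrable_indicator_iff measurableSet_Ioo).2 hκ
  refine ⟨fun r => ∫ s in (1 : ℝ)..r, (Ioo (0 : ℝ) 1).indicator κ s,
    intervalIntegral.continuous_primitive (fun _ _ => hind.intervalIntegrable) 1, by simp,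
    fun r hr => ?_⟩
  have heq : (Ioo (0 : ℝ) 1).indicator κ =ᶠ[𝓝 r] κ := by
    filter_upwards [isOpen_Ioo.mem_nhds hr] with s hs using Set.indicator_of_mem hs κ
  rw [← heq.eq_of_nhds]
  exact intervalIntegral.integral_hasDerivAt_right hind.intervalIntegrable
    hind.aestronglyMeasurable.stronglyMeasurableAtFilter
    ((hcont.continuousAt (isOpen_Ioo.mem_nhds hr)).congr heq.symm)

lemma exists_contDiff_primitive {χ : ℝ → ℝ} (hχ : Continuous χ) (hsupp : (0 : ℝ) ∉ tsupport χ) :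
    ∃ φ : ℝ → ℝ, ContDiff ℝ 1 φ ∧ deriv φ = χ ∧ ∀ᶠ r in 𝓝 0, φ r = 0 := by
  have hderiv : ∀ r, HasDerivAt (fun r => ∫ s in (0 : ℝ)..r, χ s) (χ r) r := fun r =>
    intervalIntegral.integral_hasDerivAt_right (hχ.intervalIntegrable _ _)
      (hχ.stronglyMeasurableAtFilter _ _) hχ.continuousAt
  have hderiv' : deriv (fun r => ∫ s in (0 : ℝ)..r, χ s) = χ := funext fun r => (hderiv r).deriv
  refine ⟨fun r => ∫ s in (0 : ℝ)..r, χ s, contDiff_one_iff_deriv.2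
    ⟨fun r => (hderiv r).differentiableAt, hderiv'.symm ▸ hχ⟩, hderiv', ?_⟩
  obtain ⟨η, hη, hball⟩ := Metric.eventually_nhds_iff.1 (notMem_tsupport_iff_eventuallyEq.1 hsupp)
  filter_upwards [Metric.ball_mem_nhds 0 hη] with r hr
  rw [intervalIntegral.integral_congr (g := fun _ => 0), intervalIntegral.integral_zero]
  intro s hs
  refine hball (lt_of_le_of_lt ?_ (Metric.mem_ball.1 hr))
  simpa using Set.abs_sub_left_of_mem_uIcc hs

lemma intervalIntegrable_smul {χ : ℝ → ℝ} (hχ : Continuous χ) (hf : IntegrableOn f (Ioo 0 1)) :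
    IntervalIntegrable (fun r => χ r • f r) volume 0 1 :=
  IntervalIntegrable.continuousOn_smul
    ((intervalIntegrable_iff_integrableOn_Ioo_of_le zero_le_one).2 hf) hχ.continuousOn

/-- The du Bois-Reymond lemma with a free end at `1`, which forces the natural boundary condition
`K 1 = 0`. -/
lemma ae_eq_of_integral_deriv_smul_add_smul_eq_zero (hP : IntegrableOn P (Ioo 0 1))
    (hκ : IntegrableOn κ (Ioo 0 1)) (hK : Continuous K) (hK1 : K 1 = 0)
    (hderiv : ∀ r ∈ Ioo (0 : ℝ) 1, HasDerivAt K (κ r) r)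
    (h : ∀ φ : ℝ → ℝ, ContDiff ℝ 1 φ → (∀ᶠ r in 𝓝 0, φ r = 0) →
      ∫ r in (0 : ℝ)..1, (deriv φ r • P r + φ r • κ r) = 0) :
    ∀ᵐ r : ℝ, r ∈ Ioo (0 : ℝ) 1 → P r = K r := by
  have hKint : IntegrableOn K (Ioo 0 1) := hK.integrableOn_Icc.mono_set Set.Ioo_subset_Icc_self
  have hae := isOpen_Ioo.ae_eq_zero_of_integral_contDiff_smul_eq_zero
    (hP.sub hKint).locallyIntegrableOn fun χ hχ _ hsub => ?_
  · filter_upwards [hae] with r hr hmem using sub_eq_zero.1 (hr hmem)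
  obtain ⟨φ, hφ, rfl, hφ0⟩ := exists_contDiff_primitive hχ.continuous fun h0 => (hsub h0).1.false
  have hintP := intervalIntegrable_smul hχ.continuous hP
  have hintK := intervalIntegrable_smul hχ.continuous hKint
  have hintκ := intervalIntegrable_smul hφ.continuous hκ
  have hparts : ∫ r in (0 : ℝ)..1, (deriv φ r • K r + φ r • κ r) = 0 := by
    rw [intervalIntegral.integral_eq_sub_of_hasDerivAt_of_le zero_le_one
      (f := fun r => φ r • K r) (hφ.continuous.smul hK).continuousOn (fun r hr => ?_)
      (hintK.add hintκ), hK1, hφ0.self_of_nhds]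
    · simp
    · rw [add_comm]
      exact (hφ.differentiable one_ne_zero r).hasDerivAt.smul (hderiv r hr)
  have hsplit : ∀ r, deriv φ r • (P - K) r =
      (deriv φ r • P r + φ r • κ r) - (deriv φ r • K r + φ r • κ r) := fun r => by
    rw [Pi.sub_apply, smul_sub]; abel
  rw [← setIntegral_eq_integral_of_forall_compl_eq_zero (s := Ioo 0 1) fun r hr => by
      rw [image_eq_zero_of_notMem_tsupport fun hr' => hr (hsub hr'), zero_smul],
    ← integral_Ioc_eq_integral_Ioo, ← intervalIntegral.integral_of_le zero_le_one]
  simp only [hsplit]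
  rw [intervalIntegral.integral_sub (hintP.add hintκ) (hintK.add hintκ), h φ hφ hφ0, hparts,
    sub_zero]

lemma exists_extension_hasDerivAt_div (hf : DifferentiableOn ℝ f (Ioo 0 1)) (hK : Continuous K)
    (hae : ∀ᵐ r : ℝ, r ∈ Ioo (0 : ℝ) 1 → r • deriv f r = K r) :
    ∃ g : ℝ → ℂ, Set.EqOn g f (Ioo 0 1) ∧ ∀ r > 0, HasDerivAt g (K r / r) r := by
  have hquot : ContinuousOn (fun r : ℝ => K r / r) (Ioi 0) :=
    hK.continuousOn.div (by fun_prop) fun r hr => by exact_mod_cast (ne_of_gt hr)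
  have hint : ∀ r > 0, IntervalIntegrable (fun r : ℝ => K r / r) volume (1 / 2) r := fun r hr =>
    (hquot.mono fun s hs => (lt_min (by norm_num) hr).trans_le hs.1).intervalIntegrable
  refine ⟨fun r => f (1 / 2) + ∫ s in (1 / 2 : ℝ)..r, K s / s, fun r hr => ?_, fun r hr =>
    (intervalIntegral.integral_hasDerivAt_right (hint r hr)
      (hquot.stronglyMeasurableAtFilter isOpen_Ioi r hr)
      (hquot.continuousAt (isOpen_Ioi.mem_nhds hr))).const_add _⟩
  have hsub : Set.uIcc (1 / 2) r ⊆ Ioo 0 1 :=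
    Set.OrdConnected.uIcc_subset Set.ordConnected_Ioo (by norm_num) hr
  have hderiv : ∀ᵐ s : ℝ, s ∈ Set.uIoc (1 / 2) r → K s / s = deriv f s := by
    filter_upwards [hae] with s hs hmem
    have hs' := hsub (Set.uIoc_subset_uIcc hmem)
    have hs0 : (s : ℂ) ≠ 0 := by exact_mod_cast hs'.1.ne'
    rw [← hs hs', Complex.real_smul, mul_div_cancel_left₀ _ hs0]
  have hftc := intervalIntegral.integral_eq_sub_of_hasDerivAt
    (fun s hs => (hf.differentiableAt (isOpen_Ioo.mem_nhds (hsub hs))).hasDerivAt)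
    ((hint r hr.1).congr_ae ((ae_restrict_iff' measurableSet_uIoc).2 hderiv))
  simp only
  rw [intervalIntegral.integral_congr_ae hderiv, hftc, add_sub_cancel]

end FundamentalLemma

section ModeEnergy

variable {ε Ω μ C : ℝ} {m : ℕ} {F F' G : ℝ → ℂ} {Φ Ψ w : Pt → ℂ} {x : Pt}

lemma gradInner_mode_self_le {F' : ℂ} (hx : x ≠ 0) (hF : HasDerivAt F F' ‖x‖)
    (hbound : ‖F ‖x‖‖ ≤ C * ‖x‖) (hbound' : ‖F'‖ ≤ C) :
    gradInner (mode F m) (mode F m) x ≤ ((1 + m) * C) ^ 2 := by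
  have hquot : ‖F ‖x‖‖ / ‖x‖ ≤ C := (div_le_iff₀ (norm_pos_iff.2 hx)).2 hbound
  rw [gradInner_mode_mode hx hF hF, real_inner_self_eq_norm_sq, real_inner_self_eq_norm_sq]
  calc ‖F'‖ ^ 2 + m ^ 2 / ‖x‖ ^ 2 * ‖F ‖x‖‖ ^ 2
      = ‖F'‖ ^ 2 + m ^ 2 * (‖F ‖x‖‖ / ‖x‖) ^ 2 := by ring
    _ ≤ C ^ 2 + m ^ 2 * C ^ 2 := by gcongr
    _ ≤ ((1 + m) * C) ^ 2 := by nlinarith [mul_nonneg (Nat.cast_nonneg' m) (sq_nonneg C)]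

lemma exists_norm_le_of_isBigO_sq (hF0 : F 0 = 0) (hO : F =O[𝓟 (Ioo 0 1)] fun r => r ^ 2)
    (hO' : F' =O[𝓟 (Ioo 0 1)] fun _ => (1 : ℝ)) :
    ∃ C, (∀ r ∈ Set.Ico (0 : ℝ) 1, ‖F r‖ ≤ C * r ^ 2) ∧ ∀ r ∈ Ioo (0 : ℝ) 1, ‖F' r‖ ≤ C := by
  obtain ⟨C₁, h₁⟩ := Asymptotics.isBigO_principal.1 hO
  obtain ⟨C₂, h₂⟩ := Asymptotics.isBigO_principal.1 hO'
  refine ⟨max C₁ C₂, fun r hr => ?_, fun r hr => (h₂ r hr).trans (by simp)⟩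
  rcases hr.1.eq_or_lt with rfl | hr0
  · simp [hF0]
  · calc ‖F r‖ ≤ C₁ * r ^ 2 := by simpa using h₁ r ⟨hr0, hr.2⟩
      _ ≤ max C₁ C₂ * r ^ 2 := by gcongr; exact le_max_left _ _

lemma FiniteEnergy.of_mode (hF0 : F 0 = 0) (hF : ∀ r ∈ Ioo (0 : ℝ) 1, HasDerivAt F (F' r) r)
    (hO : F =O[𝓟 (Ioo 0 1)] fun r => r ^ 2) (hO' : F' =O[𝓟 (Ioo 0 1)] fun _ => (1 : ℝ)) :
    FiniteEnergy (mode F m) := by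
  obtain ⟨C, hbound, hbound'⟩ := exists_norm_le_of_isBigO_sq hF0 hO hO'
  have hmem : ∀ {x : Pt}, x ∈ B1 → ‖x‖ ∈ Set.Ico (0 : ℝ) 1 := fun hx =>
    ⟨norm_nonneg _, mem_B1_iff.1 hx⟩
  have hC : 0 ≤ C := (norm_nonneg (F' 2⁻¹)).trans (hbound' _ (by norm_num))
  have hnorm : ∀ x ∈ B1, ‖mode F m x‖ ≤ C * ‖x‖ ^ 2 := fun x hx => by
    rcases eq_or_ne x 0 with rfl | hx0
    · simp [mode, hF0]
    · exact (norm_mode hx0).trans_le (hbound _ (hmem hx))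
  have hzero : HasFDerivAt (mode F m) (0 : Pt →L[ℝ] ℂ) 0 := by
    refine Asymptotics.IsBigO.hasFDerivAt (n := 2) (.of_bound C ?_) one_lt_two
    filter_upwards [isOpen_B1.mem_nhds (mem_B1_iff.2 (by simp))] with x hx
    simpa using hnorm x hx
  have hgrad : ∀ x ∈ B1, gradInner (mode F m) (mode F m) x ≤ ((1 + m) * C) ^ 2 := fun x hx => by
    rcases eq_or_ne x 0 with rfl | hx0
    · simp only [gradInner_self, pd1, pd2, hzero.fderiv]
      simpa using sq_nonneg _
    · have hr := norm_mem_Ioo hx hx0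
      refine gradInner_mode_self_le hx0 (hF _ hr) ((hbound _ (hmem hx)).trans ?_) (hbound' _ hr)
      nlinarith [mul_nonneg hC hr.1.le, hr.2]
  refine .of_bounded (C := (1 + m) * C) (fun x hx => ?_) (fun x hx => ?_) (fun x hx => ?_)
    fun x hx => ?_
  · rcases eq_or_ne x 0 with rfl | hx0
    · exact hzero.differentiableAt.differentiableWithinAt
    · exact (differentiableAt_mode hx0 (hF _ (norm_mem_Ioo hx hx0))).differentiableWithinAt
  · calc ‖mode F m x‖ ≤ C * ‖x‖ ^ 2 := hnorm x hx
      _ ≤ 1 * C := by nlinarith [pow_le_one₀ (n := 2) (hmem hx).1 (hmem hx).2.le]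
      _ ≤ (1 + m) * C := by gcongr; simp
  all_goals
    refine le_of_sq_le_sq ?_ (by positivity)
    have := hgrad x hx
    rw [gradInner_self] at this
    nlinarith [sq_nonneg ‖pd1 (mode F m) x‖, sq_nonneg ‖pd2 (mode F m) x‖]

lemma kineticForm_congr_left (h : Φ =ᶠ[𝓝 x] Ψ) : kineticForm Ω Φ w x = kineticForm Ω Ψ w x := by
  simp only [kineticForm, gradInner, pd1, pd2, h.fderiv_eq, h.eq_of_nhds]

lemma kineticForm_congr_right (h : Φ =ᶠ[𝓝 x] Ψ) : kineticForm Ω w Φ x = kineticForm Ω w Ψ x := by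
  simp only [kineticForm, gradInner, angMom, pd1, pd2, h.fderiv_eq]

/-- The effective potential `2|f|²/ε² - M` seen by a profile `f`. -/
def potential (ε M : ℝ) (f : ℝ → ℂ) (r : ℝ) : ℝ := 2 * ‖f r‖ ^ 2 / ε ^ 2 - M

lemma firstVariation_mode_mode {F' G' : ℂ} (hx : x ≠ 0) (hF : HasDerivAt F F' ‖x‖)
    (hG : HasDerivAt G G' ‖x‖) :
    firstVariation ε Ω μ (mode F m) (mode G m) x = 2 * (⟪F', G'⟫ +
      (m ^ 2 / ‖x‖ ^ 2 + potential ε (μ + m * Ω) F ‖x‖) * ⟪F ‖x‖, G ‖x‖⟫) := by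
  have hang : ∀ F : ℝ → ℂ, (m : ℂ) * mode F m x = (m : ℝ) • mode F m x := fun F => by simp
  simp only [firstVariation, kineticForm, gradInner_mode_mode hx hF hG,
    gradInner_mode_mode hx hG hF, angMom_mode hx hF, angMom_mode hx hG, hang,
    real_inner_smul_right, inner_mode_mode hx, norm_mode hx, potential]
  rw [real_inner_comm F' G', real_inner_comm (F ‖x‖) (G ‖x‖)]
  ring

end ModeEnergy

section Profile

variable {n : ℕ} {Ψ : Pt → ℂ} {x : Pt}

/-- The restriction of a wave function to the positive real axis. -/
def profile (Ψ : Pt → ℂ) (r : ℝ) : ℂ := Ψ (zcoord.symm r)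

lemma differentiableOn_profile (hd : DifferentiableOn ℝ Ψ B1) :
    DifferentiableOn ℝ (profile Ψ) (Ioo (-1) 1) := by
  have hline : Differentiable ℝ fun r : ℝ => zcoord.symm (r : ℂ) :=
    (zcoord.symm.toContinuousLinearEquiv : ℂ →L[ℝ] Pt).differentiable.comp
      Complex.ofRealCLM.differentiable
  exact hd.comp hline.differentiableOn fun r hr => mem_B1_iff.2 (by simpa [abs_lt] using hr)

lemma eq_mode_profile (hd : DifferentiableOn ℝ Ψ B1) (heig : ∀ x ∈ B1, angMom Ψ x = n * Ψ x)
    (hx : x ∈ B1) (hx0 : x ≠ 0) : Ψ x = mode (profile Ψ) n x := by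
  set y : ℝ → Pt := fun θ => zcoord.symm (Complex.exp (θ * Complex.I) * ‖x‖)
  have hy : ∀ θ, y θ ∈ B1 := fun θ => mem_B1_iff.2 (by
    simpa [y, Complex.norm_exp_ofReal_mul_I] using mem_B1_iff.1 hx)
  have hderiv : ∀ θ : ℝ,
      HasDerivAt (fun s : ℝ => Ψ (y s) * Complex.exp (s * (-n * Complex.I))) 0 θ := fun θ => by
    have hexp := ((Complex.ofRealCLM.hasDerivAt (x := θ)).mul_const (-n * Complex.I)).cexp
    have hΨ := hasDerivAt_comp_circle (hd.differentiableAt (isOpen_B1.mem_nhds (hy θ)))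
    refine (hΨ.mul hexp).congr_deriv ?_
    rw [heig _ (hy θ)]
    simp only [y, Complex.ofRealCLM_apply, Complex.ofReal_one]
    ring
  have hconst := is_const_of_deriv_eq_zero (fun θ => (hderiv θ).differentiableAt)
    (fun θ => (hderiv θ).deriv) (zcoord x).arg 0
  have hpolar : Complex.exp ((zcoord x).arg * Complex.I) = phase x := by
    have hr : (‖x‖ : ℂ) ≠ 0 := by simpa using hx0
    rw [phase, eq_div_iff hr, mul_comm]
    simpa using Complex.norm_mul_exp_arg_mul_I (zcoord x)
  have hyarg : y (zcoord x).arg = x := by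
    simp only [y, hpolar, mul_comm (phase x), norm_mul_phase, LinearIsometryEquiv.symm_apply_apply]
  rw [hyarg] at hconst
  have hinv : Complex.exp ((zcoord x).arg * (-n * Complex.I)) * phase x ^ n = 1 := by
    rw [← hpolar, ← Complex.exp_nat_mul, ← Complex.exp_add, ← Complex.exp_zero]
    ring_nf
  calc Ψ x = Ψ x * Complex.exp ((zcoord x).arg * (-n * Complex.I)) * phase x ^ n := by
        rw [mul_assoc, hinv, mul_one]
    _ = mode (profile Ψ) n x := by rw [hconst]; simp [y, mode, profile]

lemma isBigO_profile (hd : DifferentiableOn ℝ Ψ B1) (h0 : Ψ 0 = 0) :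
    profile Ψ =O[𝓝[>] 0] fun r => r := by
  have hdiff := (differentiableOn_profile hd).differentiableAt
    (isOpen_Ioo.mem_nhds (show (0 : ℝ) ∈ Ioo (-1) 1 by norm_num))
  refine (hdiff.isBigO_sub.mono nhdsWithin_le_nhds).congr (fun r => ?_) fun r => sub_zero r
  simp [profile, h0]

end Profile

section RadialEulerLagrange

variable {ε Ω M : ℝ} {n : ℕ} {f K : ℝ → ℂ} {Ψ : Pt → ℂ} {x : Pt}

/-- The right-hand side of the radial Euler–Lagrange equation `(r f')' = radialForce`. -/
def radialForce (ε M : ℝ) (n : ℕ) (f : ℝ → ℂ) (r : ℝ) : ℂ :=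
  ((n : ℝ) ^ 2 / r + r * potential ε M f r) • f r

/-- The profile `f` of a stationary vortex of degree `n`, with flux `K = r f'`. The condition
`K 1 = 0` is the natural (Neumann) boundary condition. -/
structure IsRadialVortex (ε M : ℝ) (n : ℕ) (f K : ℝ → ℂ) : Prop where
  continuous_flux : Continuous K
  flux_one : K 1 = 0
  hasDerivAt_profile : ∀ r > 0, HasDerivAt f (K r / r) r
  hasDerivAt_flux : ∀ r ∈ Ioo (0 : ℝ) 1, HasDerivAt K (radialForce ε M n f r) r
  profile_isBigO : f =O[𝓟 (Ioo 0 1)] fun r => r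

/-- `Ψ` is the function `f(r) e^{inθ}` on the punctured disc. -/
def IsModeOn (Ψ : Pt → ℂ) (f : ℝ → ℂ) (n : ℕ) : Prop := ∀ x ∈ B1, x ≠ 0 → Ψ x = mode f n x

lemma IsModeOn.eventuallyEq (h : IsModeOn Ψ f n) (hx : x ∈ B1) (hx0 : x ≠ 0) :
    Ψ =ᶠ[𝓝 x] mode f n := by
  filter_upwards [isOpen_B1.mem_nhds hx, isOpen_ne.mem_nhds hx0] with y hy hy0 using h y hy hy0

lemma IsModeOn.integrableOn_mul_norm_pow_four (h : IsModeOn Ψ f n) (hΨ : FiniteEnergy Ψ) :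
    IntegrableOn (fun r => r * ‖f r‖ ^ 4) (Ioo 0 1) := by
  refine integrableOn_B1_radial.1 (hΨ.integrableOn_norm_pow_four.congr ?_)
  exact ae_restrict_B1_of_ne_zero fun x hx hx0 => by
    simp only [h x hx hx0, norm_mode hx0]

lemma IsModeOn.integrableOn_smul_deriv (h : IsModeOn Ψ f n) (hΨ : FiniteEnergy Ψ)
    (hf : DifferentiableOn ℝ f (Ioo 0 1)) : IntegrableOn (fun r => r • deriv f r) (Ioo 0 1) := by
  have hgrad : IntegrableOn (fun x : Pt => 1 + ‖deriv f ‖x‖‖ ^ 2 +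
      (n : ℝ) ^ 2 / ‖x‖ ^ 2 * ‖f ‖x‖‖ ^ 2) B1 := by
    refine ((integrable_const (1 : ℝ)).add (hΨ.integrableOn_gradInner hΨ)).congr
      (ae_restrict_B1_of_ne_zero fun x hx hx0 => ?_)
    have hfx := (hf.differentiableAt (isOpen_Ioo.mem_nhds (norm_mem_Ioo hx hx0))).hasDerivAt
    have hmode := gradInner_mode_mode (m := n) hx0 hfx hfx
    rw [real_inner_self_eq_norm_sq, real_inner_self_eq_norm_sq] at hmode
    have heq := h.eventuallyEq hx hx0
    simp only [Pi.add_apply, add_assoc, ← hmode, gradInner, pd1, pd2, heq.fderiv_eq]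
  refine (integrableOn_B1_radial (φ := fun r => 1 + ‖deriv f r‖ ^ 2 +
    (n : ℝ) ^ 2 / r ^ 2 * ‖f r‖ ^ 2)).1 hgrad |>.mono'
    (measurable_id.aestronglyMeasurable.smul (measurable_deriv f).aestronglyMeasurable)
    (ae_restrict_of_forall_mem measurableSet_Ioo fun r hr => ?_)
  rw [norm_smul, Real.norm_of_nonneg hr.1.le]
  have hpos : 0 ≤ (n : ℝ) ^ 2 / r ^ 2 * ‖f r‖ ^ 2 := by positivity
  exact mul_le_mul_of_nonneg_left (by nlinarith [sq_nonneg (‖deriv f r‖ - 1)]) hr.1.le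

lemma le_one_add_pow_four (t : ℝ) : t ≤ 1 + t ^ 4 := by
  nlinarith [sq_nonneg (t - 1), sq_nonneg (t ^ 2 - 1)]

lemma norm_radialForce_le {r : ℝ} (hr : 0 < r) : ‖radialForce ε M n f r‖ ≤
    n ^ 2 * (‖f r‖ / r) + (2 / ε ^ 2 + |M|) * (r * (1 + ‖f r‖ ^ 4)) := by
  have h1 := le_one_add_pow_four ‖f r‖
  have h3 : ‖f r‖ ^ 3 ≤ 1 + ‖f r‖ ^ 4 := by
    nlinarith [sq_nonneg (‖f r‖ - 1), sq_nonneg (‖f r‖ ^ 2 - ‖f r‖), sq_nonneg (‖f r‖ ^ 2 - 1)]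
  have hpotential : |potential ε M f r| ≤ 2 * ‖f r‖ ^ 2 / ε ^ 2 + |M| :=
    (abs_sub _ _).trans_eq (by rw [abs_of_nonneg (by positivity)])
  calc ‖radialForce ε M n f r‖ ≤ (n ^ 2 / r + r * |potential ε M f r|) * ‖f r‖ := by
        rw [radialForce, norm_smul]
        gcongr
        refine (norm_add_le _ _).trans_eq ?_
        rw [Real.norm_of_nonneg (by positivity), Real.norm_eq_abs, abs_mul, abs_of_pos hr]
    _ ≤ (n ^ 2 / r + r * (2 * ‖f r‖ ^ 2 / ε ^ 2 + |M|)) * ‖f r‖ := by gcongr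
    _ = n ^ 2 * (‖f r‖ / r) + (2 / ε ^ 2 * (r * ‖f r‖ ^ 3) + |M| * (r * ‖f r‖)) := by ring
    _ ≤ n ^ 2 * (‖f r‖ / r) + (2 / ε ^ 2 * (r * (1 + ‖f r‖ ^ 4)) +
        |M| * (r * (1 + ‖f r‖ ^ 4))) := by gcongr
    _ = _ := by ring

lemma norm_profile_div_le {C η r : ℝ} (hη : 0 < η) (hr : 0 < r) (hfr : r < η → ‖f r‖ ≤ C * r) :
    ‖f r‖ / r ≤ |C| + r * (1 + ‖f r‖ ^ 4) / η ^ 2 := by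
  rcases lt_or_ge r η with hrη | hrη
  · calc ‖f r‖ / r ≤ |C| := (div_le_iff₀ hr).2
          ((hfr hrη).trans (mul_le_mul_of_nonneg_right (le_abs_self C) hr.le))
      _ ≤ |C| + r * (1 + ‖f r‖ ^ 4) / η ^ 2 := le_add_of_nonneg_right (by positivity)
  · have h1 := le_one_add_pow_four ‖f r‖
    calc ‖f r‖ / r = r * ‖f r‖ / r ^ 2 := by field_simp
      _ ≤ r * (1 + ‖f r‖ ^ 4) / η ^ 2 := by gcongr
      _ ≤ |C| + r * (1 + ‖f r‖ ^ 4) / η ^ 2 := le_add_of_nonneg_left (abs_nonneg C)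

lemma continuousOn_radialForce (hf : ContinuousOn f (Ioo 0 1)) :
    ContinuousOn (radialForce ε M n f) (Ioo 0 1) := by
  have hr : ∀ r ∈ Ioo (0 : ℝ) 1, r ≠ 0 := fun r hr => hr.1.ne'
  unfold radialForce potential
  fun_prop (disch := assumption)

lemma IsModeOn.integrableOn_radialForce (h : IsModeOn Ψ f n) (hΨ : FiniteEnergy Ψ)
    (hf : ContinuousOn f (Ioo 0 1)) (hO : f =O[𝓝[>] 0] fun r => r) :
    IntegrableOn (radialForce ε M n f) (Ioo 0 1) := by
  obtain ⟨C, hC⟩ := hO.bound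
  obtain ⟨η, hη, hbound⟩ := (nhdsGT_basis (0 : ℝ)).eventually_iff.1 hC
  have hX : IntegrableOn (fun r => r * (1 + ‖f r‖ ^ 4)) (Ioo 0 1) := by
    have hid : IntegrableOn (fun r : ℝ => r) (Ioo 0 1) :=
      continuous_id.integrableOn_Icc.mono_set Set.Ioo_subset_Icc_self
    exact (hid.add (h.integrableOn_mul_norm_pow_four hΨ)).congr (.of_forall fun r => by
      simp only [Pi.add_apply]; ring)
  refine ((((integrable_const |C|).add (hX.div_const (η ^ 2))).const_mul ((n : ℝ) ^ 2)).add
    (hX.const_mul (2 / ε ^ 2 + |M|))).mono'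
    ((continuousOn_radialForce hf).aestronglyMeasurable measurableSet_Ioo)
    (ae_restrict_of_forall_mem measurableSet_Ioo fun r hr => ?_)
  refine (norm_radialForce_le hr.1).trans (add_le_add_left ?_ _)
  refine mul_le_mul_of_nonneg_left (norm_profile_div_le hη hr.1 fun hrη => ?_) (by positivity)
  simpa [abs_of_pos hr.1] using hbound ⟨hr.1, hrη⟩

lemma angMom_mode_of_ne_zero {F F' : ℝ → ℂ} (hn : n ≠ 0)
    (hF : ∀ r ∈ Ioo (0 : ℝ) 1, HasDerivAt F (F' r) r) (hx : x ∈ B1) :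
    angMom (mode F n) x = n * mode F n x := by
  rcases eq_or_ne x 0 with rfl | hx0
  · simp [angMom, mode, phase, hn]
  · exact angMom_mode hx0 (hF _ (norm_mem_Ioo hx hx0))

lemma angMom_perturb {w : Pt → ℂ} (hΨ : FiniteEnergy Ψ) (hw : FiniteEnergy w)
    (hΨn : angMom Ψ x = n * Ψ x) (hwn : angMom w x = n * w x) (hx : x ∈ B1) (t : ℝ) :
    angMom (perturb Ψ w t) x = n * perturb Ψ w t x := by
  rw [perturb_eq, hΨ.angMom_comb hw _ _ hx, hΨn, hwn]
  simp only [Pi.add_apply, Pi.smul_apply, Complex.real_smul]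
  ring

lemma isBigO_Ioo_of_isBigO_nhdsGT {E : Type*} [SeminormedAddCommGroup E] {g : ℝ → E} {k : ℕ}
    (hg : ContinuousOn g (Ioc 0 1)) (hO : g =O[𝓝[>] 0] fun r => r ^ k) :
    g =O[𝓟 (Ioo 0 1)] fun r => r ^ k := by
  obtain ⟨C, hC⟩ := hO.bound
  obtain ⟨η, hη, hbound⟩ := (nhdsGT_basis (0 : ℝ)).eventually_iff.1 hC
  have hsub : Icc η 1 ⊆ Ioc 0 1 := fun r hr => ⟨hη.trans_le hr.1, hr.2⟩
  have hinv : (fun _ : ℝ => (1 : ℝ)) =O[𝓟 (Icc η 1)] fun r => r ^ k :=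
    Asymptotics.isBigO_principal.2 ⟨(η ^ k)⁻¹, fun r hr => by
      have := hη.le.trans hr.1
      rw [norm_one, Real.norm_of_nonneg (by positivity), inv_mul_eq_div,
        one_le_div (by positivity)]
      gcongr
      exact hr.1⟩
  refine ((Asymptotics.isBigO_principal.2 ⟨C, fun r hr => hbound hr⟩).sup
    (((hg.mono hsub).isBigO_principal isCompact_Icc (by simp)).trans hinv)).mono ?_
  rw [sup_principal, principal_mono]
  exact fun r hr => (lt_or_ge r η).imp (fun h => ⟨hr.1, h⟩) fun h => ⟨h, hr.2.le⟩

lemma FiniteEnergy.mode_smul_const {φ : ℝ → ℝ} (hφ : ContDiff ℝ 1 φ)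
    (hφ0 : ∀ᶠ r in 𝓝 0, φ r = 0) (c : ℂ) : FiniteEnergy (mode (fun r => φ r • c) n) := by
  have hzero : (fun r => φ r • c) =ᶠ[𝓝[>] 0] 0 := by
    filter_upwards [hφ0.filter_mono nhdsWithin_le_nhds] with r hr using by simp [hr]
  refine .of_mode (F' := fun r => deriv φ r • c) (by simp [hφ0.self_of_nhds])
    (fun r _ => ((hφ.differentiable one_ne_zero r).hasDerivAt.smul_const c))
    (isBigO_Ioo_of_isBigO_nhdsGT (hφ.continuous.smul continuous_const).continuousOn
      (hzero.trans_isBigO (Asymptotics.isBigO_zero _ _))) ?_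
  exact ((((hφ.continuous_deriv le_rfl).smul continuous_const).continuousOn.isBigO_principal
    isCompact_Icc (by simp)).mono (principal_mono.2 Set.Ioo_subset_Icc_self))

lemma IsModeOn.integral_firstVariation (h : IsModeOn Ψ f n) {μ : ℝ}
    (hf : DifferentiableOn ℝ f (Ioo 0 1)) {φ : ℝ → ℝ} (hφ : ContDiff ℝ 1 φ) (c : ℂ) :
    ∫ x in B1, firstVariation ε Ω μ Ψ (mode (fun r => φ r • c) n) x =
      4 * π * ∫ r in (0 : ℝ)..1,
        ⟪c, deriv φ r • r • deriv f r + φ r • radialForce ε (μ + n * Ω) n f r⟫ := by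
  have hradial : ∀ x ∈ B1, x ≠ 0 → firstVariation ε Ω μ Ψ (mode (fun r => φ r • c) n) x =
      2 * (⟪deriv f ‖x‖, deriv φ ‖x‖ • c⟫ + ((n : ℝ) ^ 2 / ‖x‖ ^ 2 +
        potential ε (μ + n * Ω) f ‖x‖) * ⟪f ‖x‖, φ ‖x‖ • c⟫) := fun x hx hx0 => by
    have hfx := (hf.differentiableAt (isOpen_Ioo.mem_nhds (norm_mem_Ioo hx hx0))).hasDerivAt
    have hφx := (hφ.differentiable one_ne_zero ‖x‖).hasDerivAt.smul_const c
    have heq := h.eventuallyEq hx hx0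
    rw [← firstVariation_mode_mode hx0 hfx hφx]
    simp only [firstVariation, kineticForm_congr_left heq, kineticForm_congr_right heq,
      heq.eq_of_nhds]
  rw [integral_congr_ae (ae_restrict_B1_of_ne_zero hradial), setIntegral_B1_radial fun r =>
      2 * (⟪deriv f r, deriv φ r • c⟫ + ((n : ℝ) ^ 2 / r ^ 2 +
        potential ε (μ + n * Ω) f r) * ⟪f r, φ r • c⟫),
    show 4 * π = 2 * π * 2 by ring, mul_assoc (2 * π), ← intervalIntegral.integral_const_mul 2]
  congr 1
  refine intervalIntegral.integral_congr fun r _ => ?_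
  rcases eq_or_ne r 0 with rfl | hr
  · simp [radialForce]
  simp only [radialForce, inner_add_right, real_inner_smul_right, real_inner_comm c]
  field_simp

/-- `Ψ` minimizes the energy among the symmetric vortices of degree `n`. -/
structure IsVortexMinimizer (ε Ω : ℝ) (n : ℕ) (Ψ : Pt → ℂ) : Prop where
  adm : gpAdm Ψ
  angMom_eq : ∀ x ∈ B1, angMom Ψ x = n * Ψ x
  gpEnergy_le : ∀ Φ : Pt → ℂ, gpAdm Φ → (∀ x ∈ B1, angMom Φ x = n * Φ x) →
    gpEnergy ε Ω Ψ ≤ gpEnergy ε Ω Φ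

namespace IsVortexMinimizer

lemma finiteEnergy (h : IsVortexMinimizer ε Ω n Ψ) : FiniteEnergy Ψ := .of_gpAdm h.adm

lemma mass_eq_one (h : IsVortexMinimizer ε Ω n Ψ) : mass Ψ = 1 := h.adm.2.2.2.2.2

lemma integral_firstVariation_mode_eq_zero (h : IsVortexMinimizer ε Ω n Ψ) (hn : n ≠ 0)
    {φ : ℝ → ℝ} (hφ : ContDiff ℝ 1 φ) (hφ0 : ∀ᶠ r in 𝓝 0, φ r = 0) (c : ℂ) :
    ∫ x in B1, firstVariation ε Ω (chemicalPotential ε Ω Ψ) Ψ (mode (fun r => φ r • c) n) x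
      = 0 := by
  have hw : FiniteEnergy (mode (fun r => φ r • c) n) := .mode_smul_const hφ hφ0 c
  refine integral_firstVariation_eq_zero h.finiteEnergy hw h.mass_eq_one fun t ht =>
    h.gpEnergy_le _ (h.finiteEnergy.gpAdm_perturb hw ht) fun x hx => ?_
  exact angMom_perturb h.finiteEnergy hw (h.angMom_eq x hx) (angMom_mode_of_ne_zero hn
    (fun r _ => (hφ.differentiable one_ne_zero r).hasDerivAt.smul_const c) hx) hx t

lemma integral_deriv_smul_add_smul_radialForce (h : IsVortexMinimizer ε Ω n Ψ) (hn : n ≠ 0)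
    (hmode : IsModeOn Ψ f n) (hf : DifferentiableOn ℝ f (Ioo 0 1))
    (hforce : IntegrableOn (radialForce ε (chemicalPotential ε Ω Ψ + n * Ω) n f) (Ioo 0 1))
    {φ : ℝ → ℝ} (hφ : ContDiff ℝ 1 φ) (hφ0 : ∀ᶠ r in 𝓝 0, φ r = 0) :
    ∫ r in (0 : ℝ)..1, (deriv φ r • r • deriv f r +
      φ r • radialForce ε (chemicalPotential ε Ω Ψ + n * Ω) n f r) = 0 := by
  have hint := (intervalIntegrable_smul (hφ.continuous_deriv le_rfl)
    (hmode.integrableOn_smul_deriv h.finiteEnergy hf)).add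
    (intervalIntegrable_smul hφ.continuous hforce)
  refine ext_inner_left ℝ fun c => ?_
  have hweak := h.integral_firstVariation_mode_eq_zero hn hφ hφ0 c
  rw [hmode.integral_firstVariation hf hφ c, mul_eq_zero_iff_left (by positivity),
    intervalIntegral.integral_of_le zero_le_one] at hweak
  rw [inner_zero_right, intervalIntegral.integral_of_le zero_le_one]
  exact (integral_inner (𝕜 := ℝ) hint.1 c).symm.trans hweak

end IsVortexMinimizer

theorem IsVortexMinimizer.exists_isRadialVortex (h : IsVortexMinimizer ε Ω n Ψ) (hn : n ≠ 0) :
    ∃ f K, IsRadialVortex ε (chemicalPotential ε Ω Ψ + n * Ω) n f K ∧ IsModeOn Ψ f n := by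
  have hd := h.finiteEnergy.differentiableOn
  have hΨ0 : Ψ 0 = 0 := by
    simpa [angMom, hn] using (h.angMom_eq 0 (mem_B1_iff.2 (by simp))).symm
  have hmode : IsModeOn Ψ (profile Ψ) n := fun x => eq_mode_profile hd h.angMom_eq
  have hdiff : DifferentiableOn ℝ (profile Ψ) (Ioo 0 1) :=
    (differentiableOn_profile hd).mono (Set.Ioo_subset_Ioo_left (by norm_num))
  have hO := isBigO_profile hd hΨ0
  have hforce := hmode.integrableOn_radialForce (ε := ε) (M := chemicalPotential ε Ω Ψ + n * Ω)
    h.finiteEnergy hdiff.continuousOn hO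
  obtain ⟨K, hK, hK1, hderiv⟩ := exists_primitive_of_integrableOn hforce
    (continuousOn_radialForce hdiff.continuousOn)
  have hae := ae_eq_of_integral_deriv_smul_add_smul_eq_zero
    (hmode.integrableOn_smul_deriv h.finiteEnergy hdiff) hforce hK hK1 hderiv fun φ hφ hφ0 =>
      h.integral_deriv_smul_add_smul_radialForce hn hmode hdiff hforce hφ hφ0
  obtain ⟨f, hfeq, hf⟩ := exists_extension_hasDerivAt_div hdiff hK hae
  refine ⟨f, K, ⟨hK, hK1, hf, fun r hr => (hderiv r hr).congr_deriv ?_, ?_⟩, fun x hx hx0 => ?_⟩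
  · simp only [radialForce, potential, hfeq hr]
  · have heq : profile Ψ =ᶠ[𝓝[>] 0] f := by
      filter_upwards [Ioo_mem_nhdsGT one_pos] with r hr using (hfeq hr).symm
    simpa using isBigO_Ioo_of_isBigO_nhdsGT (k := 1)
      (fun r hr => (hf r hr.1).continuousAt.continuousWithinAt) (by simpa using hO.congr' heq .rfl)
  · rw [hmode x hx hx0, mode, mode, hfeq (norm_mem_Ioo hx hx0)]

end RadialEulerLagrange

section GrowthAtZero

variable {E : Type*} [NormedAddCommGroup E] [NormedSpace ℝ E] {g g' : ℝ → E} {k n p : ℕ}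

lemma tendsto_zero_of_isBigO_pow {G : Type*} [NormedAddCommGroup G] {g : ℝ → G} (hk : k ≠ 0)
    (hO : g =O[𝓟 (Ioo 0 1)] fun r => r ^ k) :
    Tendsto g (𝓝[>] 0) (𝓝 0) := by
  refine (hO.mono (le_principal_iff.2 (Ioo_mem_nhdsGT one_pos))).trans_tendsto ?_
  exact ((continuous_pow k).tendsto' (0 : ℝ) 0 (zero_pow hk)).mono_left nhdsWithin_le_nhds

lemma isBigO_of_pow_smul (hO : (fun r => r ^ n • g r) =O[𝓟 (Ioo 0 1)] fun r => r ^ (n + k)) :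
    g =O[𝓟 (Ioo 0 1)] fun r => r ^ k := by
  refine ((Asymptotics.isBigO_refl (fun r : ℝ => (r ^ n)⁻¹) _).smul hO).congr' ?_ ?_ <;>
    refine eventually_principal.2 fun r hr => ?_ <;> have := (pow_pos hr.1 n).ne'
  · exact inv_smul_smul₀ this _
  · simp only [pow_add, smul_eq_mul, inv_mul_cancel_left₀ this]

lemma isBigO_of_inv_pow_smul
    (hO : (fun r => (r ^ n)⁻¹ • g r) =O[𝓟 (Ioo 0 1)] fun r => r ^ k) :
    g =O[𝓟 (Ioo 0 1)] fun r => r ^ (n + k) := by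
  refine ((Asymptotics.isBigO_refl (fun r : ℝ => r ^ n) _).smul hO).congr' ?_ ?_ <;>
    refine eventually_principal.2 fun r hr => ?_
  · exact smul_inv_smul₀ (pow_pos hr.1 n).ne' _
  · simp only [pow_add, smul_eq_mul]

lemma exists_isBigO_sub_of_hasDerivAt [CompleteSpace E]
    (hg : ∀ r ∈ Ioo (0 : ℝ) 1, HasDerivAt g (g' r) r)
    (hO : g' =O[𝓟 (Ioo 0 1)] fun r => r ^ k) :
    ∃ c, (fun r => g r - c) =O[𝓟 (Ioo 0 1)] fun r => r ^ (k + 1) := by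
  obtain ⟨C, hC0, hC⟩ := hO.exists_nonneg
  have hC : ∀ r ∈ Ioo (0 : ℝ) 1, ‖g' r‖ ≤ C * r ^ k := fun r hr => by
    simpa [abs_of_pos hr.1] using Asymptotics.isBigOWith_principal.1 hC r hr
  have hLip : ∀ r (hr : r ∈ Ioo (0 : ℝ) 1),
      LipschitzOnWith ⟨C * r ^ k, mul_nonneg hC0 (pow_nonneg hr.1.le k)⟩ g (Ioc 0 r) := fun r hr =>
    (convex_Ioc 0 r).lipschitzOnWith_of_nnnorm_hasDerivWithin_le (f' := g')
      (fun s hs => (hg s ⟨hs.1, hs.2.trans_lt hr.2⟩).hasDerivWithinAt) fun s hs =>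
        NNReal.coe_le_coe.1 <| (hC s ⟨hs.1, hs.2.trans_lt hr.2⟩).trans
          (mul_le_mul_of_nonneg_left (pow_le_pow_left₀ hs.1.le hs.2 k) hC0)
  have hhalf : (2⁻¹ : ℝ) ∈ Ioo (0 : ℝ) 1 := by norm_num
  obtain ⟨c, hc⟩ : ∃ c, Tendsto g (𝓝[>] 0) (𝓝 c) := cauchy_map_iff_exists_tendsto.1 <|
    (cauchy_nhds.mono nhdsWithin_le_nhds).map_of_le (hLip _ hhalf).uniformContinuousOn
      (le_principal_iff.2 (Ioc_mem_nhdsGT hhalf.1))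
  refine ⟨c, Asymptotics.isBigO_principal.2 ⟨C, fun r hr => ?_⟩⟩
  refine le_of_tendsto (tendsto_const_nhds.sub hc).norm ?_
  filter_upwards [Ioc_mem_nhdsGT hr.1] with s hs
  calc ‖g r - g s‖ ≤ C * r ^ k * ‖r - s‖ := (hLip r hr).norm_sub_le ⟨hr.1, le_rfl⟩ hs
    _ ≤ C * r ^ k * r := by
        have := hr.1
        rw [Real.norm_of_nonneg (sub_nonneg.2 hs.2)]
        gcongr
        linarith [hs.1]
    _ = C * ‖r ^ (k + 1)‖ := by rw [Real.norm_of_nonneg (pow_pos hr.1 _).le]; ring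

lemma isBigO_pow_succ_of_hasDerivAt [CompleteSpace E]
    (hg : ∀ r ∈ Ioo (0 : ℝ) 1, HasDerivAt g (g' r) r)
    (hO : g' =O[𝓟 (Ioo 0 1)] fun r => r ^ k) (h0 : Tendsto g (𝓝[>] 0) (𝓝 0)) :
    g =O[𝓟 (Ioo 0 1)] fun r => r ^ (k + 1) := by
  obtain ⟨c, hc⟩ := exists_isBigO_sub_of_hasDerivAt hg hO
  have hlim := tendsto_zero_of_isBigO_pow k.succ_ne_zero hc
  have hc0 : c = 0 := by simpa using tendsto_nhds_unique (h0.sub_const c) hlim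
  simpa [hc0] using hc

lemma isBigO_inv_pow_of_hasDerivAt (hp : p ≠ 0) (hcont : ContinuousOn g (Ioc 0 1))
    (hg : ∀ r ∈ Ioo (0 : ℝ) 1, HasDerivAt g (g' r) r)
    (hO : g' =O[𝓟 (Ioo 0 1)] fun r => (r ^ (p + 1))⁻¹) :
    g =O[𝓟 (Ioo 0 1)] fun r => (r ^ p)⁻¹ := by
  obtain ⟨C, hC0, hC⟩ := hO.exists_nonneg
  refine Asymptotics.isBigO_principal.2 ⟨‖g 1‖ + C / p, fun r hr => ?_⟩
  have hB : ∀ s ∈ Icc r 1, HasDerivAt (fun s => C / p * ((r ^ p)⁻¹ - (s ^ p)⁻¹))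
      (C * (s ^ (p + 1))⁻¹) s := fun s hs => by
    have hs0 : s ≠ 0 := (hr.1.trans_le hs.1).ne'
    refine ((((hasDerivAt_pow p s).fun_inv (pow_ne_zero p hs0)).const_sub _).const_mul
      (C / p)).congr_deriv ?_
    obtain ⟨q, rfl⟩ := Nat.exists_eq_succ_of_ne_zero hp
    have : ((q + 1 : ℕ) : ℝ) ≠ 0 := by positivity
    simp only [Nat.succ_eq_add_one, Nat.add_sub_cancel]
    field_simp
    ring
  have hsub : ‖g 1 - g r‖ ≤ C / p * ((r ^ p)⁻¹ - ((1 : ℝ) ^ p)⁻¹) := by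
    refine image_norm_le_of_norm_deriv_right_le_deriv_boundary' (f := fun s => g s - g r)
      (f' := g') (B' := fun s => C * (s ^ (p + 1))⁻¹)
      ((hcont.mono fun s hs => ⟨hr.1.trans_le hs.1, hs.2⟩).sub continuousOn_const)
      (fun s hs => ((hg s ⟨hr.1.trans_le hs.1, hs.2⟩).sub_const _).hasDerivWithinAt) (by simp)
      (fun s hs => (hB s hs).continuousAt.continuousWithinAt)
      (fun s hs => (hB s ⟨hs.1, hs.2.le⟩).hasDerivWithinAt) (fun s hs => ?_) ⟨hr.2.le, le_rfl⟩
    have hs0 := hr.1.trans_le hs.1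
    simpa [abs_of_pos hs0] using Asymptotics.isBigOWith_principal.1 hC s ⟨hs0, hs.2⟩
  have hone : 1 ≤ (r ^ p)⁻¹ := (one_le_inv₀ (pow_pos hr.1 p)).2 (pow_le_one₀ hr.1.le hr.2.le)
  calc ‖g r‖ = ‖g 1 - (g 1 - g r)‖ := by rw [sub_sub_cancel]
    _ ≤ ‖g 1‖ + C / p * ((r ^ p)⁻¹ - ((1 : ℝ) ^ p)⁻¹) := (norm_sub_le _ _).trans (by gcongr)
    _ ≤ ‖g 1‖ * (r ^ p)⁻¹ + C / p * (r ^ p)⁻¹ := by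
        gcongr
        · exact le_mul_of_one_le_right (norm_nonneg _) hone
        · simp
    _ = (‖g 1‖ + C / p) * ‖(r ^ p)⁻¹‖ := by
        rw [Real.norm_of_nonneg (by linarith), add_mul]

end GrowthAtZero

section Regularity

variable {ε M : ℝ} {n j k : ℕ} {f K : ℝ → ℂ} {r : ℝ}

/-- The function `u = r f' - n f`, for which `2 ∂_z̄(f e^{inθ}) = r⁻¹ u e^{i(n+1)θ}`. -/
def dbarProfile (n : ℕ) (f K : ℝ → ℂ) (r : ℝ) : ℂ := K r - (n : ℝ) • f r

/-- The function `v = r f' + n f`, for which `2 ∂_z(f e^{inθ}) = r⁻¹ v e^{i(n-1)θ}`. -/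
def dProfile (n : ℕ) (f K : ℝ → ℂ) (r : ℝ) : ℂ := K r + (n : ℝ) • f r

lemma isBigO_pow_pow_of_le (hjk : j ≤ k) :
    (fun r : ℝ => r ^ k) =O[𝓟 (Ioo 0 1)] fun r => r ^ j :=
  Asymptotics.isBigO_principal.2 ⟨1, fun r hr => by
    simpa [abs_of_pos hr.1] using pow_le_pow_of_le_one hr.1.le hr.2.le hjk⟩

namespace IsRadialVortex

lemma hasDerivAt_dbarProfile (h : IsRadialVortex ε M n f K) (hr : r ∈ Ioo (0 : ℝ) 1) :
    HasDerivAt (dbarProfile n f K)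
      (-(n / r : ℝ) • dbarProfile n f K r + (r * potential ε M f r) • f r) r := by
  have := hr.1.ne'
  refine ((h.hasDerivAt_flux r hr).sub
    ((h.hasDerivAt_profile r hr.1).const_smul (n : ℝ))).congr_deriv ?_
  simp only [radialForce, dbarProfile, Complex.real_smul]
  push_cast
  ring

lemma hasDerivAt_dProfile (h : IsRadialVortex ε M n f K) (hr : r ∈ Ioo (0 : ℝ) 1) :
    HasDerivAt (dProfile n f K)
      ((n / r : ℝ) • dProfile n f K r + (r * potential ε M f r) • f r) r := by
  have := hr.1.ne'
  refine ((h.hasDerivAt_flux r hr).add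
    ((h.hasDerivAt_profile r hr.1).const_smul (n : ℝ))).congr_deriv ?_
  simp only [radialForce, dProfile, Complex.real_smul]
  push_cast
  ring

lemma hasDerivAt_pow_smul_dbarProfile (h : IsRadialVortex ε M n f K) (hn : n ≠ 0)
    (hr : r ∈ Ioo (0 : ℝ) 1) : HasDerivAt (fun r => r ^ n • dbarProfile n f K r)
      (r ^ n • (r * potential ε M f r) • f r) r := by
  obtain ⟨q, rfl⟩ := Nat.exists_eq_add_one_of_ne_zero hn
  have : (r : ℂ) ≠ 0 := mod_cast hr.1.ne'
  refine ((hasDerivAt_pow _ r).smul (h.hasDerivAt_dbarProfile hr)).congr_deriv ?_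
  simp only [Complex.real_smul]
  push_cast
  field_simp
  ring

lemma hasDerivAt_inv_pow_smul_dProfile (h : IsRadialVortex ε M n f K) (hn : n ≠ 0)
    (hr : r ∈ Ioo (0 : ℝ) 1) : HasDerivAt (fun r => (r ^ n)⁻¹ • dProfile n f K r)
      ((r ^ n)⁻¹ • (r * potential ε M f r) • f r) r := by
  obtain ⟨q, rfl⟩ := Nat.exists_eq_add_one_of_ne_zero hn
  have : (r : ℂ) ≠ 0 := mod_cast hr.1.ne'
  refine (((hasDerivAt_pow _ r).fun_inv (pow_ne_zero _ hr.1.ne')).smul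
    (h.hasDerivAt_dProfile hr)).congr_deriv ?_
  simp only [Complex.real_smul]
  push_cast
  field_simp
  ring

lemma isBigO_potential (h : IsRadialVortex ε M n f K) :
    potential ε M f =O[𝓟 (Ioo 0 1)] fun _ => (1 : ℝ) := by
  have hf : f =O[𝓟 (Ioo 0 1)] fun _ => (1 : ℝ) :=
    h.profile_isBigO.trans (by simpa using isBigO_pow_pow_of_le (Nat.zero_le 1))
  have hsq : (fun r => 2 * ‖f r‖ ^ 2 / ε ^ 2) =O[𝓟 (Ioo 0 1)] fun _ => (1 : ℝ) := by
    exact ((hf.norm_left.pow 2).const_mul_left (2 / ε ^ 2)).congr (fun r => by ring)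
      fun _ => one_pow 2
  exact hsq.sub (Asymptotics.isBigO_const_const M one_ne_zero _)

lemma isBigO_smul_potential (h : IsRadialVortex ε M n f K)
    (hO : f =O[𝓟 (Ioo 0 1)] fun r => r ^ j) :
    (fun r => (r * potential ε M f r) • f r) =O[𝓟 (Ioo 0 1)] fun r => r ^ (j + 1) :=
  (((Asymptotics.isBigO_refl (fun r : ℝ => r) _).mul h.isBigO_potential).smul hO).congr_right
    fun r => by rw [smul_eq_mul]; ring

lemma dbarProfile_isBigO (h : IsRadialVortex ε M n f K) (hn : n ≠ 0)
    (hO : f =O[𝓟 (Ioo 0 1)] fun r => r ^ j) :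
    dbarProfile n f K =O[𝓟 (Ioo 0 1)] fun r => r ^ (j + 2) := by
  have hK : K =O[𝓟 (Ioo 0 1)] fun r : ℝ => r ^ 0 :=
    ((h.continuous_flux.continuousOn.isBigO_principal isCompact_Icc (by simp)).mono
      (principal_mono.2 Set.Ioo_subset_Icc_self)).congr_right fun r => (pow_zero r).symm
  have hbounded : dbarProfile n f K =O[𝓟 (Ioo 0 1)] fun r => r ^ 0 :=
    hK.sub ((hO.trans (isBigO_pow_pow_of_le j.zero_le)).const_smul_left (n : ℝ))
  have hlim : Tendsto (fun r => r ^ n • dbarProfile n f K r) (𝓝[>] 0) (𝓝 0) :=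
    tendsto_zero_of_isBigO_pow hn <|
      ((Asymptotics.isBigO_refl (fun r : ℝ => r ^ n) _).smul hbounded).congr_right fun r => by simp
  refine isBigO_of_pow_smul (isBigO_pow_succ_of_hasDerivAt (k := n + (j + 1))
    (fun r hr => h.hasDerivAt_pow_smul_dbarProfile hn hr) ?_ hlim)
  exact ((Asymptotics.isBigO_refl (fun r : ℝ => r ^ n) _).smul
    (h.isBigO_smul_potential hO)).congr_right fun r => (pow_add r _ _).symm

lemma isBigO_inv_pow_smul_potential (h : IsRadialVortex ε M n f K)
    (hO : f =O[𝓟 (Ioo 0 1)] fun r => r ^ j) :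
    (fun r => (r ^ n)⁻¹ • (r * potential ε M f r) • f r) =O[𝓟 (Ioo 0 1)]
      fun r => (r ^ n)⁻¹ * r ^ (j + 1) :=
  (Asymptotics.isBigO_refl (fun r : ℝ => (r ^ n)⁻¹) _).smul (h.isBigO_smul_potential hO)

lemma profile_isBigO_of_dProfile (hn : n ≠ 0)
    (hd : dProfile n f K =O[𝓟 (Ioo 0 1)] fun r => r ^ k)
    (hdbar : dbarProfile n f K =O[𝓟 (Ioo 0 1)] fun r => r ^ k) :
    f =O[𝓟 (Ioo 0 1)] fun r => r ^ k := by
  refine ((hd.sub hdbar).const_smul_left (2 * n : ℝ)⁻¹).congr_left fun r => ?_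
  have : (n : ℂ) ≠ 0 := mod_cast hn
  simp only [Pi.smul_apply, dProfile, dbarProfile, Complex.real_smul]
  push_cast
  field_simp
  ring

lemma continuousOn_profile (h : IsRadialVortex ε M n f K) : ContinuousOn f (Ioc 0 1) :=
  fun r hr => (h.hasDerivAt_profile r hr.1).continuousAt.continuousWithinAt

lemma profile_isBigO_pow_succ (h : IsRadialVortex ε M n f K) (hj : j + 1 < n)
    (hO : f =O[𝓟 (Ioo 0 1)] fun r => r ^ j) : f =O[𝓟 (Ioo 0 1)] fun r => r ^ (j + 1) := by
  have hn : n ≠ 0 := (j.succ_pos.trans hj).ne'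
  obtain ⟨p, hp, hnp⟩ : ∃ p ≠ 0, n = j + 1 + p := ⟨n - (j + 1), by lia, by lia⟩
  have hpow : (fun r : ℝ => (r ^ n)⁻¹ * r ^ (j + 1)) =O[𝓟 (Ioo 0 1)]
      fun r => (r ^ (p + 1))⁻¹ := Asymptotics.isBigO_principal.2 ⟨1, fun r hr => by
    have := hr.1
    rw [one_mul, hnp, pow_add r (j + 1), mul_comm (r ^ (j + 1)), mul_inv, mul_assoc,
      inv_mul_cancel₀ (by positivity), mul_one, Real.norm_of_nonneg (by positivity),
      Real.norm_of_nonneg (by positivity)]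
    exact inv_anti₀ (by positivity) (pow_le_pow_of_le_one hr.1.le hr.2.le p.le_succ)⟩
  have hcont : ContinuousOn (fun r => (r ^ n)⁻¹ • dProfile n f K r) (Ioc 0 1) := by
    refine ((continuousOn_pow n).inv₀ fun r hr => pow_ne_zero n hr.1.ne').smul ?_
    exact h.continuous_flux.continuousOn.add (h.continuousOn_profile.const_smul (n : ℝ))
  have hd := isBigO_inv_pow_of_hasDerivAt hp hcont
    (fun r hr => h.hasDerivAt_inv_pow_smul_dProfile hn hr)
    ((h.isBigO_inv_pow_smul_potential hO).trans hpow)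
  refine profile_isBigO_of_dProfile hn ?_
    ((h.dbarProfile_isBigO hn hO).trans (isBigO_pow_pow_of_le (j + 1).le_succ))
  refine ((Asymptotics.isBigO_refl (fun r : ℝ => r ^ n) _).smul hd).congr' ?_ ?_ <;>
    refine eventually_principal.2 fun r hr => ?_ <;> have := hr.1.ne'
  · exact smul_inv_smul₀ (pow_ne_zero n this) _
  · simp only [hnp, pow_add r (j + 1), smul_eq_mul, mul_inv_cancel_right₀ (pow_ne_zero p this)]

lemma exists_dProfile_sub_isBigO_of_profile (h : IsRadialVortex ε M n f K) (hn : n ≠ 0)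
    (hj : j + 1 = n + k) (hO : f =O[𝓟 (Ioo 0 1)] fun r => r ^ j) :
    ∃ c : ℂ, (fun r => dProfile n f K r - r ^ n • c) =O[𝓟 (Ioo 0 1)]
      fun r => r ^ (n + (k + 1)) := by
  have hforce : (fun r => (r ^ n)⁻¹ • (r * potential ε M f r) • f r) =O[𝓟 (Ioo 0 1)]
      fun r => r ^ k := by
    refine (h.isBigO_inv_pow_smul_potential hO).congr' .rfl
      (eventually_principal.2 fun r hr => ?_)
    simp only [hj, pow_add, inv_mul_cancel_left₀ (pow_ne_zero n hr.1.ne')]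
  obtain ⟨c, hc⟩ := exists_isBigO_sub_of_hasDerivAt
    (fun r hr => h.hasDerivAt_inv_pow_smul_dProfile hn hr) hforce
  refine ⟨c, isBigO_of_inv_pow_smul (hc.congr' (eventually_principal.2 fun r hr => ?_) .rfl)⟩
  simp only [smul_sub, inv_smul_smul₀ (pow_ne_zero n hr.1.ne')]

lemma profile_isBigO_pow (h : IsRadialVortex ε M n f K) (hn : n ≠ 0) :
    f =O[𝓟 (Ioo 0 1)] fun r => r ^ n := by
  have hbootstrap : ∀ j, j + 1 < n → f =O[𝓟 (Ioo 0 1)] fun r => r ^ (j + 1) := fun j => by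
    induction j with
    | zero => exact fun _ => by simpa using h.profile_isBigO
    | succ j ih => exact fun hj => h.profile_isBigO_pow_succ hj (ih (by lia))
  obtain ⟨q, rfl⟩ := Nat.exists_eq_add_one_of_ne_zero hn
  have hO : f =O[𝓟 (Ioo 0 1)] fun r => r ^ q := by
    rcases q with - | q
    · exact h.profile_isBigO.trans (by simpa using isBigO_pow_pow_of_le (Nat.zero_le 1))
    · exact hbootstrap q (by lia)
  obtain ⟨c, hc⟩ := h.exists_dProfile_sub_isBigO_of_profile hn (k := 0) rfl hO
  have hpow : (fun r : ℝ => r ^ (q + 1) • c) =O[𝓟 (Ioo 0 1)] fun r => r ^ (q + 1) :=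
    ((Asymptotics.isBigO_refl (fun r : ℝ => r ^ (q + 1)) _).smul
      (Asymptotics.isBigO_const_const c one_ne_zero _)).congr_right fun r => mul_one _
  refine profile_isBigO_of_dProfile hn ?_
    ((h.dbarProfile_isBigO hn hO).trans (isBigO_pow_pow_of_le (q + 1).le_succ))
  simpa using (hc.trans (isBigO_pow_pow_of_le (Nat.le_add_right _ _))).add hpow

lemma dbarProfile_isBigO_pow (h : IsRadialVortex ε M n f K) (hn : n ≠ 0) :
    dbarProfile n f K =O[𝓟 (Ioo 0 1)] fun r => r ^ (n + 2) :=
  h.dbarProfile_isBigO hn (h.profile_isBigO_pow hn)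

lemma exists_dProfile_sub_isBigO_pow (h : IsRadialVortex ε M n f K) (hn : n ≠ 0) :
    ∃ c : ℂ, (fun r => dProfile n f K r - r ^ n • c) =O[𝓟 (Ioo 0 1)] fun r => r ^ (n + 2) :=
  h.exists_dProfile_sub_isBigO_of_profile hn rfl (h.profile_isBigO_pow hn)

end IsRadialVortex

end Regularity

section MaximumPrinciple

variable {ε Ω M : ℝ} {n : ℕ} {f K : ℝ → ℂ} {r : ℝ}

lemma exists_forall_le_of_eventually_lt {g : ℝ → ℝ} {a b r₁ : ℝ} (hg : ContinuousOn g (Ioc a b))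
    (hr₁ : r₁ ∈ Ioc a b) (hlt : ∀ᶠ r in 𝓝[>] a, g r < g r₁) :
    ∃ r₀ ∈ Ioc a b, ∀ r ∈ Ioc a b, g r ≤ g r₀ := by
  obtain ⟨c, hc, hlt⟩ := (mem_nhdsGT_iff_exists_Ioo_subset' hr₁.1).1 hlt
  have hcr : c ≤ r₁ := le_of_not_gt fun h => lt_irrefl (g r₁) (hlt ⟨hr₁.1, h⟩)
  obtain ⟨r₀, hr₀, hmax⟩ := isCompact_Icc.exists_isMaxOn (Set.nonempty_Icc.2 (hcr.trans hr₁.2))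
    (hg.mono fun r hr => ⟨lt_of_lt_of_le hc hr.1, hr.2⟩)
  refine ⟨r₀, ⟨lt_of_lt_of_le hc hr₀.1, hr₀.2⟩, fun r hr => ?_⟩
  rcases lt_or_ge r c with hrc | hrc
  · exact (hlt ⟨hr.1, hrc⟩).le.trans (hmax ⟨hcr, hr₁.2⟩)
  · exact hmax ⟨hrc, hr.2⟩

lemma lt_of_hasDerivAt_mul_of_deriv_pos {ρ σ a σ' : ℝ → ℝ} {l r : ℝ} (hlr : l < r)
    (hρ : ContinuousOn ρ (Icc l r)) (hρ' : ∀ s ∈ Ioo l r, HasDerivAt ρ (a s * σ s) s)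
    (ha : ∀ s ∈ Ioo l r, 0 < a s) (hσ : ContinuousOn σ (Icc l r))
    (hσ' : ∀ s ∈ Ioo l r, HasDerivAt σ (σ' s) s) (hpos : ∀ s ∈ Ioo l r, 0 < σ' s)
    (hr : σ r = 0) : ρ r < ρ l := by
  have hmono : StrictMonoOn σ (Icc l r) := strictMonoOn_of_deriv_pos (convex_Icc l r) hσ
    fun s hs => by
      rw [interior_Icc] at hs
      simpa only [(hσ' s hs).deriv] using hpos s hs
  refine strictAntiOn_of_deriv_neg (convex_Icc l r) hρ (fun s hs => ?_)
    (Set.left_mem_Icc.2 hlr.le) (Set.right_mem_Icc.2 hlr.le) hlr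
  rw [interior_Icc] at hs
  rw [(hρ' s hs).deriv]
  exact mul_neg_of_pos_of_neg (ha s hs)
    (hr ▸ hmono (Set.Ioo_subset_Icc_self hs) (Set.right_mem_Icc.2 hlr.le) hs.2)

namespace IsRadialVortex

lemma hasDerivAt_norm_sq (h : IsRadialVortex ε M n f K) (hr : 0 < r) :
    HasDerivAt (fun r => ‖f r‖ ^ 2) (2 / r * ⟪f r, K r⟫) r := by
  refine (h.hasDerivAt_profile r hr).norm_sq.congr_deriv ?_
  rw [div_eq_inv_mul (K r), ← Complex.ofReal_inv, ← Complex.real_smul, real_inner_smul_right]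
  ring

lemma hasDerivAt_inner_flux (h : IsRadialVortex ε M n f K) (hr : r ∈ Ioo (0 : ℝ) 1) :
    HasDerivAt (fun r => ⟪f r, K r⟫)
      (‖K r‖ ^ 2 / r + ((n : ℝ) ^ 2 / r + r * potential ε M f r) * ‖f r‖ ^ 2) r := by
  refine ((h.hasDerivAt_profile r hr.1).inner ℝ (h.hasDerivAt_flux r hr)).congr_deriv ?_
  rw [div_eq_inv_mul (K r), ← Complex.ofReal_inv, ← Complex.real_smul, real_inner_smul_left,
    radialForce, real_inner_smul_right, real_inner_self_eq_norm_sq, real_inner_self_eq_norm_sq]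
  ring

lemma hasDerivAt_potential (h : IsRadialVortex ε M n f K) (hr : 0 < r) :
    HasDerivAt (potential ε M f) (4 / (r * ε ^ 2) * ⟪f r, K r⟫) r := by
  refine ((((h.hasDerivAt_norm_sq hr).const_mul 2).div_const (ε ^ 2)).sub_const M).congr_deriv ?_
  field_simp
  ring

lemma inner_flux_eq_zero_of_forall_le (h : IsRadialVortex ε M n f K) (hr : r ∈ Ioc (0 : ℝ) 1)
    (hmax : ∀ s ∈ Ioc (0 : ℝ) 1, ‖f s‖ ^ 2 ≤ ‖f r‖ ^ 2) : ⟪f r, K r⟫ = 0 := by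
  rcases hr.2.eq_or_lt with rfl | hr1
  · rw [h.flux_one, inner_zero_right]
  · have hloc : IsLocalMax (fun s => ‖f s‖ ^ 2) r := by
      filter_upwards [isOpen_Ioo.mem_nhds ⟨hr.1, hr1⟩] with s hs using hmax s ⟨hs.1, hs.2.le⟩
    exact (mul_eq_zero.1 (hloc.hasDerivAt_eq_zero (h.hasDerivAt_norm_sq hr.1))).resolve_left
      (div_pos two_pos hr.1).ne'

lemma potential_le_of_forall_le (h : IsRadialVortex ε M n f K) (hr : r ∈ Ioc (0 : ℝ) 1)
    (hfr : f r ≠ 0) (hmax : ∀ s ∈ Ioc (0 : ℝ) 1, ‖f s‖ ^ 2 ≤ ‖f r‖ ^ 2) :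
    potential ε M f r ≤ -((n : ℝ) ^ 2 / r ^ 2) := by
  by_contra! hlt
  have hpos : ∀ᶠ s in 𝓝 r, 0 < s ∧ 0 < (n : ℝ) ^ 2 / s ^ 2 + potential ε M f s ∧ f s ≠ 0 := by
    have hcont : ContinuousAt (fun s => (n : ℝ) ^ 2 / s ^ 2 + potential ε M f s) r :=
      (by fun_prop (disch := exact pow_ne_zero _ hr.1.ne') :
        ContinuousAt (fun s : ℝ => (n : ℝ) ^ 2 / s ^ 2) r).add
        (h.hasDerivAt_potential hr.1).continuousAt
    exact (lt_mem_nhds hr.1).and ((hcont.eventually (lt_mem_nhds (by linarith))).and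
      ((h.hasDerivAt_profile r hr.1).continuousAt.eventually_ne hfr))
  obtain ⟨l, hlr, hl⟩ := mem_nhdsLE_iff_exists_Icc_subset.1 (mem_nhdsWithin_of_mem_nhds hpos)
  have hmem : ∀ s ∈ Ioo l r, s ∈ Ioo (0 : ℝ) 1 := fun s hs =>
    ⟨(hl (Set.Ioo_subset_Icc_self hs)).1, hs.2.trans_le hr.2⟩
  refine (hmax l ⟨(hl (Set.left_mem_Icc.2 (le_of_lt hlr))).1, (le_of_lt hlr).trans hr.2⟩).not_gt
    (lt_of_hasDerivAt_mul_of_deriv_pos hlr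
      (fun s hs => (h.hasDerivAt_norm_sq (hl hs).1).continuousAt.continuousWithinAt)
      (fun s hs => h.hasDerivAt_norm_sq (hmem s hs).1) (fun s hs => div_pos two_pos (hmem s hs).1)
      (fun s hs => ((h.hasDerivAt_profile s (hl hs).1).continuousAt.inner
        h.continuous_flux.continuousAt).continuousWithinAt)
      (fun s hs => h.hasDerivAt_inner_flux (hmem s hs)) (fun s hs => ?_)
      (h.inner_flux_eq_zero_of_forall_le hr hmax))
  obtain ⟨hs0, hs, hfs⟩ := hl (Set.Ioo_subset_Icc_self hs)
  have hforce : (n : ℝ) ^ 2 / s + s * potential ε M f s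
      = s * ((n : ℝ) ^ 2 / s ^ 2 + potential ε M f s) := by field_simp
  rw [hforce]
  positivity

lemma tendsto_norm_sq (h : IsRadialVortex ε M n f K) :
    Tendsto (fun r => ‖f r‖ ^ 2) (𝓝[>] 0) (𝓝 0) := by
  have := (tendsto_zero_of_isBigO_pow one_ne_zero (by simpa using h.profile_isBigO)).norm.pow 2
  simpa using this

lemma potential_le (h : IsRadialVortex ε M n f K) (hf : ∃ r₁ ∈ Ioc (0 : ℝ) 1, f r₁ ≠ 0)
    (hr : r ∈ Ioc (0 : ℝ) 1) : potential ε M f r ≤ -(n : ℝ) ^ 2 := by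
  obtain ⟨r₁, hr₁, hfr₁⟩ := hf
  have hr₁pos : 0 < ‖f r₁‖ ^ 2 := by positivity
  obtain ⟨r₀, hr₀, hmax⟩ := exists_forall_le_of_eventually_lt
    (fun r hr => (h.hasDerivAt_norm_sq hr.1).continuousAt.continuousWithinAt) hr₁
    (h.tendsto_norm_sq.eventually (gt_mem_nhds hr₁pos))
  have hfr₀ : f r₀ ≠ 0 := fun h0 => by simpa [h0] using hr₁pos.trans_le (hmax r₁ hr₁)
  calc potential ε M f r ≤ potential ε M f r₀ := by
        simp only [potential]
        gcongr ?_ / _ - _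
        exact mul_le_mul_of_nonneg_left (hmax r hr) zero_le_two
    _ ≤ -((n : ℝ) ^ 2 / r₀ ^ 2) := h.potential_le_of_forall_le hr₀ hfr₀ hmax
    _ ≤ -(n : ℝ) ^ 2 := neg_le_neg (le_div_self (sq_nonneg _) (pow_pos hr₀.1 2)
        (pow_le_one₀ hr₀.1.le hr₀.2))

lemma continuousOn_mul_norm_sq (h : IsRadialVortex ε M n f K) :
    ContinuousOn (fun r => r * ‖f r‖ ^ 2) (Icc 0 1) := by
  intro r hr
  rcases hr.1.eq_or_lt with rfl | hr0
  · have hlim : Tendsto (fun r => r * ‖f r‖ ^ 2) (𝓝[>] 0) (𝓝 (0 * 0)) :=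
      (tendsto_nhdsWithin_of_tendsto_nhds tendsto_id).mul h.tendsto_norm_sq
    have hright : ContinuousWithinAt (fun r => r * ‖f r‖ ^ 2) (Ioi 0) 0 := by
      simpa [ContinuousWithinAt] using hlim
    exact (continuousWithinAt_Ioi_iff_Ici.1 hright).mono Set.Icc_subset_Ici_self
  · exact (continuousAt_id.mul (h.hasDerivAt_norm_sq hr0).continuousAt).continuousWithinAt

lemma exists_ne_zero (hmass : 2 * π * ∫ r in 0..1, r * ‖f r‖ ^ 2 = 1) :
    ∃ r ∈ Ioc (0 : ℝ) 1, f r ≠ 0 := by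
  by_contra! hzero
  have hint : ∫ r in 0..1, r * ‖f r‖ ^ 2 = ∫ _ in (0 : ℝ)..1, (0 : ℝ) :=
    intervalIntegral.integral_congr_ae (.of_forall fun r hr => by
      rw [Set.uIoc_of_le zero_le_one] at hr
      simp [hzero r hr])
  simp [hint] at hmass

lemma lt_multiplier (h : IsRadialVortex ε M n f K) (hε : ε ≠ 0)
    (hmass : 2 * π * ∫ r in 0..1, r * ‖f r‖ ^ 2 = 1) : 2 / (π * ε ^ 2) < M - (n : ℝ) ^ 2 := by
  have hle : ∀ r ∈ Ioc (0 : ℝ) 1, ‖f r‖ ^ 2 ≤ ε ^ 2 / 2 * (M - (n : ℝ) ^ 2) := fun r hr => by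
    have := h.potential_le (exists_ne_zero hmass) hr
    rw [potential, sub_le_iff_le_add, div_le_iff₀ (by positivity)] at this
    linarith
  obtain ⟨r₁, hr₁, hfr₁⟩ := exists_ne_zero hmass
  have hpos : 0 < ε ^ 2 / 2 * (M - (n : ℝ) ^ 2) := lt_of_lt_of_le (by positivity) (hle r₁ hr₁)
  obtain ⟨c, hlt, hc0, hc1⟩ := ((h.tendsto_norm_sq.eventually (gt_mem_nhds hpos)).and
    (Ioo_mem_nhdsGT one_pos)).exists
  have hint := intervalIntegral.integral_lt_integral_of_continuousOn_of_le_of_exists_lt one_pos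
    h.continuousOn_mul_norm_sq
    (by fun_prop : ContinuousOn (fun r => r * (ε ^ 2 / 2 * (M - (n : ℝ) ^ 2))) (Icc 0 1))
    (fun r hr => mul_le_mul_of_nonneg_left (hle r hr) hr.1.le)
    ⟨c, ⟨hc0.le, hc1.le⟩, mul_lt_mul_of_pos_left hlt hc0⟩
  rw [intervalIntegral.integral_mul_const, integral_id] at hint
  rw [div_lt_iff₀ (by positivity)]
  nlinarith [pi_pos]

lemma four_mul_mul_lt (h : IsRadialVortex ε M n f K) (hε : ε ≠ 0) (hn : n ≠ 0)
    (hmass : 2 * π * ∫ r in 0..1, r * ‖f r‖ ^ 2 = 1)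
    (hΩ : Ω ≤ n / 2 + 1 / (2 * π * n * ε ^ 2)) : 4 * n * Ω < M + (n : ℝ) ^ 2 := by
  have hn' : (n : ℝ) ≠ 0 := Nat.cast_ne_zero.2 hn
  calc 4 * n * Ω ≤ 4 * n * (n / 2 + 1 / (2 * π * n * ε ^ 2)) := by gcongr
    _ = 2 * (n : ℝ) ^ 2 + 2 / (π * ε ^ 2) := by field_simp; ring
    _ < M + (n : ℝ) ^ 2 := by linarith [h.lt_multiplier hε hmass]

end IsRadialVortex

lemma IsModeOn.mass_eq {Ψ : Pt → ℂ} (h : IsModeOn Ψ f n) :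
    mass Ψ = 2 * π * ∫ r in 0..1, r * ‖f r‖ ^ 2 := by
  rw [mass, ← setIntegral_B1_radial]
  exact integral_congr_ae (ae_restrict_B1_of_ne_zero fun x hx hx0 => by
    simp only [h x hx hx0, norm_mode hx0])

end MaximumPrinciple

section RadialSecondVariation

variable {ε Ω M : ℝ} {n : ℕ} {f K : ℝ → ℂ} {r : ℝ}

/-- The profile of `e^{i(n+2)θ}` in the variation `2 (∂_z̄Ψ / z̄ + ∂_zΨ / z)` of
`Ψ = f(r) e^{inθ}`. -/
def dbarCoeff (n : ℕ) (f K : ℝ → ℂ) (r : ℝ) : ℂ := (r ^ 2)⁻¹ • dbarProfile n f K r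

/-- The profile of `e^{i(n-2)θ}` in the variation `2 (∂_z̄Ψ / z̄ + ∂_zΨ / z)` of
`Ψ = f(r) e^{inθ}`. -/
def dCoeff (n : ℕ) (f K : ℝ → ℂ) (r : ℝ) : ℂ := (r ^ 2)⁻¹ • dProfile n f K r

/-- The angular mean of the second variation at `f(r) e^{inθ}` in the direction
`a(r) e^{i(n+2)θ} + b(r) e^{i(n-2)θ}`, where `M = μ + nΩ` for the chemical potential `μ`. -/
def radialSecondVariation (ε Ω M : ℝ) (n : ℕ) (f a b : ℝ → ℂ) (r : ℝ) : ℝ :=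
  ‖deriv a r‖ ^ 2 + ‖deriv b r‖ ^ 2
    + (((n : ℝ) + 2) ^ 2 * ‖a r‖ ^ 2 + ((n : ℝ) - 2) ^ 2 * ‖b r‖ ^ 2) / r ^ 2
    - 2 * Ω * (‖a r‖ ^ 2 - ‖b r‖ ^ 2)
    + 4 * (‖f r‖ ^ 2 * (‖a r‖ ^ 2 + ‖b r‖ ^ 2) + ⟪f r ^ 2, a r * b r⟫) / ε ^ 2
    - M * (‖a r‖ ^ 2 + ‖b r‖ ^ 2)

/-- Up to a term of definite sign, a primitive of `r` times the angular mean of the second variation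
in the direction `2 (∂_z̄Ψ / z̄ + ∂_zΨ / z)`. -/
def secondVariationFlux (ε Ω M : ℝ) (n : ℕ) (f K : ℝ → ℂ) (r : ℝ) : ℝ :=
  4 * (n * (n - 2) * ⟪f r, K r⟫ - ‖dbarProfile n f K r‖ ^ 2) / r ^ 4
    + (2 * potential ε M f r * ⟪f r, K r⟫
      + ‖f r‖ ^ 2 * (potential ε M f r - M + 4 * n * Ω)) / r ^ 2

lemma norm_sq_dbarProfile : ‖dbarProfile n f K r‖ ^ 2 =
    ‖K r‖ ^ 2 - 2 * n * ⟪f r, K r⟫ + (n : ℝ) ^ 2 * ‖f r‖ ^ 2 := by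
  rw [dbarProfile, norm_sub_sq_real, norm_smul, mul_pow, Real.norm_natCast, real_inner_smul_right,
    real_inner_comm]
  ring

lemma norm_sq_dProfile : ‖dProfile n f K r‖ ^ 2 =
    ‖K r‖ ^ 2 + 2 * n * ⟪f r, K r⟫ + (n : ℝ) ^ 2 * ‖f r‖ ^ 2 := by
  rw [dProfile, norm_add_sq_real, norm_smul, mul_pow, Real.norm_natCast, real_inner_smul_right,
    real_inner_comm]
  ring

lemma inner_dbarProfile : ⟪dbarProfile n f K r, f r⟫ = ⟪f r, K r⟫ - n * ‖f r‖ ^ 2 := by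
  rw [dbarProfile, inner_sub_left, real_inner_smul_left, real_inner_self_eq_norm_sq,
    real_inner_comm]

lemma inner_dProfile : ⟪dProfile n f K r, f r⟫ = ⟪f r, K r⟫ + n * ‖f r‖ ^ 2 := by
  rw [dProfile, inner_add_left, real_inner_smul_left, real_inner_self_eq_norm_sq, real_inner_comm]

lemma inner_sq_sq (z w : ℂ) : ⟪z ^ 2, w ^ 2⟫ = 2 * ⟪z, w⟫ ^ 2 - ‖z‖ ^ 2 * ‖w‖ ^ 2 := by
  simp only [Complex.inner, Complex.sq_norm, Complex.normSq_apply, pow_two (_ : ℂ), map_mul,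
    Complex.mul_re, Complex.mul_im, Complex.conj_re, Complex.conj_im]
  ring

lemma inner_sq_dbarProfile_mul_dProfile : ⟪f r ^ 2, dbarProfile n f K r * dProfile n f K r⟫ =
    2 * ⟪f r, K r⟫ ^ 2 - ‖f r‖ ^ 2 * ‖K r‖ ^ 2 - (n : ℝ) ^ 2 * ‖f r‖ ^ 4 := by
  have hmul : dbarProfile n f K r * dProfile n f K r = K r ^ 2 - (n : ℝ) ^ 2 • f r ^ 2 := by
    simp only [dbarProfile, dProfile, Complex.real_smul]
    push_cast
    ring
  rw [hmul, inner_sub_right, real_inner_smul_right, inner_sq_sq, real_inner_self_eq_norm_sq,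
    norm_pow]
  ring

lemma two_mul_le_neg_div_pow_three {A ρ D : ℝ} (hr : r ∈ Ioo (0 : ℝ) 1) (hρ : 0 ≤ ρ)
    (hA : 0 ≤ A) (hD : D ≤ -A) : 2 * A * (r * ρ) ≤ -(2 * ρ * D) / r ^ 3 := by
  have hr0 := hr.1
  rw [le_div_iff₀ (by positivity)]
  calc 2 * A * (r * ρ) * r ^ 3 = 2 * ρ * A * r ^ 4 := by ring
    _ ≤ 2 * ρ * A * 1 := by gcongr; exact pow_le_one₀ hr.1.le hr.2.le
    _ ≤ -(2 * ρ * D) := by nlinarith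

namespace IsRadialVortex

lemma hasDerivAt_dbarCoeff (h : IsRadialVortex ε M n f K) (hr : r ∈ Ioo (0 : ℝ) 1) :
    HasDerivAt (dbarCoeff n f K) (-((n + 2) / r ^ 3 : ℝ) • dbarProfile n f K r
      + (potential ε M f r / r) • f r) r := by
  have : (r : ℂ) ≠ 0 := mod_cast hr.1.ne'
  refine (((hasDerivAt_pow 2 r).fun_inv (pow_ne_zero _ hr.1.ne')).smul
    (h.hasDerivAt_dbarProfile hr)).congr_deriv ?_
  simp only [Complex.real_smul]
  push_cast
  field_simp
  ring

lemma hasDerivAt_dCoeff (h : IsRadialVortex ε M n f K) (hr : r ∈ Ioo (0 : ℝ) 1) :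
    HasDerivAt (dCoeff n f K) (((n - 2) / r ^ 3 : ℝ) • dProfile n f K r
      + (potential ε M f r / r) • f r) r := by
  have : (r : ℂ) ≠ 0 := mod_cast hr.1.ne'
  refine (((hasDerivAt_pow 2 r).fun_inv (pow_ne_zero _ hr.1.ne')).smul
    (h.hasDerivAt_dProfile hr)).congr_deriv ?_
  simp only [Complex.real_smul]
  push_cast
  field_simp
  ring

lemma radialSecondVariation_coeff (h : IsRadialVortex ε M n f K) (hr : r ∈ Ioo (0 : ℝ) 1) :
    radialSecondVariation ε Ω M n f (dbarCoeff n f K) (dCoeff n f K) r =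
      2 * ((n + 2) ^ 2 * ‖dbarProfile n f K r‖ ^ 2
          + (n - 2) ^ 2 * ‖dProfile n f K r‖ ^ 2) / r ^ 6
        + 2 * potential ε M f r * ((n - 2) * ⟪dProfile n f K r, f r⟫
          - (n + 2) * ⟪dbarProfile n f K r, f r⟫) / r ^ 4
        + 2 * potential ε M f r ^ 2 * ‖f r‖ ^ 2 / r ^ 2
        + (potential ε M f r + 2 * ‖f r‖ ^ 2 / ε ^ 2) *
          (‖dbarProfile n f K r‖ ^ 2 + ‖dProfile n f K r‖ ^ 2) / r ^ 4
        - 2 * Ω * (‖dbarProfile n f K r‖ ^ 2 - ‖dProfile n f K r‖ ^ 2) / r ^ 4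
        + 4 * ⟪f r ^ 2, dbarProfile n f K r * dProfile n f K r⟫ / (ε ^ 2 * r ^ 4) := by
  simp only [radialSecondVariation, (h.hasDerivAt_dbarCoeff hr).deriv,
    (h.hasDerivAt_dCoeff hr).deriv, dbarCoeff, dCoeff, norm_comb_sq, norm_smul, mul_pow,
    Real.norm_eq_abs, sq_abs, smul_mul_smul_comm, real_inner_smul_right, potential]
  ring

lemma hasDerivAt_secondVariationFlux (h : IsRadialVortex ε M n f K) (hε : ε ≠ 0)
    (hr : r ∈ Ioo (0 : ℝ) 1) :
    HasDerivAt (secondVariationFlux ε Ω M n f K)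
      (r * radialSecondVariation ε Ω M n f (dbarCoeff n f K) (dCoeff n f K) r
        - 2 * ‖f r‖ ^ 2 * (potential ε M f r - M + 4 * n * Ω) / r ^ 3) r := by
  have hr0 := hr.1.ne'
  have hV := h.hasDerivAt_potential hr.1
  have hσ := h.hasDerivAt_inner_flux hr
  have hlead := ((hσ.const_mul (n * (n - 2) : ℝ)).fun_sub
    (h.hasDerivAt_dbarProfile hr).norm_sq).const_mul 4
  have hpot := ((hV.const_mul 2).fun_mul hσ).fun_add
    ((h.hasDerivAt_norm_sq hr.1).fun_mul ((hV.sub_const M).add_const (4 * n * Ω)))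
  refine ((hlead.fun_div (hasDerivAt_pow 4 r) (pow_ne_zero _ hr0)).add
    (hpot.fun_div (hasDerivAt_pow 2 r) (pow_ne_zero _ hr0))).congr_deriv ?_
  rw [h.radialSecondVariation_coeff hr]
  simp only [inner_add_right, real_inner_smul_right, real_inner_self_eq_norm_sq,
    inner_sq_dbarProfile_mul_dProfile, norm_sq_dbarProfile, norm_sq_dProfile, inner_dbarProfile,
    inner_dProfile, potential]
  field_simp
  ring

lemma inner_flux_isBigO (h : IsRadialVortex ε M n f K) (hn : n ≠ 0) :
    (fun r => ⟪f r, K r⟫) =O[𝓟 (Ioo 0 1)] fun r => r ^ (2 * n) := by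
  have hf := h.profile_isBigO_pow hn
  have hK : K =O[𝓟 (Ioo 0 1)] fun r => r ^ n := by
    refine (((h.dbarProfile_isBigO_pow hn).trans (isBigO_pow_pow_of_le le_self_add)).add
      (hf.const_smul_left (n : ℝ))).congr_left fun r => ?_
    simp only [dbarProfile, Pi.smul_apply, sub_add_cancel]
  exact (Asymptotics.IsBigO.of_norm_le fun r => norm_inner_le_norm (𝕜 := ℝ) (f r) (K r)).trans
    ((hf.norm_left.mul hK.norm_left).congr_right fun r => by ring)

lemma secondVariationFlux_isBigO (h : IsRadialVortex ε M n f K) (hn : 2 ≤ n) :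
    secondVariationFlux ε Ω M n f K =O[𝓟 (Ioo 0 1)] fun r => r ^ 2 := by
  have hn0 : n ≠ 0 := by lia
  have hσ := h.inner_flux_isBigO hn0
  have hlead : (fun r => 4 * (n * (n - 2) * ⟪f r, K r⟫ - ‖dbarProfile n f K r‖ ^ 2))
      =O[𝓟 (Ioo 0 1)] fun r => r ^ 6 := by
    refine (Asymptotics.IsBigO.sub ?_ ?_).const_mul_left 4
    · rcases hn.eq_or_lt with rfl | hn
      · simpa using Asymptotics.isBigO_zero _ _
      · exact (hσ.trans (isBigO_pow_pow_of_le (by lia))).const_mul_left _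
    · exact (((h.dbarProfile_isBigO_pow hn0).norm_left.pow 2).congr_right fun r =>
        (pow_mul r _ 2).symm).trans (isBigO_pow_pow_of_le (by lia))
  have hpot : (fun r => 2 * potential ε M f r * ⟪f r, K r⟫ +
      ‖f r‖ ^ 2 * (potential ε M f r - M + 4 * n * Ω)) =O[𝓟 (Ioo 0 1)] fun r => r ^ 4 := by
    have hρ := ((h.profile_isBigO_pow hn0).norm_left.pow 2).congr_right fun r =>
      (pow_mul r n 2).symm.trans (by rw [mul_comm])
    have hV := h.isBigO_potential
    have hV' : (fun r => potential ε M f r - M + 4 * n * Ω) =O[𝓟 (Ioo 0 1)] fun _ => (1 : ℝ) :=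
      (hV.sub (Asymptotics.isBigO_const_const M one_ne_zero _)).add
        (Asymptotics.isBigO_const_const (4 * n * Ω) one_ne_zero _)
    refine (((hV.const_mul_left 2).mul hσ).add ((hρ.mul hV').congr_right fun r => ?_)).trans
      ((isBigO_pow_pow_of_le (by lia)).congr_left fun r => (one_mul _).symm)
    exact mul_comm _ _
  refine isBigO_of_pow_smul (n := 4) ((hlead.add
    (((Asymptotics.isBigO_refl (fun r : ℝ => r ^ 2) _).mul hpot).congr_right
      fun r => (pow_add r 2 4).symm)).congr' ?_ .rfl)
  refine eventually_principal.2 fun r hr => ?_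
  have := hr.1.ne'
  simp only [secondVariationFlux, smul_eq_mul]
  field_simp

lemma continuousOn_secondVariationFlux (h : IsRadialVortex ε M n f K) (hn : 2 ≤ n) :
    ContinuousOn (secondVariationFlux ε Ω M n f K) (Icc 0 1) := by
  intro r hr
  rcases hr.1.eq_or_lt with rfl | hr0
  · have hright : ContinuousWithinAt (secondVariationFlux ε Ω M n f K) (Ioi 0) 0 := by
      simpa [ContinuousWithinAt, secondVariationFlux] using
        tendsto_zero_of_isBigO_pow two_ne_zero (h.secondVariationFlux_isBigO hn)
    exact (continuousWithinAt_Ioi_iff_Ici.1 hright).mono Set.Icc_subset_Ici_self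
  · have hf := (h.hasDerivAt_profile r hr0).continuousAt
    have hK := h.continuous_flux.continuousAt (x := r)
    have hV := (h.hasDerivAt_potential hr0).continuousAt
    have hu : ContinuousAt (dbarProfile n f K) r := hK.sub (hf.const_smul (n : ℝ))
    have : ContinuousAt (fun r => ⟪f r, K r⟫) r := hf.inner hK
    unfold secondVariationFlux
    exact ContinuousAt.continuousWithinAt
      (by fun_prop (disch := exact pow_ne_zero _ hr0.ne'))

lemma integral_radialSecondVariation_neg (h : IsRadialVortex ε M n f K) (hε : ε ≠ 0)
    (hn : 2 ≤ n) (hΩ : 4 * n * Ω < M + (n : ℝ) ^ 2)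
    (hmass : 2 * π * ∫ r in 0..1, r * ‖f r‖ ^ 2 = 1)
    (hint : IntegrableOn (fun r =>
      r * radialSecondVariation ε Ω M n f (dbarCoeff n f K) (dCoeff n f K) r) (Ioo 0 1)) :
    ∫ r in 0..1, r * radialSecondVariation ε Ω M n f (dbarCoeff n f K) (dCoeff n f K) r < 0 := by
  obtain ⟨A, hApos, hA⟩ : ∃ A, 0 < A ∧ M + (n : ℝ) ^ 2 - 4 * n * Ω = A :=
    ⟨_, by linarith, rfl⟩
  have hV : ∀ r ∈ Ioc (0 : ℝ) 1, potential ε M f r - M + 4 * n * Ω ≤ -A := fun r hr => by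
    linarith [h.potential_le (exists_ne_zero hmass) hr]
  have hintρ : IntegrableOn (fun r => 2 * A * (r * ‖f r‖ ^ 2)) (Icc 0 1) :=
    (h.continuousOn_mul_norm_sq.const_mul _).integrableOn_Icc
  replace hint := (integrableOn_Icc_iff_integrableOn_Ioo (by simp) (by simp)).2 hint
  have hle := intervalIntegral.integral_le_sub_of_hasDeriv_right_of_le zero_le_one
    (h.continuousOn_secondVariationFlux (Ω := Ω) hn)
    (fun r hr => (h.hasDerivAt_secondVariationFlux hε hr).hasDerivWithinAt) (hint.add hintρ)
    fun r hr => ?_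
  · have hsplit := intervalIntegral.integral_add
      ((intervalIntegrable_iff_integrableOn_Icc_of_le zero_le_one).2 hint)
      ((intervalIntegrable_iff_integrableOn_Icc_of_le zero_le_one).2 hintρ)
    have hone : secondVariationFlux ε Ω M n f K 1 ≤ 0 := by
      have := mul_le_mul_of_nonneg_left (hV 1 ⟨one_pos, le_rfl⟩) (sq_nonneg ‖f 1‖)
      simp only [secondVariationFlux, h.flux_one, inner_zero_right]
      nlinarith [sq_nonneg ‖f 1‖, sq_nonneg ‖dbarProfile n f K 1‖]
    have hzero : secondVariationFlux ε Ω M n f K 0 = 0 := by simp [secondVariationFlux]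
    rw [intervalIntegral.integral_const_mul] at hsplit
    have hpos : 0 < ∫ r in 0..1, r * ‖f r‖ ^ 2 :=
      pos_of_mul_pos_right (hmass.symm ▸ one_pos) two_pi_pos.le
    simp only [Pi.add_apply] at hle
    nlinarith [mul_pos hApos hpos]
  · rw [Pi.add_apply, sub_eq_add_neg, ← neg_div, add_le_add_iff_left]
    exact two_mul_le_neg_div_pow_three hr (sq_nonneg _) hApos.le (hV r ⟨hr.1, hr.2.le⟩)

end IsRadialVortex

end RadialSecondVariation

section Rotations

variable {ε Ω μ : ℝ} {α : ℂ} {Ψ w : Pt → ℂ} {x : Pt} {c : Circle}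

lemma fderiv_rotate (h : Ψ ∘ rotate c =ᶠ[𝓝 x] α • Ψ) (v : Pt) :
    fderiv ℝ Ψ (rotate c x) (rotate c v) = α * fderiv ℝ Ψ x v := by
  have heq := h.fderiv_eq (𝕜 := ℝ)
  rw [fderiv_const_smul_field, Pi.smul_apply] at heq
  have hcomp := (rotate c).toContinuousLinearEquiv.comp_right_fderiv (𝕜 := ℝ) (f := Ψ) (x := x)
  exact DFunLike.congr_fun (hcomp.symm.trans heq) v

lemma euler_rotate (h : Ψ ∘ rotate c =ᶠ[𝓝 x] α • Ψ) :
    euler Ψ (rotate c x) = α * euler Ψ x :=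
  fderiv_rotate h x

lemma angMom_rotate (h : Ψ ∘ rotate c =ᶠ[𝓝 x] α • Ψ) :
    angMom Ψ (rotate c x) = α * angMom Ψ x := by
  have htangent : zcoord.symm (Complex.I * zcoord (rotate c x)) =
      rotate c (zcoord.symm (Complex.I * zcoord x)) := zcoord.injective <| by
    simp only [zcoord_rotate, zcoord.apply_symm_apply]
    ring
  rw [angMom_eq_fderiv, angMom_eq_fderiv, htangent, fderiv_rotate h]
  ring

lemma inner_mul_mul (hα : ‖α‖ = 1) (z v : ℂ) : ⟪α * z, α * v⟫ = ⟪z, v⟫ := by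
  have hsq : Complex.normSq α = 1 := by rw [Complex.normSq_eq_norm_sq, hα, one_pow]
  rw [Complex.normSq_apply] at hsq
  simp only [Complex.inner, map_mul, Complex.mul_re, Complex.mul_im, Complex.conj_re,
    Complex.conj_im]
  linear_combination (z.re * v.re + z.im * v.im) * hsq

lemma inner_mul_neg_mul (hα : ‖α‖ = 1) (z v : ℂ) : ⟪α * z, -α * v⟫ = -⟪z, v⟫ := by
  rw [neg_mul, inner_neg_right, inner_mul_mul hα]

lemma kineticForm_rotate (hx : x ≠ 0) (hα : ‖α‖ = 1) (hΨ : Ψ ∘ rotate c =ᶠ[𝓝 x] α • Ψ)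
    (hw : w ∘ rotate c =ᶠ[𝓝 x] (-α) • w) :
    kineticForm Ω Ψ w (rotate c x) = -kineticForm Ω Ψ w x := by
  have hgrad : gradInner Ψ w (rotate c x) = -gradInner Ψ w x := by
    have h := norm_sq_mul_gradInner Ψ w (rotate c x)
    rw [euler_rotate hΨ, euler_rotate hw, angMom_rotate hΨ, angMom_rotate hw,
      inner_mul_neg_mul hα, inner_mul_neg_mul hα, ← neg_add, ← norm_sq_mul_gradInner,
      LinearIsometryEquiv.norm_map, ← mul_neg] at h
    exact mul_left_cancel₀ (by simpa using hx) h
  have hΨx : Ψ (rotate c x) = α * Ψ x := hΨ.eq_of_nhds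
  rw [kineticForm, hgrad, hΨx, angMom_rotate hw, inner_mul_neg_mul hα, kineticForm]
  ring

lemma firstVariation_rotate (hx : x ≠ 0) (hα : ‖α‖ = 1) (hΨ : Ψ ∘ rotate c =ᶠ[𝓝 x] α • Ψ)
    (hw : w ∘ rotate c =ᶠ[𝓝 x] (-α) • w) :
    firstVariation ε Ω μ Ψ w (rotate c x) = -firstVariation ε Ω μ Ψ w x := by
  have hΨx : Ψ (rotate c x) = α * Ψ x := hΨ.eq_of_nhds
  have hwx : w (rotate c x) = -α * w x := hw.eq_of_nhds
  have hswap := kineticForm_rotate (Ω := Ω) hx (norm_neg α ▸ hα) hw (by rwa [neg_neg])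
  rw [firstVariation, kineticForm_rotate hx hα hΨ hw, hswap, hΨx, hwx, inner_mul_neg_mul hα,
    norm_mul, hα, firstVariation]
  ring

lemma setIntegral_B1_eq_zero_of_rotate {F : Pt → ℝ} (c : Circle)
    (h : ∀ x ∈ B1, x ≠ 0 → F (rotate c x) = -F x) : ∫ x in B1, F x = 0 := by
  have hneg : ∫ x in B1, F (rotate c x) = -∫ x in B1, F x := by
    rw [← integral_neg]
    exact integral_congr_ae (ae_restrict_B1_of_ne_zero h)
  rw [setIntegral_B1_comp_isometry] at hneg
  linarith

lemma integrableOn_B1_comp_isometry (R : Pt ≃ₗᵢ[ℝ] Pt) {F : Pt → ℝ} (hF : IntegrableOn F B1) :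
    IntegrableOn (fun x => F (R x)) B1 := by
  have h := (R.measurePreserving.integrableOn_comp_preimage
    R.toHomeomorph.measurableEmbedding).2 hF
  rwa [show R ⁻¹' B1 = B1 by ext x; simp [mem_B1_iff]] at h

end Rotations

section AngularMean

variable {ε Ω μ : ℝ} {m n k l : ℕ} {a b f : ℝ → ℂ} {a' b' : ℂ} {Ψ w : Pt → ℂ} {x : Pt}

lemma norm_sq_mul_secondVariation_of_eventuallyEq (hx : x ≠ 0) (ha : HasDerivAt a a' ‖x‖)
    (hb : HasDerivAt b b' ‖x‖) (hw : w =ᶠ[𝓝 x] mode a k + mode b l) {A B A' B' : ℂ}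
    (hA : mode a k x = A) (hB : mode b l x = B) (hA' : a' * phase x ^ k = A')
    (hB' : b' * phase x ^ l = B') :
    ‖x‖ ^ 2 * secondVariation ε Ω μ Ψ w x = ‖x‖ ^ 2 * ‖A' + B'‖ ^ 2
      + ‖(k : ℝ) • A + (l : ℝ) • B‖ ^ 2 + ‖x‖ ^ 2 * (-Ω * ⟪A + B, (k : ℝ) • A + (l : ℝ) • B⟫
      + (4 * ⟪Ψ x, A + B⟫ ^ 2 + 2 * ‖Ψ x‖ ^ 2 * ‖A + B‖ ^ 2) / ε ^ 2 - μ * ‖A + B‖ ^ 2) := by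
  have hfderiv : fderiv ℝ w x = fderiv ℝ (mode a k) x + fderiv ℝ (mode b l) x := by
    rw [hw.fderiv_eq, fderiv_add (differentiableAt_mode hx ha) (differentiableAt_mode hx hb)]
  have hwx : w x = A + B := by rw [hw.eq_of_nhds, Pi.add_apply, hA, hB]
  have heuler : euler w x = ‖x‖ • (A' + B') := by
    have : euler w x = euler (mode a k) x + euler (mode b l) x := congrArg (· x) hfderiv
    rw [this, euler_mode hx ha, euler_mode hx hb, ← hA', ← hB', Complex.real_smul]
    ring
  have hang : angMom w x = (k : ℝ) • A + (l : ℝ) • B := by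
    have : angMom w x = angMom (mode a k) x + angMom (mode b l) x := by
      simp only [angMom_eq_fderiv, hfderiv, add_apply, mul_add]
    rw [this, angMom_mode hx ha, angMom_mode hx hb, hA, hB]
    simp
  have hgrad := norm_sq_mul_gradInner w w x
  rw [heuler, hang, real_inner_self_eq_norm_sq, real_inner_self_eq_norm_sq, norm_smul, mul_pow,
    norm_norm] at hgrad
  rw [secondVariation, kineticForm, hang, hwx]
  linear_combination hgrad

lemma inner_add_sq_add_inner_I_mul_sub_sq (z A B : ℂ) :
    ⟪z, A + B⟫ ^ 2 + ⟪z, Complex.I * (A - B)⟫ ^ 2 =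
      ‖z‖ ^ 2 * (‖A‖ ^ 2 + ‖B‖ ^ 2) + 2 * ⟪z ^ 2, A * B⟫ := by
  simp only [Complex.inner, Complex.sq_norm, Complex.normSq_apply, pow_two (_ : ℂ), map_mul,
    Complex.mul_re, Complex.mul_im, Complex.conj_re, Complex.conj_im, Complex.add_re,
    Complex.add_im, Complex.sub_re, Complex.sub_im, Complex.I_re, Complex.I_im]
  ring

lemma inner_mode_sq_mode_mul_mode (hx : x ≠ 0) :
    ⟪mode f (m + 2) x ^ 2, mode a (m + 4) x * mode b m x⟫ = ⟪f ‖x‖ ^ 2, a ‖x‖ * b ‖x‖⟫ := by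
  rw [← inner_mode_mode (F := fun r => f r ^ 2) (G := fun r => a r * b r) (m := 2 * m + 4) hx]
  simp only [mode]
  congr 1 <;> ring

lemma inner_add_add_inner_sub_sub (A B : ℂ) (p q : ℝ) :
    ⟪A + B, p • A + q • B⟫ + ⟪A - B, p • A - q • B⟫ = 2 * (p * ‖A‖ ^ 2 + q * ‖B‖ ^ 2) := by
  simp only [inner_add_left, inner_sub_left, inner_add_right, inner_sub_right,
    real_inner_smul_right, real_inner_self_eq_norm_sq]
  ring

lemma norm_sq_mul_secondVariation_rotate {c : Circle} (hc : (c : ℂ) ^ 2 = Complex.I) (hx : x ≠ 0)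
    (ha : HasDerivAt a a' ‖x‖) (hb : HasDerivAt b b' ‖x‖)
    (hΨ : Ψ (rotate c x) = mode f (m + 2) (rotate c x))
    (hw : w =ᶠ[𝓝 (rotate c x)] mode a (m + 4) + mode b m) {A B A' B' : ℂ}
    (hA : mode a (m + 4) x = A) (hB : mode b m x = B) (hA' : a' * phase x ^ (m + 4) = A')
    (hB' : b' * phase x ^ m = B') :
    ‖x‖ ^ 2 * secondVariation ε Ω μ Ψ w (rotate c x) = ‖x‖ ^ 2 * ‖A' - B'‖ ^ 2
      + ‖((m + 4 : ℕ) : ℝ) • A - (m : ℝ) • B‖ ^ 2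
      + ‖x‖ ^ 2 * (-Ω * ⟪A - B, ((m + 4 : ℕ) : ℝ) • A - (m : ℝ) • B⟫
      + (4 * ⟪mode f (m + 2) x, Complex.I * (A - B)⟫ ^ 2
      + 2 * ‖mode f (m + 2) x‖ ^ 2 * ‖A - B‖ ^ 2) / ε ^ 2 - μ * ‖A - B‖ ^ 2) := by
  obtain ⟨β, hβ⟩ : ∃ β, (c : ℂ) ^ (m + 2) = β := ⟨_, rfl⟩
  have hβ1 : ‖β‖ = 1 := by rw [← hβ, norm_pow, Circle.norm_coe, one_pow]
  have hpos : (c : ℂ) ^ (m + 4) = β * Complex.I := by rw [← hβ, ← hc]; ring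
  have hneg : (c : ℂ) ^ m = -(β * Complex.I) := by
    rw [← hβ, pow_add, hc, mul_assoc, Complex.I_mul_I]
    ring
  have hnorm : ‖rotate c x‖ = ‖x‖ := LinearIsometryEquiv.norm_map _ _
  have h := norm_sq_mul_secondVariation_of_eventuallyEq (ε := ε) (Ω := Ω) (μ := μ) (Ψ := Ψ)
    (norm_ne_zero_iff.1 (hnorm.trans_ne (norm_ne_zero_iff.2 hx))) (hnorm ▸ ha) (hnorm ▸ hb) hw
    (A := β * (Complex.I * A)) (B := β * (Complex.I * -B)) (A' := β * (Complex.I * A'))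
    (B' := β * (Complex.I * -B')) (by rw [mode_rotate, hpos, hA, mul_assoc])
    (by rw [mode_rotate, hneg, hB]; ring) (by rw [phase_rotate, mul_pow, hpos, ← hA']; ring)
    (by rw [phase_rotate, mul_pow, hneg, ← hB']; ring)
  have hI := Complex.norm_I
  simpa only [hΨ, mode_rotate, hβ, hnorm, ← mul_smul_comm, ← mul_add, smul_neg, ← sub_eq_add_neg,
    norm_mul, hβ1, hI, one_mul, inner_mul_mul hβ1, inner_mul_mul hI] using h

-- Rotating by `π / 4` turns `A + B` into a multiple of `i (A - B)`, so the cross terms cancel.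
lemma secondVariation_add_rotate {c : Circle} (hc : (c : ℂ) ^ 2 = Complex.I) (hx : x ≠ 0)
    (ha : HasDerivAt a a' ‖x‖) (hb : HasDerivAt b b' ‖x‖)
    (hΨ : ∀ y, ‖y‖ = ‖x‖ → Ψ y = mode f (m + 2) y)
    (hw : ∀ y, ‖y‖ = ‖x‖ → w =ᶠ[𝓝 y] mode a (m + 4) + mode b m) :
    secondVariation ε Ω μ Ψ w x + secondVariation ε Ω μ Ψ w (rotate c x) =
      2 * radialSecondVariation ε Ω (μ + (m + 2 : ℕ) * Ω) (m + 2) f a b ‖x‖ := by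
  have hnorm : ‖rotate c x‖ = ‖x‖ := LinearIsometryEquiv.norm_map _ _
  have hr : ‖x‖ ^ 2 ≠ 0 := pow_ne_zero _ (norm_ne_zero_iff.2 hx)
  have h := norm_sq_mul_secondVariation_of_eventuallyEq (ε := ε) (Ω := Ω) (μ := μ) (Ψ := Ψ)
    hx ha hb (hw x rfl) rfl rfl rfl rfl
  have h' := norm_sq_mul_secondVariation_rotate (ε := ε) (Ω := Ω) (μ := μ) hc hx ha hb
    (hΨ _ hnorm) (hw _ hnorm) rfl rfl rfl rfl
  rw [hΨ x rfl] at h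
  have hpar : ∀ z v : ℂ, ‖z + v‖ ^ 2 + ‖z - v‖ ^ 2 = 2 * (‖z‖ ^ 2 + ‖v‖ ^ 2) := fun z v => by
    simpa only [sq] using parallelogram_law_with_norm ℝ z v
  have hcross := inner_add_sq_add_inner_I_mul_sub_sq (mode f (m + 2) x) (mode a (m + 4) x)
    (mode b m x)
  have hang := inner_add_add_inner_sub_sub (mode a (m + 4) x) (mode b m x) (m + 4 : ℕ) m
  have hmass := hpar (mode a (m + 4) x) (mode b m x)
  have hrad := hpar (a' * phase x ^ (m + 4)) (b' * phase x ^ m)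
  have htan := hpar (((m + 4 : ℕ) : ℝ) • mode a (m + 4) x) ((m : ℝ) • mode b m x)
  rw [inner_mode_sq_mode_mul_mode hx] at hcross
  simp only [norm_mul, norm_smul, norm_pow, norm_phase hx, norm_mode hx, one_pow, mul_one, mul_pow,
    Real.norm_natCast] at hcross hang hmass hrad htan h h'
  have hdiv := mul_div_cancel₀ ((((m + 2 : ℕ) : ℝ) + 2) ^ 2 * ‖a ‖x‖‖ ^ 2 +
    (((m + 2 : ℕ) : ℝ) - 2) ^ 2 * ‖b ‖x‖‖ ^ 2) hr
  refine mul_left_cancel₀ hr ?_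
  rw [radialSecondVariation, ha.deriv, hb.deriv]
  push_cast at *
  linear_combination h + h' + ‖x‖ ^ 2 * hrad + htan - 2 * hdiv + ‖x‖ ^ 2 * (-Ω * hang
    + 4 * hcross / ε ^ 2 + 2 * ‖f ‖x‖‖ ^ 2 * hmass / ε ^ 2 - μ * hmass)

lemma exists_circle_sq_eq_I : ∃ c : Circle, (c : ℂ) ^ 2 = Complex.I := by
  refine ⟨Circle.exp (π / 4), ?_⟩
  have harg : (2 : ℕ) * ((π / 4 : ℝ) * Complex.I) = π / 2 * Complex.I := by
    push_cast
    ring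
  rw [Circle.coe_exp, ← Complex.exp_nat_mul, harg, Complex.exp_pi_div_two_mul_I]

lemma comp_rotate_eventuallyEq {c : Circle} {α : ℂ} (hx : x ∈ B1) (hx0 : x ≠ 0)
    (h : ∀ y ∈ B1, y ≠ 0 → Ψ (rotate c y) = α * Ψ y) : Ψ ∘ rotate c =ᶠ[𝓝 x] α • Ψ := by
  filter_upwards [isOpen_B1.mem_nhds hx, isOpen_ne.mem_nhds hx0] with y hy hy0 using h y hy hy0

/-- `w` is the function `a(r) e^{i(m+4)θ} + b(r) e^{imθ}` on the punctured disc. -/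
def IsModePairOn (w : Pt → ℂ) (a b : ℝ → ℂ) (m : ℕ) : Prop :=
  ∀ x ∈ B1, x ≠ 0 → w x = mode a (m + 4) x + mode b m x

lemma IsModeOn.rotate (h : IsModeOn Ψ f n) (c : Circle) (hx : x ∈ B1) (hx0 : x ≠ 0) :
    Ψ (rotate c x) = (c : ℂ) ^ n * Ψ x := by
  rw [h _ (by simpa [mem_B1_iff] using hx) (by simpa using hx0), mode_rotate, h x hx hx0]

-- The rotation by `π / 2`, under which `Ψ` and `w` pick up opposite factors.
lemma exists_rotate_eq_mul_and_eq_neg_mul (hΨ : IsModeOn Ψ f (m + 2)) (hw : IsModePairOn w a b m) :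
    ∃ (c : Circle) (α : ℂ), ‖α‖ = 1 ∧ ∀ x ∈ B1, x ≠ 0 →
      Ψ (rotate c x) = α * Ψ x ∧ w (rotate c x) = -α * w x := by
  obtain ⟨c, hc⟩ := exists_circle_sq_eq_I
  refine ⟨c ^ 2, Complex.I ^ (m + 2), by simp, fun x hx hx0 => ⟨?_, ?_⟩⟩
  · rw [hΨ.rotate _ hx hx0, Circle.coe_pow, hc]
  · rw [hw _ (by simpa [mem_B1_iff] using hx) (by simpa using hx0), hw x hx hx0, mode_rotate,
      mode_rotate, Circle.coe_pow, hc, pow_add, pow_add, Complex.I_sq, Complex.I_pow_four]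
    ring

lemma integral_inner_eq_zero_of_isModePairOn (hΨ : IsModeOn Ψ f (m + 2))
    (hw : IsModePairOn w a b m) : ∫ x in B1, ⟪Ψ x, w x⟫ = 0 := by
  obtain ⟨c, α, hα, h⟩ := exists_rotate_eq_mul_and_eq_neg_mul hΨ hw
  refine setIntegral_B1_eq_zero_of_rotate c fun x hx hx0 => ?_
  rw [(h x hx hx0).1, (h x hx hx0).2, inner_mul_neg_mul hα]

lemma integral_firstVariation_eq_zero_of_isModePairOn (hΨ : IsModeOn Ψ f (m + 2))
    (hw : IsModePairOn w a b m) : ∫ x in B1, firstVariation ε Ω μ Ψ w x = 0 := by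
  obtain ⟨c, α, hα, h⟩ := exists_rotate_eq_mul_and_eq_neg_mul hΨ hw
  refine setIntegral_B1_eq_zero_of_rotate c fun x hx hx0 => firstVariation_rotate hx0 hα
    (comp_rotate_eventuallyEq hx hx0 fun y hy hy0 => (h y hy hy0).1)
    (comp_rotate_eventuallyEq hx hx0 fun y hy hy0 => (h y hy hy0).2)

lemma FiniteEnergy.integrableOn_secondVariation (hΨ : FiniteEnergy Ψ) (hw : FiniteEnergy w)
    (ε Ω μ : ℝ) : IntegrableOn (secondVariation ε Ω μ Ψ w) B1 :=
  ((hw.integrableOn_kineticForm hw Ω).add ((hΨ.integrableOn_quartic_cross hw).div_const _)).sub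
    (hw.integrableOn_norm_sq.const_mul μ)

lemma IsModePairOn.eventuallyEq (hw : IsModePairOn w a b m) (hx : x ∈ B1) (hx0 : x ≠ 0) :
    w =ᶠ[𝓝 x] mode a (m + 4) + mode b m := by
  filter_upwards [isOpen_B1.mem_nhds hx, isOpen_ne.mem_nhds hx0] with y hy hy0 using hw y hy hy0

lemma exists_secondVariation_add_rotate_eq (hΨ : IsModeOn Ψ f (m + 2)) (hw : IsModePairOn w a b m)
    (ha : DifferentiableOn ℝ a (Ioo 0 1)) (hb : DifferentiableOn ℝ b (Ioo 0 1)) :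
    ∃ c : Circle, ∀ x ∈ B1, x ≠ 0 →
      secondVariation ε Ω μ Ψ w x + secondVariation ε Ω μ Ψ w (rotate c x) =
        2 * radialSecondVariation ε Ω (μ + (m + 2 : ℕ) * Ω) (m + 2) f a b ‖x‖ := by
  obtain ⟨c, hc⟩ := exists_circle_sq_eq_I
  refine ⟨c, fun x hx hx0 => ?_⟩
  have hr := isOpen_Ioo.mem_nhds (norm_mem_Ioo hx hx0)
  have hcircle : ∀ y : Pt, ‖y‖ = ‖x‖ → y ∈ B1 ∧ y ≠ 0 := fun y hy =>
    ⟨mem_B1_iff.2 (hy.trans_lt (mem_B1_iff.1 hx)), norm_ne_zero_iff.1 (by simpa [hy] using hx0)⟩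
  exact secondVariation_add_rotate hc hx0 (ha.differentiableAt hr).hasDerivAt
    (hb.differentiableAt hr).hasDerivAt (fun y hy => hΨ y (hcircle y hy).1 (hcircle y hy).2)
    fun y hy => hw.eventuallyEq (hcircle y hy).1 (hcircle y hy).2

lemma integrableOn_mul_radialSecondVariation (hΨ : IsModeOn Ψ f (m + 2))
    (hw : IsModePairOn w a b m) (ha : DifferentiableOn ℝ a (Ioo 0 1))
    (hb : DifferentiableOn ℝ b (Ioo 0 1)) (hint : IntegrableOn (secondVariation ε Ω μ Ψ w) B1) :
    IntegrableOn (fun r => r * radialSecondVariation ε Ω (μ + (m + 2 : ℕ) * Ω) (m + 2) f a b r)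
      (Ioo 0 1) := by
  obtain ⟨c, hc⟩ := exists_secondVariation_add_rotate_eq (ε := ε) (Ω := Ω) (μ := μ) hΨ hw ha hb
  refine integrableOn_B1_radial.1 <|
    ((hint.add (integrableOn_B1_comp_isometry (rotate c) hint)).const_mul 2⁻¹).congr ?_
  exact ae_restrict_B1_of_ne_zero fun x hx hx0 => by
    simp only [Pi.add_apply, hc x hx hx0, inv_mul_cancel_left₀ (two_ne_zero' ℝ)]

lemma integral_secondVariation_of_isModePairOn (hΨ : IsModeOn Ψ f (m + 2))
    (hw : IsModePairOn w a b m) (ha : DifferentiableOn ℝ a (Ioo 0 1))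
    (hb : DifferentiableOn ℝ b (Ioo 0 1)) (hint : IntegrableOn (secondVariation ε Ω μ Ψ w) B1) :
    ∫ x in B1, secondVariation ε Ω μ Ψ w x = 2 * π * ∫ r in (0 : ℝ)..1,
      r * radialSecondVariation ε Ω (μ + (m + 2 : ℕ) * Ω) (m + 2) f a b r := by
  obtain ⟨c, hc⟩ := exists_secondVariation_add_rotate_eq (ε := ε) (Ω := Ω) (μ := μ) hΨ hw ha hb
  have hsum := integral_add hint (integrableOn_B1_comp_isometry (rotate c) hint)
  rw [setIntegral_B1_comp_isometry, integral_congr_ae (ae_restrict_B1_of_ne_zero hc),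
    integral_const_mul] at hsum
  rw [← setIntegral_B1_radial]
  linarith

end AngularMean

section TestPerturbation

variable {ε M : ℝ} {k m n : ℕ} {f F K : ℝ → ℂ} {Ψ : Pt → ℂ} {c : ℂ}

lemma FiniteEnergy.of_contDiff (h : ContDiff ℝ 1 Ψ) : FiniteEnergy Ψ := by
  have hfderiv : Continuous (fderiv ℝ Ψ) := h.continuous_fderiv one_ne_zero
  have hjet : Continuous fun x => (Ψ x, pd1 Ψ x, pd2 Ψ x) :=
    h.continuous.prodMk ((hfderiv.clm_apply continuous_const).prodMk
      (hfderiv.clm_apply continuous_const))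
  obtain ⟨C, hC⟩ := (isCompact_closedBall (0 : Pt) 1).exists_bound_of_continuousOn hjet.continuousOn
  have hC : ∀ x ∈ B1, ‖Ψ x‖ ≤ C ∧ ‖pd1 Ψ x‖ ≤ C ∧ ‖pd2 Ψ x‖ ≤ C := fun x hx => by
    simpa only [Prod.norm_def, max_le_iff] using hC x (Metric.ball_subset_closedBall hx)
  exact .of_bounded (h.differentiable one_ne_zero).differentiableOn (fun x hx => (hC x hx).1)
    (fun x hx => (hC x hx).2.1) fun x hx => (hC x hx).2.2

lemma FiniteEnergy.zcoord_pow_mul (m : ℕ) (c : ℂ) : FiniteEnergy fun x => zcoord x ^ m * c :=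
  have hzcoord : ContDiff ℝ 1 zcoord := zcoord.toContinuousLinearEquiv.contDiff
  .of_contDiff ((hzcoord.pow m).mul contDiff_const)

lemma isBigO_div_smul (a : ℝ) (hO : F =O[𝓟 (Ioo 0 1)] fun r => r ^ (k + 1)) :
    (fun r => (a / r) • F r) =O[𝓟 (Ioo 0 1)] fun r => r ^ k := by
  refine isBigO_of_pow_smul (n := 1) ?_
  rw [add_comm 1 k]
  refine (hO.const_smul_left a).congr' (eventually_principal.2 fun r hr => ?_) .rfl
  simp only [Pi.smul_apply, smul_smul, pow_one, mul_div_cancel₀ a hr.1.ne']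

lemma FiniteEnergy.of_mode_inv_sq_smul {F' : ℝ → ℂ}
    (hF : ∀ r ∈ Ioo (0 : ℝ) 1, HasDerivAt F (F' r) r)
    (hO : F =O[𝓟 (Ioo 0 1)] fun r => r ^ 4) (hO' : F' =O[𝓟 (Ioo 0 1)] fun r => r ^ 3) :
    FiniteEnergy (mode (fun r => (r ^ 2)⁻¹ • F r) m) := by
  refine .of_mode (F' := fun r => (r ^ 2)⁻¹ • F' r - (2 / r ^ 3) • F r) (by simp)
    (fun r hr => ?_) (isBigO_of_pow_smul (n := 2) ?_)
    ((isBigO_of_pow_smul (n := 3) (k := 0) ?_).congr_right pow_zero)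
  · have hr0 := hr.1.ne'
    refine (((hasDerivAt_pow 2 r).fun_inv (pow_ne_zero 2 hr0)).smul (hF r hr)).congr_deriv ?_
    rw [show -((2 : ℕ) * r ^ (2 - 1)) / (r ^ 2) ^ 2 = -(2 / r ^ 3) by field_simp; norm_num; ring,
      neg_smul, sub_eq_add_neg]
  · refine hO.congr' (eventually_principal.2 fun r hr => ?_) .rfl
    simp only [smul_inv_smul₀ (pow_ne_zero 2 hr.1.ne')]
  · have hF' : (fun r => r • F' r) =O[𝓟 (Ioo 0 1)] fun r => r ^ (3 + 0) :=
      (((Asymptotics.isBigO_refl (fun r : ℝ => r) _).smul hO').congr_right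
        fun r => (pow_succ' r 3).symm).trans (isBigO_pow_pow_of_le (Nat.le_succ 3))
    have hF : (fun r => (2 : ℝ) • F r) =O[𝓟 (Ioo 0 1)] fun r => r ^ (3 + 0) :=
      (hO.trans (isBigO_pow_pow_of_le (Nat.le_succ 3))).const_smul_left (2 : ℝ)
    refine (hF'.sub hF).congr' (eventually_principal.2 fun r hr => ?_) .rfl
    have hr0 := hr.1.ne'
    simp only [smul_sub, smul_smul]
    congr 2 <;> field_simp

namespace IsRadialVortex

variable (h : IsRadialVortex ε M (m + 2) f K)
include h

lemma smul_potential_isBigO_pow_three :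
    (fun r => (r * potential ε M f r) • f r) =O[𝓟 (Ioo 0 1)] fun r => r ^ 3 :=
  h.isBigO_smul_potential <|
    (h.profile_isBigO_pow (by omega)).trans (isBigO_pow_pow_of_le (by omega))

lemma finiteEnergy_mode_dbarCoeff :
    FiniteEnergy (mode (dbarCoeff (m + 2) f K) (m + 4)) := by
  have hO := (h.dbarProfile_isBigO_pow (by omega)).trans
    (isBigO_pow_pow_of_le (show 4 ≤ m + 2 + 2 by omega))
  refine .of_mode_inv_sq_smul (fun r hr => h.hasDerivAt_dbarProfile hr) hO
    (.add ?_ h.smul_potential_isBigO_pow_three)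
  simpa only [neg_div] using isBigO_div_smul (-(m + 2 : ℕ)) hO

lemma finiteEnergy_mode_dCoeff_sub
    (hc : (fun r => dProfile (m + 2) f K r - r ^ (m + 2) • c) =O[𝓟 (Ioo 0 1)]
      fun r => r ^ (m + 2 + 2)) :
    FiniteEnergy (mode (fun r => (r ^ 2)⁻¹ • (dProfile (m + 2) f K r - r ^ (m + 2) • c)) m) := by
  have hpow : ∀ r : ℝ, HasDerivAt (fun r : ℝ => r ^ (m + 2) • c) _ r := fun r =>
    (hasDerivAt_pow (m + 2) r).smul_const c
  have hO := hc.trans (isBigO_pow_pow_of_le (show 4 ≤ m + 2 + 2 by omega))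
  refine .of_mode_inv_sq_smul (fun r hr => (h.hasDerivAt_dProfile hr).sub (hpow r)) hO ?_
  refine ((isBigO_div_smul (m + 2 : ℕ) hO).add h.smul_potential_isBigO_pow_three).congr'
    (eventually_principal.2 fun r hr => ?_) .rfl
  have hr0 := hr.1.ne'
  simp only [smul_sub, smul_smul, add_sub_right_comm]
  congr 3
  rw [show m + 2 - 1 = m + 1 from rfl, pow_succ r (m + 1)]
  field_simp

lemma exists_isModePairOn : ∃ w : Pt → ℂ, FiniteEnergy w ∧
    IsModePairOn w (dbarCoeff (m + 2) f K) (dCoeff (m + 2) f K) m := by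
  obtain ⟨c, hc⟩ := h.exists_dProfile_sub_isBigO_pow (by omega)
  refine ⟨_, h.finiteEnergy_mode_dbarCoeff.comb ((h.finiteEnergy_mode_dCoeff_sub hc).comb
    (.zcoord_pow_mul m c) 1 1) 1 1, fun x _ hx => ?_⟩
  have hx : (‖x‖ : ℂ) ≠ 0 := by simpa using hx
  simp only [one_smul, Pi.add_apply, add_right_inj, mode, dCoeff, ← norm_mul_phase]
  simp only [Complex.real_smul]
  push_cast
  field_simp
  ring

end IsRadialVortex

end TestPerturbation

section Instability

variable {ε Ω : ℝ} {n : ℕ}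

lemma one_div_sqrt_pi_mul_le (hε : 0 < ε) (hn : 0 < n) :
    1 / (√π * ε) ≤ n / 2 + 1 / (2 * π * n * ε ^ 2) := by
  have : (0 : ℝ) < n := Nat.cast_pos.2 hn
  have hamgm := div_nonneg (sq_nonneg (n - 1 / (√π * ε))) (by positivity : 0 ≤ 2 * (n : ℝ))
  have hsq : n / 2 + 1 / (2 * π * n * ε ^ 2) - 1 / (√π * ε) =
      (n - 1 / (√π * ε)) ^ 2 / (2 * n) := by
    have hπ := Real.sq_sqrt pi_pos.le
    have hpos := Real.sqrt_pos.2 pi_pos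
    generalize √π = s at hπ hpos ⊢
    rw [← hπ]
    field_simp
    ring
  linarith

theorem stmt3_general (hε : ε ≠ 0) (hn : 2 ≤ n) (hΩ : Ω ≤ n / 2 + 1 / (2 * π * n * ε ^ 2))
    (Ψn : Pt → ℂ) (hadm : gpAdm Ψn) (heig : ∀ x ∈ B1, angMom Ψn x = (n : ℂ) * Ψn x)
    (hmin : ∀ Φ : Pt → ℂ, gpAdm Φ → (∀ x ∈ B1, angMom Φ x = (n : ℂ) * Φ x) →
      gpEnergy ε Ω Ψn ≤ gpEnergy ε Ω Φ) :
    ∀ δ : ℝ, 0 < δ → ∃ Φ : Pt → ℂ, gpAdm Φ ∧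
      √(∫ x in B1, (‖Ψn x - Φ x‖ ^ 2 +
        ‖pd1 (fun y => Ψn y - Φ y) x‖ ^ 2 + ‖pd2 (fun y => Ψn y - Φ y) x‖ ^ 2)) < δ ∧
      gpEnergy ε Ω Φ < gpEnergy ε Ω Ψn := by
  obtain ⟨m, rfl⟩ := Nat.exists_eq_add_of_le' hn
  have hvortex : IsVortexMinimizer ε Ω (m + 2) Ψn := ⟨hadm, heig, hmin⟩
  obtain ⟨f, K, hK, hΨ⟩ := hvortex.exists_isRadialVortex (by omega)
  obtain ⟨w, hw, hpair⟩ := hK.exists_isModePairOn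
  have hmass := hΨ.mass_eq.symm.trans hvortex.mass_eq_one
  have ha : DifferentiableOn ℝ (dbarCoeff (m + 2) f K) (Ioo 0 1) := fun r hr =>
    (hK.hasDerivAt_dbarCoeff hr).differentiableAt.differentiableWithinAt
  have hb : DifferentiableOn ℝ (dCoeff (m + 2) f K) (Ioo 0 1) := fun r hr =>
    (hK.hasDerivAt_dCoeff hr).differentiableAt.differentiableWithinAt
  have hint := hvortex.finiteEnergy.integrableOn_secondVariation hw ε Ω
    (chemicalPotential ε Ω Ψn)
  have hneg := hK.integral_radialSecondVariation_neg (Ω := Ω) hε hn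
    (hK.four_mul_mul_lt hε (by omega) hmass hΩ) hmass
    (integrableOn_mul_radialSecondVariation hΨ hpair ha hb hint)
  refine fun δ hδ => exists_near_gpEnergy_lt hvortex.finiteEnergy hw hvortex.mass_eq_one
    (integral_inner_eq_zero_of_isModePairOn hΨ hpair)
    (integral_firstVariation_eq_zero_of_isModePairOn hΨ hpair) ?_ hδ
  rw [integral_secondVariation_of_isModePairOn hΨ hpair ha hb hint]
  exact mul_neg_of_pos_of_neg two_pi_pos hneg

end Instability

theorem stmt3 (ε Ω : ℝ) (n : ℕ) (hε : 0 < ε) (hn : 2 ≤ n)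
    (hΩ : 0 ≤ Ω) (hΩ' : Ω ≤ 1 / (Real.sqrt π * ε))
    (Ψn : Pt → ℂ)
    (hadm : gpAdm Ψn)
    (heig : ∀ x ∈ B1, angMom Ψn x = (n : ℂ) * Ψn x)
    (hmin : ∀ Φ : Pt → ℂ, gpAdm Φ → (∀ x ∈ B1, angMom Φ x = (n : ℂ) * Φ x) →
      gpEnergy ε Ω Ψn ≤ gpEnergy ε Ω Φ) :
    ∀ δ : ℝ, 0 < δ → ∃ Φ : Pt → ℂ, gpAdm Φ ∧
      Real.sqrt (∫ x in B1, (‖Ψn x - Φ x‖ ^ 2 +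
        ‖pd1 (fun y => Ψn y - Φ y) x‖ ^ 2 + ‖pd2 (fun y => Ψn y - Φ y) x‖ ^ 2)) < δ ∧
      gpEnergy ε Ω Φ < gpEnergy ε Ω Ψn :=
  stmt3_general hε.ne' hn (hΩ'.trans (one_div_sqrt_pi_mul_le hε (by omega))) Ψn hadm heig hmin
end
end

section
/- Define, for ε > 0, E₁(ε) as the infimum of ∫_{B₁}(|∇ξ|² + ξ²/|x|² + ξ⁴/ε²)dx over real-valued radial ξ ∈ H¹(B₁) with ‖ξ‖_{L²(B₁)} = 1. Then for ε sufficiently small, E₁(ε) ≤ 1/(πε²) + log(1/ε²) + 1. (The bound is obtained from the normalized trial function which equals c_ε r/ε for 0 ≤ r ≤ ε and c_ε for ε ≤ r ≤ 1.) -/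
open MeasureTheory Real Filter

noncomputable section

/-- First partial derivative of a real-valued function. -/
def pd1R (ξ : Pt → ℝ) (x : Pt) : ℝ := fderiv ℝ ξ x (EuclideanSpace.single 0 1)

/-- Second partial derivative of a real-valued function. -/
def pd2R (ξ : Pt → ℝ) (x : Pt) : ℝ := fderiv ℝ ξ x (EuclideanSpace.single 1 1)

/-- The energy density `|∇ξ|² + ξ²/|x|² + ξ⁴/ε²`. -/
def e1Density (ε : ℝ) (ξ : Pt → ℝ) (x : Pt) : ℝ :=
  (pd1R ξ x) ^ 2 + (pd2R ξ x) ^ 2 + (ξ x) ^ 2 / ‖x‖ ^ 2 + (ξ x) ^ 4 / ε ^ 2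

/-- `E₁(ε)`: infimum of the energy over normalized real radial functions. -/
def E1 (ε : ℝ) : ℝ :=
  sInf {E | ∃ ξ : Pt → ℝ, (∀ x y : Pt, ‖x‖ = ‖y‖ → ξ x = ξ y) ∧
    DifferentiableOn ℝ ξ B1 ∧
    IntegrableOn (fun x => (ξ x) ^ 2) B1 ∧
    IntegrableOn (e1Density ε ξ) B1 ∧
    (∫ x in B1, (ξ x) ^ 2) = 1 ∧
    E = ∫ x in B1, e1Density ε ξ x}

/-!
The functional is tested with `ξ = |x|² / (|x|² + ε²)`, divided by its `L²` norm. In the variable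
`s = |x|²` the area element of the plane becomes `π ds`, and with `a = ε²`, `w = a / (s + a)` the
densities `ξ²`, `ξ⁴` and `|∇ξ|² + ξ²/|x|²` of the trial function `ξ = 1 - w` are polynomials in `w`.
Among the moments of `w` on `[0, 1]` only the first one contains the logarithm
`L = log ((1 + a) / a)`. If `m` is the mean of `ξ²`, then the mean of `ξ⁴` is at most
`m² + 7a/3`, because its excess over `m²` is the variance of `ξ²` and `1 - ξ²` is concentrated
on the core; so after normalization the quartic term costs `1 / (πε²)` plus at most `7 / (3πm²)`.
The quadratic part is at most `(L - 1/3 + o(1)) / m`, and dividing by `m = 1 - 2aL + O(a)` is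
harmless since `aL² → 0`. Altogether the energy exceeds `1 / (πε²) + log (1 / ε²)` by at most a
quantity with limit `7 / (3π) - 1/3 < 1`.
-/

theorem integrableOn_ball_comp_norm_pow {E F : Type*} [NormedAddCommGroup E] [ProperSpace E]
    [MeasurableSpace E] [OpensMeasurableSpace E] [NormedAddCommGroup F] (μ : Measure E)
    [IsLocallyFiniteMeasure μ] (n : ℕ) (R : ℝ) {g : ℝ → F} (hg : ContinuousOn g (Set.Ici 0)) :
    IntegrableOn (fun x ↦ g (‖x‖ ^ n)) (Metric.ball 0 R) μ := by
  have hcont : Continuous fun x : E ↦ g (‖x‖ ^ n) :=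
    hg.comp_continuous (by fun_prop) fun x ↦ pow_nonneg (norm_nonneg x) n
  exact (hcont.continuousOn.integrableOn_compact (isCompact_closedBall 0 R)).mono_set
    Metric.ball_subset_closedBall

section RadialIntegrals

variable {E F : Type*} [NormedAddCommGroup E] [NormedSpace ℝ E] [FiniteDimensional ℝ E]
  [Nontrivial E] [MeasurableSpace E] [BorelSpace E] [NormedAddCommGroup F] [NormedSpace ℝ F]
  (μ : Measure E) [μ.IsAddHaarMeasure]

theorem integral_comp_norm_pow_finrank (g : ℝ → F) :
    ∫ x, g (‖x‖ ^ Module.finrank ℝ E) ∂μ =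
      μ.real (Metric.ball 0 1) • ∫ s in Set.Ioi (0 : ℝ), g s := by
  have hd : 0 < Module.finrank ℝ E := Module.finrank_pos
  rw [integral_fun_norm_addHaar μ fun r ↦ g (r ^ Module.finrank ℝ E),
    ← integral_comp_rpow_Ioi_of_pos (g := g) (Nat.cast_pos.2 hd), smul_comm,
    ← Nat.cast_smul_eq_nsmul ℝ (Module.finrank ℝ E), ← integral_smul]
  congr 1
  refine setIntegral_congr_fun measurableSet_Ioi fun r _ ↦ ?_
  simp only [smul_smul, rpow_natCast, ← Nat.cast_pred hd]

theorem setIntegral_ball_comp_norm_pow_finrank (g : ℝ → F) {R : ℝ} (hR : 0 ≤ R) :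
    ∫ x in Metric.ball 0 R, g (‖x‖ ^ Module.finrank ℝ E) ∂μ =
      μ.real (Metric.ball 0 1) • ∫ s in 0..R ^ Module.finrank ℝ E, g s := by
  set d := Module.finrank ℝ E
  have hd : d ≠ 0 := Module.finrank_pos.ne'
  have hball (x : E) : (Metric.ball 0 R).indicator (fun x ↦ g (‖x‖ ^ d)) x =
      (Set.Iio (R ^ d)).indicator g (‖x‖ ^ d) := by
    simp only [Set.indicator, mem_ball_zero_iff, Set.mem_Iio,
      pow_lt_pow_iff_left₀ (norm_nonneg x) hR hd]
  rw [← integral_indicator measurableSet_ball, funext hball, integral_comp_norm_pow_finrank,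
    setIntegral_indicator measurableSet_Iio, Set.Ioi_inter_Iio, ← integral_Ioc_eq_integral_Ioo,
    ← intervalIntegral.integral_of_le (pow_nonneg hR d)]

end RadialIntegrals

theorem integrableOn_B1_comp_norm_sq {g : ℝ → ℝ} (hg : ContinuousOn g (Set.Ici 0)) :
    IntegrableOn (fun x ↦ g (‖x‖ ^ 2)) B1 :=
  integrableOn_ball_comp_norm_pow volume 2 1 hg

theorem setIntegral_B1_comp_norm_sq (g : ℝ → ℝ) :
    ∫ x in B1, g (‖x‖ ^ 2) = π * ∫ s in 0..1, g s := by
  have hvol : volume.real (Metric.ball (0 : Pt) 1) = π := by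
    simp [Measure.real, EuclideanSpace.volume_ball_fin_two, pi_pos.le]
  simpa [B1, hvol] using setIntegral_ball_comp_norm_pow_finrank (E := Pt) volume g zero_le_one

section VariationalPrinciple

/-- The density `|∇ξ|² + ξ²/|x|²`, that is, the part of `e1Density` that is quadratic in `ξ`. -/
def quadraticDensity (ξ : Pt → ℝ) (x : Pt) : ℝ :=
  pd1R ξ x ^ 2 + pd2R ξ x ^ 2 + ξ x ^ 2 / ‖x‖ ^ 2

theorem e1Density_const_smul (ε c : ℝ) (ξ : Pt → ℝ) (x : Pt) :
    e1Density ε (c • ξ) x =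
      c ^ 2 * quadraticDensity ξ x + c ^ 4 / ε ^ 2 * ξ x ^ 4 := by
  have hfderiv : fderiv ℝ (c • ξ) x = c • fderiv ℝ ξ x :=
    congrFun (fderiv_const_smul_field c) x
  simp only [e1Density, quadraticDensity, pd1R, pd2R, hfderiv, smul_apply, Pi.smul_apply,
    smul_eq_mul]
  ring

theorem e1Density_nonneg (ε : ℝ) (ξ : Pt → ℝ) (x : Pt) : 0 ≤ e1Density ε ξ x := by
  unfold e1Density
  positivity

theorem E1_le_integral_e1Density {ε : ℝ} {ξ : Pt → ℝ} (hrad : ∀ x y : Pt, ‖x‖ = ‖y‖ → ξ x = ξ y)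
    (hdiff : DifferentiableOn ℝ ξ B1) (hint : IntegrableOn (e1Density ε ξ) B1)
    (hmass : ∫ x in B1, ξ x ^ 2 = 1) : E1 ε ≤ ∫ x in B1, e1Density ε ξ x := by
  refine csInf_le ⟨0, ?_⟩ ⟨ξ, hrad, hdiff, ?_, hint, hmass, rfl⟩
  · rintro _ ⟨η, -, -, -, -, -, rfl⟩
    exact integral_nonneg (e1Density_nonneg ε η)
  · exact .of_integral_ne_zero (hmass ▸ one_ne_zero)

theorem E1_le_of_integral_sq_pos (ε : ℝ) {ξ : Pt → ℝ}
    (hrad : ∀ x y : Pt, ‖x‖ = ‖y‖ → ξ x = ξ y) (hdiff : DifferentiableOn ℝ ξ B1)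
    (hquad : IntegrableOn (quadraticDensity ξ) B1)
    (hquart : IntegrableOn (fun x ↦ ξ x ^ 4) B1) (hmass : 0 < ∫ x in B1, ξ x ^ 2) :
    E1 ε ≤ (∫ x in B1, quadraticDensity ξ x) / (∫ x in B1, ξ x ^ 2) +
      (∫ x in B1, ξ x ^ 4) / (ε ^ 2 * (∫ x in B1, ξ x ^ 2) ^ 2) := by
  set M := ∫ x in B1, ξ x ^ 2
  set c := √M⁻¹
  have hc2 : c ^ 2 = M⁻¹ := sq_sqrt (inv_nonneg.2 hmass.le)
  have hc4 : c ^ 4 = (M ^ 2)⁻¹ := by rw [← inv_pow, ← hc2]; ring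
  have hdens : e1Density ε (c • ξ) =
      fun x ↦ c ^ 2 * quadraticDensity ξ x + c ^ 4 / ε ^ 2 * ξ x ^ 4 :=
    funext (e1Density_const_smul ε c ξ)
  have hnorm : ∫ x in B1, (c • ξ) x ^ 2 = 1 := by
    simp only [Pi.smul_apply, smul_eq_mul, mul_pow, integral_const_mul, hc2]
    exact inv_mul_cancel₀ hmass.ne'
  refine (E1_le_integral_e1Density (ξ := c • ξ) (fun x y h ↦ congrArg (c • ·) (hrad x y h))
    (hdiff.const_smul c) ?_ hnorm).trans_eq ?_
  · exact hdens ▸ (hquad.const_mul _).add (hquart.const_mul _)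
  · rw [hdens, integral_add (hquad.const_mul _) (hquart.const_mul _), integral_const_mul,
      integral_const_mul, hc2, hc4]
    ring

end VariationalPrinciple

theorem hasFDerivAt_comp_norm_sq {V : Type*} [NormedAddCommGroup V] [InnerProductSpace ℝ V]
    {g : ℝ → ℝ} {g' : ℝ} {x : V} (hg : HasDerivAt g g' (‖x‖ ^ 2)) :
    HasFDerivAt (fun y ↦ g (‖y‖ ^ 2)) (g' • (2 • innerSL ℝ x)) x :=
  hg.comp_hasFDerivAt x (hasStrictFDerivAt_norm_sq x).hasFDerivAt

theorem pd1R_sq_add_pd2R_sq_comp_norm_sq {g : ℝ → ℝ} {g' : ℝ} {x : Pt}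
    (hg : HasDerivAt g g' (‖x‖ ^ 2)) :
    pd1R (fun y ↦ g (‖y‖ ^ 2)) x ^ 2 + pd2R (fun y ↦ g (‖y‖ ^ 2)) x ^ 2 =
      4 * ‖x‖ ^ 2 * g' ^ 2 := by
  have hfderiv := (hasFDerivAt_comp_norm_sq hg).fderiv
  have hnorm : ‖x‖ ^ 2 = x 0 ^ 2 + x 1 ^ 2 := by simp [EuclideanSpace.norm_sq_eq]
  have h1 : pd1R (fun y ↦ g (‖y‖ ^ 2)) x = g' * (2 * x 0) := by
    simp [pd1R, hfderiv, EuclideanSpace.inner_single_right]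
  have h2 : pd2R (fun y ↦ g (‖y‖ ^ 2)) x = g' * (2 * x 1) := by
    simp [pd2R, hfderiv, EuclideanSpace.inner_single_right]
  rw [h1, h2, hnorm]
  ring

section CoreWeight

/-- The algebraically decaying weight `s ↦ a / (s + a)` of a vortex core of radius `√a`, as a
function of the squared distance `s` to the vortex. -/
def coreWeight (a s : ℝ) : ℝ := a / (s + a)

variable {a s : ℝ}

theorem coreWeight_pos (ha : 0 < a) (hs : 0 ≤ s) : 0 < coreWeight a s := by
  unfold coreWeight
  positivity

theorem coreWeight_le_one (ha : 0 < a) (hs : 0 ≤ s) : coreWeight a s ≤ 1 :=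
  div_le_one_of_le₀ (by linarith) (by positivity)

theorem hasDerivAt_coreWeight (ha : 0 < a) (hs : 0 ≤ s) :
    HasDerivAt (coreWeight a) (-(coreWeight a s ^ 2 / a)) s := by
  have hsa : s + a ≠ 0 := by positivity
  refine (((hasDerivAt_id s).add_const a).fun_inv hsa |>.const_mul a).congr_deriv ?_
  simp only [coreWeight, id_eq]
  field_simp

theorem hasDerivAt_one_sub_coreWeight (ha : 0 < a) (hs : 0 ≤ s) :
    HasDerivAt (fun t ↦ 1 - coreWeight a t) (coreWeight a s ^ 2 / a) s := by
  simpa only [neg_neg] using (hasDerivAt_coreWeight ha hs).const_sub 1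

theorem continuousOn_coreWeight (ha : 0 < a) : ContinuousOn (coreWeight a) (Set.Ici 0) :=
  fun _ hs ↦ (hasDerivAt_coreWeight ha hs).continuousAt.continuousWithinAt

theorem integral_coreWeight (ha : 0 < a) (hs : 0 ≤ s) :
    ∫ t in 0..s, coreWeight a t = a * log ((s + a) / a) := by
  simp only [coreWeight, div_eq_mul_inv a, intervalIntegral.integral_const_mul]
  rw [intervalIntegral.integral_comp_add_right (fun t ↦ t⁻¹), zero_add,
    integral_inv_of_pos ha (by positivity)]

theorem intervalIntegrable_coreWeight_pow (ha : 0 < a) (hs : 0 ≤ s) (k : ℕ) :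
    IntervalIntegrable (fun t ↦ coreWeight a t ^ k) volume 0 s :=
  ((continuousOn_coreWeight ha).pow k |>.mono
    (Set.uIcc_of_le hs ▸ Set.Icc_subset_Ici_self)).intervalIntegrable

theorem integral_coreWeight_pow_add_two (ha : 0 < a) (hs : 0 ≤ s) (k : ℕ) :
    ∫ t in 0..s, coreWeight a t ^ (k + 2) = a * (1 - coreWeight a s ^ (k + 1)) / (k + 1) := by
  have hderiv (t : ℝ) (ht : t ∈ Set.uIcc 0 s) :
      HasDerivAt (fun t ↦ -(a / (k + 1)) * coreWeight a t ^ (k + 1))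
        (coreWeight a t ^ (k + 2)) t := by
    rw [Set.uIcc_of_le hs] at ht
    refine ((hasDerivAt_coreWeight ha ht.1).fun_pow (k + 1) |>.const_mul _).congr_deriv ?_
    rw [Nat.add_sub_cancel]
    push_cast
    field_simp
    ring
  rw [intervalIntegral.integral_eq_sub_of_hasDerivAt hderiv
    (intervalIntegrable_coreWeight_pow ha hs (k + 2))]
  simp only [coreWeight, zero_add, div_self ha.ne', one_pow]
  ring

theorem integral_quartic_coreWeight (ha : 0 < a) (c₀ c₁ c₂ c₃ c₄ : ℝ) :
    ∫ s in 0..1, (c₀ + c₁ * coreWeight a s + c₂ * coreWeight a s ^ 2 + c₃ * coreWeight a s ^ 3 +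
        c₄ * coreWeight a s ^ 4) =
      c₀ + c₁ * (a * log ((1 + a) / a)) + c₂ * (a * (1 - coreWeight a 1)) +
        c₃ * (a * (1 - coreWeight a 1 ^ 2) / 2) + c₄ * (a * (1 - coreWeight a 1 ^ 3) / 3) := by
  have hint (c : ℝ) (k : ℕ) :
      IntervalIntegrable (fun s ↦ c * coreWeight a s ^ k) volume 0 1 :=
    (intervalIntegrable_coreWeight_pow ha zero_le_one k).const_mul c
  have h₁ : IntervalIntegrable (fun s ↦ c₁ * coreWeight a s) volume 0 1 := by
    simpa only [pow_one] using hint c₁ 1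
  have h₀ : IntervalIntegrable (fun _ ↦ c₀) volume 0 1 := intervalIntegrable_const
  have hpow := integral_coreWeight_pow_add_two ha (s := 1) zero_le_one
  rw [intervalIntegral.integral_add (((h₀.add h₁).add (hint c₂ 2)).add (hint c₃ 3)) (hint c₄ 4),
    intervalIntegral.integral_add ((h₀.add h₁).add (hint c₂ 2)) (hint c₃ 3),
    intervalIntegral.integral_add (h₀.add h₁) (hint c₂ 2), intervalIntegral.integral_add h₀ h₁]
  simp only [intervalIntegral.integral_const_mul, intervalIntegral.integral_const,
    integral_coreWeight ha zero_le_one, hpow 0, hpow 1, hpow 2]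
  norm_num

theorem setIntegral_B1_quartic_coreWeight (ha : 0 < a) (c₀ c₁ c₂ c₃ c₄ : ℝ) :
    ∫ x in B1, (c₀ + c₁ * coreWeight a (‖x‖ ^ 2) + c₂ * coreWeight a (‖x‖ ^ 2) ^ 2 +
        c₃ * coreWeight a (‖x‖ ^ 2) ^ 3 + c₄ * coreWeight a (‖x‖ ^ 2) ^ 4) =
      π * (c₀ + c₁ * (a * log ((1 + a) / a)) + c₂ * (a * (1 - coreWeight a 1)) +
        c₃ * (a * (1 - coreWeight a 1 ^ 2) / 2) + c₄ * (a * (1 - coreWeight a 1 ^ 3) / 3)) := by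
  rw [← integral_quartic_coreWeight ha]
  exact setIntegral_B1_comp_norm_sq fun s ↦ c₀ + c₁ * coreWeight a s + c₂ * coreWeight a s ^ 2 +
    c₃ * coreWeight a s ^ 3 + c₄ * coreWeight a s ^ 4

end CoreWeight

section Trial

/-- The radial profile `|x|² / (|x|² + a)`, written as one minus the core weight. With `a = ε²` it
replaces the piecewise linear profile `min (|x| / ε) 1`, which is not differentiable on `|x| = ε`
and hence not admissible in `E1`. -/
def vortexTrial (a : ℝ) (x : Pt) : ℝ := 1 - coreWeight a (‖x‖ ^ 2)

/-- The mean of the square of `vortexTrial a` over the unit disc, in closed form. -/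
def trialMass (a : ℝ) : ℝ := 1 - 2 * (a * log ((1 + a) / a)) + a * (1 - coreWeight a 1)

variable {a : ℝ}

theorem differentiable_vortexTrial (ha : 0 < a) : Differentiable ℝ (vortexTrial a) := fun x ↦
  (hasFDerivAt_comp_norm_sq (hasDerivAt_one_sub_coreWeight ha (sq_nonneg ‖x‖))).differentiableAt

theorem quadraticDensity_vortexTrial (ha : 0 < a) (x : Pt) :
    quadraticDensity (vortexTrial a) x =
      (coreWeight a (‖x‖ ^ 2) - coreWeight a (‖x‖ ^ 2) ^ 2 + 4 * coreWeight a (‖x‖ ^ 2) ^ 3 -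
        4 * coreWeight a (‖x‖ ^ 2) ^ 4) / a := by
  have hgrad : pd1R (vortexTrial a) x ^ 2 + pd2R (vortexTrial a) x ^ 2 =
      4 * ‖x‖ ^ 2 * (coreWeight a (‖x‖ ^ 2) ^ 2 / a) ^ 2 :=
    pd1R_sq_add_pd2R_sq_comp_norm_sq (hasDerivAt_one_sub_coreWeight ha (sq_nonneg ‖x‖))
  rw [quadraticDensity, hgrad, vortexTrial]
  rcases eq_or_ne ‖x‖ 0 with hx | hx
  · simp [hx, coreWeight, ha.ne']
  · simp only [coreWeight]
    field_simp
    ring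

theorem integrableOn_quadraticDensity_vortexTrial (ha : 0 < a) :
    IntegrableOn (quadraticDensity (vortexTrial a)) B1 := by
  have hw := continuousOn_coreWeight ha
  rw [funext (quadraticDensity_vortexTrial ha)]
  exact integrableOn_B1_comp_norm_sq
    (g := fun s ↦ (coreWeight a s - coreWeight a s ^ 2 + 4 * coreWeight a s ^ 3 -
      4 * coreWeight a s ^ 4) / a) (by fun_prop)

theorem integrableOn_vortexTrial_pow (ha : 0 < a) (n : ℕ) :
    IntegrableOn (fun x ↦ vortexTrial a x ^ n) B1 :=
  integrableOn_B1_comp_norm_sq (g := fun s ↦ (1 - coreWeight a s) ^ n)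
    ((continuousOn_const.sub (continuousOn_coreWeight ha)).pow n)

theorem setIntegral_vortexTrial_sq (ha : 0 < a) :
    ∫ x in B1, vortexTrial a x ^ 2 = π * trialMass a := by
  have hexpand (x : Pt) : vortexTrial a x ^ 2 = 1 + -2 * coreWeight a (‖x‖ ^ 2) +
      1 * coreWeight a (‖x‖ ^ 2) ^ 2 + 0 * coreWeight a (‖x‖ ^ 2) ^ 3 +
        0 * coreWeight a (‖x‖ ^ 2) ^ 4 := by
    rw [vortexTrial]
    ring
  simp only [hexpand, setIntegral_B1_quartic_coreWeight ha, trialMass]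
  ring

theorem setIntegral_quadraticDensity_vortexTrial_le (ha : 0 < a) :
    ∫ x in B1, quadraticDensity (vortexTrial a) x ≤
      π * (log ((1 + a) / a) - 1 / 3 + coreWeight a 1) := by
  set b := coreWeight a 1 with hb
  have hb_le : b ≤ 1 := coreWeight_le_one ha zero_le_one
  have hexpand (x : Pt) : quadraticDensity (vortexTrial a) x = 0 + a⁻¹ * coreWeight a (‖x‖ ^ 2) +
      -a⁻¹ * coreWeight a (‖x‖ ^ 2) ^ 2 + 4 * a⁻¹ * coreWeight a (‖x‖ ^ 2) ^ 3 +
        -(4 * a⁻¹) * coreWeight a (‖x‖ ^ 2) ^ 4 := by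
    rw [quadraticDensity_vortexTrial ha]
    ring
  have hexact : ∫ x in B1, quadraticDensity (vortexTrial a) x =
      π * (log ((1 + a) / a) - (1 - b) + 2 * (1 - b ^ 2) - 4 / 3 * (1 - b ^ 3)) := by
    simp only [hexpand, setIntegral_B1_quartic_coreWeight ha, ← hb]
    field_simp
    ring
  rw [hexact]
  gcongr
  nlinarith [mul_le_mul_of_nonneg_left hb_le (sq_nonneg b), sq_nonneg b]

theorem setIntegral_vortexTrial_pow_four_le (ha : 0 < a) :
    ∫ x in B1, vortexTrial a x ^ 4 ≤ π * (trialMass a ^ 2 + 7 / 3 * a) := by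
  set b := coreWeight a 1 with hb
  have hb_pos : 0 < b := coreWeight_pos ha zero_le_one
  have hb_le : b ≤ 1 := coreWeight_le_one ha zero_le_one
  have hexpand (x : Pt) : vortexTrial a x ^ 4 = 1 + -4 * coreWeight a (‖x‖ ^ 2) +
      6 * coreWeight a (‖x‖ ^ 2) ^ 2 + -4 * coreWeight a (‖x‖ ^ 2) ^ 3 +
        1 * coreWeight a (‖x‖ ^ 2) ^ 4 := by
    rw [vortexTrial]
    ring
  -- This is `ξ⁴ = 2ξ² - 1 + (1 - ξ²)²` integrated; the last summand is the mean of `(1 - ξ²)²`.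
  have hexact : ∫ x in B1, vortexTrial a x ^ 4 =
      π * (2 * trialMass a - 1 + a * (7 / 3 - 4 * b + 2 * b ^ 2 - 1 / 3 * b ^ 3)) := by
    simp only [hexpand, setIntegral_B1_quartic_coreWeight ha, trialMass, ← hb]
    ring
  have hsq : 2 * trialMass a - 1 ≤ trialMass a ^ 2 := by linarith [sq_nonneg (trialMass a - 1)]
  have hpoly : 7 / 3 - 4 * b + 2 * b ^ 2 - 1 / 3 * b ^ 3 ≤ 7 / 3 := by
    nlinarith [pow_pos hb_pos 3]
  rw [hexact]
  refine mul_le_mul_of_nonneg_left ?_ pi_pos.le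
  linarith [mul_le_mul_of_nonneg_left hpoly ha.le]

/-- An upper bound, up to the leading term `1 / (π * a)`, for the energy at `ε = √a` of the
normalized `vortexTrial a`. -/
def trialRemainder (a : ℝ) : ℝ :=
  (log ((1 + a) / a) - 1 / 3 + coreWeight a 1) / trialMass a + 7 / (3 * π * trialMass a ^ 2)

theorem E1_le_add_trialRemainder {ε : ℝ} (hε : 0 < ε) (hm : 0 < trialMass (ε ^ 2)) :
    E1 ε ≤ 1 / (π * ε ^ 2) + trialRemainder (ε ^ 2) := by
  have ha : 0 < ε ^ 2 := by positivity
  have hmass := setIntegral_vortexTrial_sq ha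
  have hbound := E1_le_of_integral_sq_pos ε (ξ := vortexTrial (ε ^ 2))
    (fun x y h ↦ by rw [vortexTrial, vortexTrial, h])
    (differentiable_vortexTrial ha).differentiableOn
    (integrableOn_quadraticDensity_vortexTrial ha) (integrableOn_vortexTrial_pow ha 4)
    (hmass ▸ mul_pos pi_pos hm)
  rw [hmass] at hbound
  set m := trialMass (ε ^ 2) with hm_def
  calc
    E1 ε ≤ _ := hbound
    _ ≤ π * (log ((1 + ε ^ 2) / ε ^ 2) - 1 / 3 + coreWeight (ε ^ 2) 1) / (π * m) +
        π * (m ^ 2 + 7 / 3 * ε ^ 2) / (ε ^ 2 * (π * m) ^ 2) := by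
      gcongr
      · exact setIntegral_quadraticDensity_vortexTrial_le ha
      · exact setIntegral_vortexTrial_pow_four_le ha
    _ = 1 / (π * ε ^ 2) + trialRemainder (ε ^ 2) := by
      rw [trialRemainder, ← hm_def]
      field_simp
      ring

end Trial

section Asymptotics

open scoped Topology

theorem tendsto_log_one_add : Tendsto (fun a : ℝ ↦ log (1 + a)) (𝓝[>] 0) (𝓝 0) := by
  have hcont : ContinuousAt (fun a : ℝ ↦ log (1 + a)) 0 :=
    (continuousAt_const.add continuousAt_id).log (by norm_num)
  simpa using hcont.tendsto.mono_left nhdsWithin_le_nhds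

theorem tendsto_rpow_mul_log_one_add_div {r : ℝ} (hr : 0 < r) :
    Tendsto (fun a : ℝ ↦ a ^ r * log ((1 + a) / a)) (𝓝[>] 0) (𝓝 0) := by
  have hlog : Tendsto (fun a : ℝ ↦ a ^ r * log (1 + a)) (𝓝[>] 0) (𝓝 0) := by
    have hpow : Tendsto (fun a : ℝ ↦ a ^ r) (𝓝[>] 0) (𝓝 (0 ^ r)) :=
      (continuousAt_rpow_const 0 r (.inr hr.le)).tendsto.mono_left nhdsWithin_le_nhds
    simpa only [mul_zero] using hpow.mul tendsto_log_one_add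
  have hdiff := hlog.sub (tendsto_log_mul_rpow_nhdsGT_zero hr)
  rw [sub_zero] at hdiff
  refine hdiff.congr' ?_
  filter_upwards [self_mem_nhdsWithin] with a (ha : 0 < a)
  rw [log_div (by positivity) ha.ne']
  ring

theorem tendsto_mul_log_one_add_div :
    Tendsto (fun a : ℝ ↦ a * log ((1 + a) / a)) (𝓝[>] 0) (𝓝 0) := by
  simpa only [rpow_one] using tendsto_rpow_mul_log_one_add_div one_pos

theorem tendsto_coreWeight_one : Tendsto (fun a ↦ coreWeight a 1) (𝓝[>] 0) (𝓝 0) := by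
  have hcont : ContinuousAt (fun a ↦ coreWeight a 1) 0 :=
    continuousAt_id.div (continuousAt_const.add continuousAt_id) (by norm_num)
  simpa [coreWeight] using hcont.tendsto.mono_left nhdsWithin_le_nhds

theorem tendsto_trialMass : Tendsto trialMass (𝓝[>] 0) (𝓝 1) := by
  have ha : Tendsto id (𝓝[>] (0 : ℝ)) (𝓝 0) := nhdsWithin_le_nhds
  unfold trialMass
  simpa using ((tendsto_mul_log_one_add_div.const_mul 2).const_sub 1).add
    (ha.mul (tendsto_coreWeight_one.const_sub 1))

theorem tendsto_log_mul_one_sub_trialMass :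
    Tendsto (fun a ↦ log ((1 + a) / a) * (1 - trialMass a)) (𝓝[>] 0) (𝓝 0) := by
  have hsq := (tendsto_rpow_mul_log_one_add_div (r := 1 / 2) one_half_pos).pow 2
  have hlim := (hsq.const_mul 2).sub
    (tendsto_mul_log_one_add_div.mul (tendsto_coreWeight_one.const_sub 1))
  simp only [ne_eq, OfNat.ofNat_ne_zero, not_false_eq_true, zero_pow, mul_zero, zero_mul,
    sub_zero] at hlim
  refine hlim.congr' ?_
  filter_upwards [self_mem_nhdsWithin] with a (ha : 0 < a)
  have hsqrt : (a ^ (1 / 2 : ℝ)) ^ 2 = a := by rw [← sqrt_eq_rpow, sq_sqrt ha.le]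
  rw [mul_pow, hsqrt, trialMass]
  ring

theorem tendsto_trialRemainder_sub_log :
    Tendsto (fun a ↦ trialRemainder a - log (1 / a)) (𝓝[>] 0) (𝓝 (7 / (3 * π) - 1 / 3)) := by
  have hm := tendsto_trialMass
  have hquad : Tendsto (fun a ↦ (log ((1 + a) / a) * (1 - trialMass a) - 1 / 3 + coreWeight a 1) /
      trialMass a) (𝓝[>] 0) (𝓝 (-(1 / 3))) := by
    simpa [Pi.div_def] using ((tendsto_log_mul_one_sub_trialMass.sub_const (1 / 3)).add
      tendsto_coreWeight_one).div hm one_ne_zero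
  have hquart : Tendsto (fun a ↦ 7 / (3 * π * trialMass a ^ 2)) (𝓝[>] 0) (𝓝 (7 / (3 * π))) := by
    simpa [Pi.div_def] using
      (tendsto_const_nhds (x := (7 : ℝ))).div ((hm.pow 2).const_mul (3 * π)) (by positivity)
  have hlim := (hquad.add tendsto_log_one_add).add hquart
  rw [add_zero, neg_add_eq_sub] at hlim
  refine hlim.congr' ?_
  filter_upwards [self_mem_nhdsWithin, hm.eventually_ne one_ne_zero] with a (ha : 0 < a) hma
  have hsplit : log (1 / a) = log ((1 + a) / a) - log (1 + a) := by
    rw [log_div one_ne_zero ha.ne', log_div (by positivity) ha.ne', log_one]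
    ring
  rw [trialRemainder, hsplit]
  field_simp
  ring

theorem tendsto_pow_nhdsGT_zero {n : ℕ} (hn : n ≠ 0) :
    Tendsto (fun ε : ℝ ↦ ε ^ n) (𝓝[>] 0) (𝓝[>] 0) := by
  refine tendsto_nhdsWithin_iff.2 ⟨?_, ?_⟩
  · simpa [hn] using ((continuous_pow n).tendsto (0 : ℝ)).mono_left nhdsWithin_le_nhds
  · filter_upwards [self_mem_nhdsWithin] with ε (hε : 0 < ε) using pow_pos hε n

end Asymptotics

theorem stmt4 : ∃ ε₀ : ℝ, 0 < ε₀ ∧ ∀ ε : ℝ, 0 < ε → ε < ε₀ →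
    E1 ε ≤ 1 / (π * ε ^ 2) + Real.log (1 / ε ^ 2) + 1 := by
  have hlt : 7 / (3 * π) - 1 / 3 < 1 := by
    rw [sub_lt_iff_lt_add, div_lt_iff₀ (by positivity)]
    linarith [pi_gt_three]
  have hev := (tendsto_trialMass.eventually_const_lt one_pos).and
    (tendsto_trialRemainder_sub_log.eventually_lt_const hlt)
  obtain ⟨ε₀, hε₀, hsmall⟩ :=
    mem_nhdsGT_iff_exists_Ioo_subset.1 ((tendsto_pow_nhdsGT_zero two_ne_zero).eventually hev)
  refine ⟨ε₀, hε₀, fun ε hε hεε₀ ↦ ?_⟩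
  obtain ⟨hm, hrem⟩ := hsmall ⟨hε, hεε₀⟩
  linarith [E1_le_add_trialRemainder hε hm]
end
end
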